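/- arXiv:1205.7018 — 5 statements merged into one kernel-verified Lean document; each statement's English description precedes it below -/
import Mathlib

section
/- Let 0 < ε < ε₀ and f ∈ 𝔚_{ε₀}. Suppose there exists v ∈ ℝ such that: ∫_{−∞}^u f'''(t)e^{t/ε}dt ≤ 0 for all u ≤ v; ∫_u^{+∞} f'''(t)e^{−t/ε}dt ≥ 0 for all u ≥ v; and e^{−v/ε}∫_{−∞}^v f'''(t)e^{t/ε}dt + e^{v/ε}∫_v^{+∞} f'''(t)e^{−t/ε}dt = 0. Set m_R(u) = ε⁻¹e^{−u/ε}∫_{−∞}^u f'(t)e^{t/ε}dt, m_L(u) = ε⁻¹e^{u/ε}∫_u^{+∞} f'(t)e^{−t/ε}dt, α₂ = (m_L(v) − m_R(v))/(4ε), α₁ = (m_R(v) + m_L(v))/2 − v·(m_L(v) − m_R(v))/(2ε), and α₀ = v²·(m_L(v) − m_R(v))/(4ε) − v·(m_R(v) + m_L(v))/2 + f(v). Then for every x = (x₁,x₂) ∈ Ω_ε: if u_R(x) ≤ v then B_ε(x; f) = m_R(u_R(x))·(x₁ − u_R(x)) + f(u_R(x)); if u_L(x) ≤ v ≤ u_R(x)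 then B_ε(x; f) = α₁x₁ + α₂x₂ + α₀; and if v ≤ u_L(x) then B_ε(x; f) = m_L(u_L(x))·(x₁ − u_L(x)) + f(u_L(x)). -/
open MeasureTheory Set Real

/-- The average of `φ` over the interval with endpoints `a`, `b`. -/
noncomputable def intAvg (φ : ℝ → ℝ) (a b : ℝ) : ℝ := (∫ t in a..b, φ t) / (b - a)

/-- `φ` belongs to the ball of radius `ε` of (quadratic-norm) BMO on the interval `(l, r)`. -/
def memBMOe (ε l r : ℝ) (φ : ℝ → ℝ) : Prop :=
  IntegrableOn φ (Ioo l r) ∧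
  IntegrableOn (fun t => (φ t) ^ 2) (Ioo l r) ∧
  ∀ c d : ℝ, l ≤ c → c < d → d ≤ r →
    intAvg (fun t => (φ t) ^ 2) c d - (intAvg φ c d) ^ 2 ≤ ε ^ 2

/-- The Bellman function, computed with the interval `I = (0,1)`. -/
noncomputable def bellmanFn (ε : ℝ) (f : ℝ → ℝ) (x₁ x₂ : ℝ) : ℝ :=
  sSup {y | ∃ φ : ℝ → ℝ, memBMOe ε 0 1 φ ∧
    IntegrableOn (fun t => f (φ t)) (Ioo 0 1) ∧
    intAvg φ 0 1 = x₁ ∧ intAvg (fun t => (φ t) ^ 2) 0 1 = x₂ ∧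
    y = intAvg (fun t => f (φ t)) 0 1}

/-- The parabolic strip `Ω_ε`. -/
def parabStrip (ε : ℝ) : Set (ℝ × ℝ) := {x | x.1 ^ 2 ≤ x.2 ∧ x.2 ≤ x.1 ^ 2 + ε ^ 2}

/-- The parameter of the right tangent through `x`. -/
noncomputable def uRpt (ε : ℝ) (x : ℝ × ℝ) : ℝ :=
  x.1 + ε - Real.sqrt (ε ^ 2 - (x.2 - x.1 ^ 2))

/-- The parameter of the left tangent through `x`. -/
noncomputable def uLpt (ε : ℝ) (x : ℝ × ℝ) : ℝ :=
  x.1 - ε + Real.sqrt (ε ^ 2 - (x.2 - x.1 ^ 2))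

/-- The class `𝔚_{ε₀}`. -/
def memWcl (ε₀ : ℝ) (f f3 : ℝ → ℝ) : Prop :=
  ContDiff ℝ 2 f ∧
  (∀ x y : ℝ, x ≤ y → deriv (deriv f) y - deriv (deriv f) x = ∫ t in x..y, f3 t) ∧
  Integrable (fun t => f t * Real.exp (-|t| / ε₀)) ∧
  Integrable (fun t => deriv f t * Real.exp (-|t| / ε₀)) ∧
  Integrable (fun t => deriv (deriv f) t * Real.exp (-|t| / ε₀)) ∧
  Integrable (fun t => f3 t * Real.exp (-|t| / ε₀))

/-- The coefficient `m_R(u) = ε⁻¹e^{−u/ε}∫_{−∞}^u f'(t)e^{t/ε}dt`. -/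
noncomputable def mRinf (ε : ℝ) (f : ℝ → ℝ) (u : ℝ) : ℝ :=
  ε⁻¹ * Real.exp (-u / ε) * ∫ t in Iic u, deriv f t * Real.exp (t / ε)

/-- The coefficient `m_L(u) = ε⁻¹e^{u/ε}∫_u^{+∞} f'(t)e^{−t/ε}dt`. -/
noncomputable def mLinf (ε : ℝ) (f : ℝ → ℝ) (u : ℝ) : ℝ :=
  ε⁻¹ * Real.exp (u / ε) * ∫ t in Ici u, deriv f t * Real.exp (-t / ε)

lemma bl_wint {ε ε₀ : ℝ} (hε : 0 < ε) (h : ε < ε₀) {g : ℝ → ℝ}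
    (hg : Integrable (fun t => g t * Real.exp (-|t| / ε₀))) (u : ℝ) :
    IntegrableOn (fun t => g t * Real.exp (t / ε)) (Iic u) := by
  have h0 : 0 < ε₀ := hε.trans h
  have key : IntegrableOn (fun t => (g t * Real.exp (-|t| / ε₀)) *
      Real.exp (t / ε + |t| / ε₀)) (Iic u) := by
    refine Integrable.mul_bdd (c := Real.exp (|u| / ε + |u| / ε₀)) hg.integrableOn ?_ ?_
    · exact (Continuous.aestronglyMeasurable (by fun_prop))
    · refine (ae_restrict_iff' measurableSet_Iic).2 (ae_of_all _ fun t ht => ?_)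
      rw [Real.norm_eq_abs, abs_of_pos (Real.exp_pos _)]
      apply Real.exp_le_exp.2
      have ht : t ≤ u := ht
      rcases le_or_gt t 0 with h1 | h1
      · have : t / ε + |t| / ε₀ ≤ 0 := by
          rw [abs_of_nonpos h1]
          have : (-t) / ε₀ ≤ (-t) / ε := by
            apply div_le_div_of_nonneg_left (by linarith) hε h.le
          have e : (-t) / ε = - (t/ε) := by ring
          linarith
        have : 0 ≤ |u| / ε + |u| / ε₀ := by positivity
        linarith
      · have h2 : |t| ≤ |u| := by
          rw [abs_of_pos h1]; exact ht.trans (le_abs_self u)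
        have h3 : t ≤ |u| := ht.trans (le_abs_self u)
        gcongr
  refine key.congr_fun (fun t _ => ?_) measurableSet_Iic
  simp only
  rw [mul_assoc, ← Real.exp_add]
  congr 2; ring

lemma bl_parts_fin {ε x y : ℝ} (hxy : x ≤ y) {g g' : ℝ → ℝ}
    (hg : ∀ x y : ℝ, x ≤ y → g y - g x = ∫ t in x..y, g' t)
    (hi : IntervalIntegrable g' volume x y) :
    ∫ t in x..y, (g' t * Real.exp (t / ε) + g t * (Real.exp (t / ε) / ε)) =
      g y * Real.exp (y / ε) - g x * Real.exp (x / ε) := by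
  have hac : AbsolutelyContinuousOnInterval (fun t => g t) x y := by
    have h1 := (hi.absolutelyContinuousOnInterval_intervalIntegral (c := x) (by simp))
    have h2 : AbsolutelyContinuousOnInterval (fun _ : ℝ => g x) x y :=
      ContDiffOn.absolutelyContinuousOnInterval contDiffOn_const
    have h3 := h1.add h2
    rw [absolutelyContinuousOnInterval_iff] at h3 ⊢
    intro η hη
    obtain ⟨δ, hδ, H⟩ := h3 η hη
    refine ⟨δ, hδ, fun E hE hs => ?_⟩
    refine lt_of_eq_of_lt ?_ (H E hE hs)
    apply Finset.sum_congr rfl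
    intro i hi'
    have hE' := hE.1 i hi'
    rw [uIcc_of_le hxy] at hE'
    simp only [Pi.add_apply]
    rw [← hg x _ hE'.1.1, ← hg x _ hE'.2.1]
    simp
  have hE : AbsolutelyContinuousOnInterval (fun t => Real.exp (t / ε)) x y :=
    ContDiffOn.absolutelyContinuousOnInterval (by fun_prop)
  rw [← AbsolutelyContinuousOnInterval.integral_deriv_mul_eq_sub hac hE]
  apply intervalIntegral.integral_congr_ae
  have hne : ∀ᵐ t : ℝ, t ≠ x := by simp [ae_iff, measure_singleton]
  have hne' : ∀ᵐ t : ℝ, t ≠ y := by simp [ae_iff, measure_singleton]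
  filter_upwards [hi.ae_hasDerivAt_integral, hne, hne'] with t ht h1 h2 h3
  have ht2 : t ∈ uIcc x y := uIoc_subset_uIcc h3
  have h4 := ht ht2 x (by simp)
  rw [uIcc_of_le hxy] at ht2
  have h5 : HasDerivAt g (g' t) t := by
    have := h4.add_const (g x)
    refine this.congr_of_eventuallyEq ?_
    filter_upwards [Ioi_mem_nhds (lt_of_le_of_ne ht2.1 (Ne.symm h1))] with s hs
    rw [← hg x s (le_of_lt hs)]; ring
  have h6 : HasDerivAt (fun t => Real.exp (t / ε)) (Real.exp (t / ε) / ε) t := by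
    have := ((hasDerivAt_id t).div_const ε).exp
    simpa [div_eq_mul_inv] using this
  rw [h6.deriv]
  have : deriv (fun t => g t) t = g' t := h5.deriv
  rw [this]

lemma bl_parts {ε : ℝ} {g g' : ℝ → ℝ}
    (hg : ∀ x y : ℝ, x ≤ y → g y - g x = ∫ t in x..y, g' t)
    (gi : ∀ u, IntegrableOn (fun t => g t * Real.exp (t / ε)) (Iic u))
    (gi' : ∀ u, IntegrableOn (fun t => g' t * Real.exp (t / ε)) (Iic u)) (u : ℝ) :
    ∫ t in Iic u, g' t * Real.exp (t / ε) =
      g u * Real.exp (u / ε) - (∫ t in Iic u, g t * Real.exp (t / ε)) / ε := by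
  have hii : ∀ x y : ℝ, x ≤ y → IntervalIntegrable g' volume x y := by
    intro x y hxy
    have h1 : IntervalIntegrable (fun t => g' t * Real.exp (t / ε)) volume x y := by
      rw [intervalIntegrable_iff_integrableOn_Ioc_of_le hxy]
      exact (gi' y).mono_set (fun t ht => ht.2)
    have h2 := h1.mul_continuousOn (g := fun t => Real.exp (-t / ε))
      (Continuous.continuousOn (by fun_prop))
    refine h2.congr (fun t _ => ?_)
    show g' t * Real.exp (t / ε) * Real.exp (-t / ε) = g' t
    rw [mul_assoc, ← Real.exp_add]
    have : t / ε + -t / ε = 0 := by ring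
    rw [this]; simp
  have hI : IntegrableOn (fun t => g' t * Real.exp (t / ε) + g t * (Real.exp (t / ε) / ε))
      (Iic u) := by
    refine (gi' u).add ?_
    refine (Integrable.congr ((gi u).div_const ε) (ae_of_all _ fun t => ?_))
    simp only; ring
  have T := intervalIntegral_tendsto_integral_Iic u hI Filter.tendsto_id
  have T2 : Filter.Tendsto (fun x => g x * Real.exp (x / ε)) Filter.atBot
      (nhds (g u * Real.exp (u / ε) - ∫ t in Iic u,
        (g' t * Real.exp (t / ε) + g t * (Real.exp (t / ε) / ε)))) := by
    refine Filter.Tendsto.congr' ?_ (T.const_sub (g u * Real.exp (u / ε)))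
    filter_upwards [Filter.Iic_mem_atBot u] with x hx
    simp only [id]
    rw [bl_parts_fin hx hg (hii x u hx)]; ring
  have h0 := IntegrableAtFilter.eq_zero_of_tendsto (μ := volume)
    ⟨Iic u, Filter.Iic_mem_atBot u, gi u⟩ ?_ T2
  · rw [integral_add (gi' u)] at h0
    · have : ∫ t in Iic u, g t * (Real.exp (t / ε) / ε) =
          (∫ t in Iic u, g t * Real.exp (t / ε)) / ε := by
        rw [← integral_div]; congr 1; ext t; ring
      rw [this] at h0
      linarith
    · refine (Integrable.congr ((gi u).div_const ε) (ae_of_all _ fun t => ?_))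
      simp only; ring
  · intro s hs
    rcases Filter.mem_atBot_sets.1 hs with ⟨b, hb⟩
    apply le_antisymm le_top
    rw [← Real.volume_Iic (a := b)]
    exact measure_mono hb

lemma bl_dd {f : ℝ → ℝ} (hf : ContDiff ℝ 2 f) :
    (∀ u, HasDerivAt f (deriv f u) u) ∧ (∀ u, HasDerivAt (deriv f) (deriv (deriv f) u) u) ∧
    Continuous (deriv f) ∧ Continuous (deriv (deriv f)) := by
  have h1 : Differentiable ℝ f := hf.differentiable (by norm_num)
  have h2 : ContDiff ℝ 1 (deriv f) := by
    have := (contDiff_succ_iff_deriv (n := 1) (f := f)).1 (by rw [one_add_one_eq_two]; exact hf)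
    exact this.2.2
  have h3 : Differentiable ℝ (deriv f) := h2.differentiable (by norm_num)
  have h4 : Continuous (deriv (deriv f)) := h2.continuous_deriv (le_refl _)
  exact ⟨fun u => (h1 u).hasDerivAt, fun u => (h3 u).hasDerivAt, h3.continuous, h4⟩

lemma bl_ftc {g g' : ℝ → ℝ} (h : ∀ u, HasDerivAt g (g' u) u) (hc : Continuous g') :
    ∀ x y : ℝ, x ≤ y → g y - g x = ∫ t in x..y, g' t := by
  intro x y _
  rw [intervalIntegral.integral_eq_sub_of_hasDerivAt (fun t _ => h t)
    (hc.intervalIntegrable _ _)]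

lemma bl_Rpack {ε ε₀ : ℝ} (hε : 0 < ε) (h : ε < ε₀) {f f3 : ℝ → ℝ} (hf : memWcl ε₀ f f3) :
    (∀ u, HasDerivAt (mRinf ε f) ((deriv f u - mRinf ε f u) / ε) u) ∧
    (∀ u, ∫ t in Iic u, f3 t * Real.exp (t / ε) =
      Real.exp (u / ε) * (deriv (deriv f) u - (deriv f u - mRinf ε f u) / ε)) ∧
    (∀ u, IntegrableOn (fun t => f t * Real.exp (t / ε)) (Iic u)) ∧
    (∀ u, ∫ t in Iic u, f t * Real.exp (t / ε) =
      ε * Real.exp (u / ε) * (f u - ε * mRinf ε f u)) := by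
  obtain ⟨hc, h3, i0, i1, i2, i3⟩ := hf
  obtain ⟨d1, d2, c1, c2⟩ := bl_dd hc
  have j0 := bl_wint hε h i0
  have j1 := bl_wint hε h i1
  have j2 := bl_wint hε h i2
  have j3 := bl_wint hε h i3
  have p0 := bl_parts (bl_ftc d1 c1) j0 j1
  have p1 := bl_parts (bl_ftc d2 c2) j1 j2
  have p2 := bl_parts h3 j2 j3
  have hm : ∀ u, ∫ t in Iic u, deriv f t * Real.exp (t / ε) =
      ε * Real.exp (u / ε) * mRinf ε f u := by
    intro u
    unfold mRinf
    have : Real.exp (u / ε) * Real.exp (-u / ε) = 1 := by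
      rw [← Real.exp_add]; simp [neg_div]
    have e : ∀ X : ℝ, ε * Real.exp (u / ε) * (ε⁻¹ * Real.exp (-u / ε) * X) =
      (ε * ε⁻¹) * (Real.exp (u / ε) * Real.exp (-u / ε)) * X := fun X => by ring
    rw [e, this, mul_inv_cancel₀ hε.ne', one_mul, one_mul]
  refine ⟨fun u => ?_, fun u => ?_, j0, fun u => ?_⟩
  · have hF : HasDerivAt (fun u => ∫ t in Iic u, deriv f t * Real.exp (t / ε))
        (deriv f u * Real.exp (u / ε)) u := by
      have e : (fun u => ∫ t in Iic u, deriv f t * Real.exp (t / ε)) =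
          fun s => (∫ t in Iic u, deriv f t * Real.exp (t / ε)) +
            ∫ t in u..s, deriv f t * Real.exp (t / ε) := by
        ext s
        rw [← intervalIntegral.integral_Iic_sub_Iic (j1 u) (j1 s)]; ring
      rw [e]
      have cc : Continuous (fun t => deriv f t * Real.exp (t / ε)) := by fun_prop
      exact (intervalIntegral.integral_hasDerivAt_right (cc.intervalIntegrable _ _)
        (cc.stronglyMeasurableAtFilter _ _) cc.continuousAt).const_add _
    have hE : HasDerivAt (fun u => ε⁻¹ * Real.exp (-u / ε)) (ε⁻¹ * (Real.exp (-u / ε) * (-1 / ε))) u := by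
      have := (((hasDerivAt_id u).neg.div_const ε).exp).const_mul ε⁻¹
      simpa using this
    have := hE.mul hF
    refine this.congr_deriv ?_
    rw [hm u]
    have e1 : Real.exp (-u / ε) * Real.exp (u / ε) = 1 := by
      rw [← Real.exp_add]; simp [neg_div]
    rw [show -u / ε = -(u / ε) by ring] at e1 ⊢
    field_simp
    linear_combination (deriv f u - mRinf ε f u) * e1
  · rw [p2, p1, hm]; field_simp
  · have := p0 u
    rw [hm u] at this
    field_simp at this
    linarith

lemma bl_refl {ε₀ : ℝ} {f f3 : ℝ → ℝ} (hf : memWcl ε₀ f f3) :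
    memWcl ε₀ (fun t => f (-t)) (fun t => - f3 (-t)) := by
  obtain ⟨hc, h3, i0, i1, i2, i3⟩ := hf
  have e1 : deriv (fun t => f (-t)) = fun t => - deriv f (-t) := by
    ext t; exact deriv_comp_neg f t
  have e2 : deriv (deriv (fun t => f (-t))) = fun t => deriv (deriv f) (-t) := by
    rw [e1]; ext t
    have := deriv_comp_neg (deriv f) t
    simp only [deriv.fun_neg, this, neg_neg]
  refine ⟨hc.comp contDiff_neg, ?_, ?_, ?_, ?_, ?_⟩
  · intro x y hxy
    rw [e2]
    have := h3 (-y) (-x) (by linarith)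
    simp only [intervalIntegral.integral_neg]
    rw [intervalIntegral.integral_comp_neg f3]
    linarith
  · simpa using i0.comp_neg
  · rw [e1]; simpa using i1.comp_neg.neg
  · rw [e2]; simpa using i2.comp_neg
  · simpa using i3.comp_neg.neg

lemma bl_mLeq (ε : ℝ) (f : ℝ → ℝ) (u : ℝ) :
    mLinf ε f u = - mRinf ε (fun t => f (-t)) (-u) := by
  unfold mLinf mRinf
  have e1 : deriv (fun t => f (-t)) = fun t => - deriv f (-t) := by
    ext t; exact deriv_comp_neg f t
  rw [e1]
  have := integral_comp_neg_Iic (-u) (fun t => deriv f t * Real.exp (-t / ε))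
  simp only [neg_neg] at this
  simp only [neg_mul, integral_neg, neg_neg]
  rw [this, integral_Ici_eq_integral_Ioi]
  ring

lemma bl_Lpack {ε ε₀ : ℝ} (hε : 0 < ε) (h : ε < ε₀) {f f3 : ℝ → ℝ} (hf : memWcl ε₀ f f3) :
    (∀ u, HasDerivAt (mLinf ε f) ((deriv f u - mLinf ε f u) / (-ε)) u) ∧
    (∀ u, ∫ t in Ici u, f3 t * Real.exp (-t / ε) =
      - (Real.exp (-u / ε) * (deriv (deriv f) u - (deriv f u - mLinf ε f u) / (-ε)))) := by
  obtain ⟨a1, a2, -, -⟩ := bl_Rpack hε h (bl_refl hf)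
  have e1 : deriv (fun t => f (-t)) = fun t => - deriv f (-t) := by
    ext t; exact deriv_comp_neg f t
  have e2 : deriv (deriv (fun t => f (-t))) = fun t => deriv (deriv f) (-t) := by
    rw [e1]; ext t
    have := deriv_comp_neg (deriv f) t
    simp only [deriv.fun_neg, this, neg_neg]
  constructor
  · intro u
    have := ((a1 (-u)).comp u (hasDerivAt_neg u)).neg
    have e3 : mLinf ε f = -(mRinf ε (fun t => f (-t)) ∘ Neg.neg) := by
      ext t; simp [bl_mLeq]
    rw [e3]
    refine this.congr_deriv ?_
    rw [e1]
    simp only [neg_neg, Pi.neg_apply, Function.comp]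
    field_simp
    ring
  · intro u
    have := a2 (-u)
    rw [e2, e1] at this
    simp only [neg_neg] at this
    have h2 := integral_comp_neg_Iic (-u) (fun t => f3 t * Real.exp (-t / ε))
    simp only [neg_neg] at h2
    simp only [neg_mul, integral_neg] at this
    rw [h2, ← integral_Ici_eq_integral_Ioi] at this
    rw [bl_mLeq]
    have h4 : ∀ a b : ℝ, -a = b → a = -b := fun a b h => by linarith
    rw [h4 _ _ this]
    congr 2
    field_simp
    ring
noncomputable def blP (e : ℝ) (f f1 m : ℝ → ℝ) (u y1 y2 : ℝ) : ℝ :=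
  f u - u * m u + (u ^ 2 / 2 - e * u) * ((f1 u - m u) / e) +
    (m u - (u - e) * ((f1 u - m u) / e)) * y1 + ((f1 u - m u) / e) / 2 * y2

lemma blP_deriv {e : ℝ} (he : e ≠ 0) {f f1 f2 m : ℝ → ℝ} {u : ℝ}
    (h0 : HasDerivAt f (f1 u) u) (h1 : HasDerivAt f1 (f2 u) u)
    (hm : HasDerivAt m ((f1 u - m u) / e) u) (y1 y2 : ℝ) :
    HasDerivAt (fun u => blP e f f1 m u y1 y2)
      ((f2 u - (f1 u - m u) / e) / e / 2 * ((u - y1 - e) ^ 2 - (e ^ 2 - (y2 - y1 ^ 2)))) u := by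
  have hm1 := (h1.sub hm).div_const e
  have hu := hasDerivAt_id' u
  have H := (((h0.sub (hu.mul hm)).add ((((hu.pow 2).div_const 2).sub (hu.const_mul e)).mul hm1)).add
    ((hm.sub ((hu.sub_const e).mul hm1)).mul_const y1)).add ((hm1.div_const 2).mul_const y2)
  unfold blP
  refine H.congr_deriv ?_
  simp only [Pi.sub_apply, Pi.pow_apply]
  field_simp
  ring

lemma blP_cont {e : ℝ} {f f1 m : ℝ → ℝ}
    (h0 : Continuous f) (h1 : Continuous f1) (hm : Continuous m) :
    Continuous (fun p : ℝ × ℝ × ℝ => blP e f f1 m p.1 p.2.1 p.2.2) := by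
  unfold blP; fun_prop

lemma bl_mono {g g' : ℝ → ℝ} {a b : ℝ} (hab : a ≤ b) (h : ∀ u, HasDerivAt g (g' u) u)
    (hs : ∀ u, a ≤ u → u ≤ b → 0 ≤ g' u) : g a ≤ g b := by
  have : MonotoneOn g (Icc a b) := by
    apply monotoneOn_of_deriv_nonneg (convex_Icc a b)
      (fun u _ => (h u).continuousAt.continuousWithinAt)
      (fun u _ => (h u).differentiableAt.differentiableWithinAt)
    intro u hu
    rw [interior_Icc] at hu
    rw [(h u).deriv]; exact hs u hu.1.le hu.2.le
  exact this ⟨le_refl a, hab⟩ ⟨hab, le_refl b⟩ hab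

/-- data for the family of supporting planes -/
structure blDat (ε : ℝ) (f : ℝ → ℝ) (v : ℝ) (Λ : ℝ → ℝ → ℝ → ℝ) : Prop where
  cont : Continuous (fun p : ℝ × ℝ × ℝ => Λ p.1 p.2.1 p.2.2)
  diag : ∀ s, Λ s s (s ^ 2) = f s
  aff : ∃ t0 t1 t2 : ℝ → ℝ, ∀ u y1 y2, Λ u y1 y2 = t0 u + t1 u * y1 + t2 u * y2
  d1 : ∀ y1 r u u', 0 ≤ r → u ≤ u' → u' ≤ v → u' ≤ y1 + ε - r →
    Λ u' y1 (y1 ^ 2 + ε ^ 2 - r ^ 2) ≤ Λ u y1 (y1 ^ 2 + ε ^ 2 - r ^ 2)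
  d2 : ∀ y1 r u u', 0 ≤ r → y1 + ε - r ≤ u → u ≤ u' → u' ≤ v → u' ≤ y1 + ε + r →
    Λ u y1 (y1 ^ 2 + ε ^ 2 - r ^ 2) ≤ Λ u' y1 (y1 ^ 2 + ε ^ 2 - r ^ 2)
  d3 : ∀ y1 r u u', 0 ≤ r → v ≤ u → u ≤ u' → y1 - ε + r ≤ u →
    Λ u y1 (y1 ^ 2 + ε ^ 2 - r ^ 2) ≤ Λ u' y1 (y1 ^ 2 + ε ^ 2 - r ^ 2)
  d4 : ∀ y1 r u u', 0 ≤ r → v ≤ u → u ≤ u' → y1 - ε - r ≤ u → u' ≤ y1 - ε + r →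
    Λ u' y1 (y1 ^ 2 + ε ^ 2 - r ^ 2) ≤ Λ u y1 (y1 ^ 2 + ε ^ 2 - r ^ 2)

noncomputable def blLam (ε : ℝ) (f : ℝ → ℝ) (v u y1 y2 : ℝ) : ℝ :=
  if u ≤ v then blP ε f (deriv f) (mRinf ε f) u y1 y2
  else blP (-ε) f (deriv f) (mLinf ε f) u y1 y2

lemma bl_dat (ε ε₀ : ℝ) (hε : 0 < ε) (hεε₀ : ε < ε₀) (f f3 : ℝ → ℝ)
    (hf : memWcl ε₀ f f3) (v : ℝ)
    (hR : ∀ u : ℝ, u ≤ v → (∫ t in Iic u, f3 t * Real.exp (t / ε)) ≤ 0)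
    (hL : ∀ u : ℝ, v ≤ u → 0 ≤ ∫ t in Ici u, f3 t * Real.exp (-t / ε))
    (hbal : Real.exp (-v / ε) * (∫ t in Iic v, f3 t * Real.exp (t / ε)) +
        Real.exp (v / ε) * (∫ t in Ici v, f3 t * Real.exp (-t / ε)) = 0) :
    blDat ε f v (blLam ε f v) ∧ mRinf ε f v + mLinf ε f v = 2 * deriv f v ∧
      (∀ u y1 y2, v ≤ u → blLam ε f v u y1 y2 = blP (-ε) f (deriv f) (mLinf ε f) u y1 y2) := by
  obtain ⟨r1, r2, -, -⟩ := bl_Rpack hε hεε₀ hf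
  obtain ⟨l1, l2⟩ := bl_Lpack hε hεε₀ hf
  obtain ⟨e1, e2, c1, c2⟩ := bl_dd hf.1
  have hne : ε ≠ 0 := hε.ne'
  have hbal' : mRinf ε f v + mLinf ε f v = 2 * deriv f v := by
    rw [r2, l2] at hbal
    have h1 : Real.exp (-v / ε) * Real.exp (v / ε) = 1 := by
      rw [← Real.exp_add]; simp [neg_div]
    have : (deriv f v - mRinf ε f v) / ε = (deriv f v - mLinf ε f v) / (-ε) := by
      linear_combination (-1) * hbal + ((deriv (deriv f) v - (deriv f v - mRinf ε f v) / ε) -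
        (deriv (deriv f) v - (deriv f v - mLinf ε f v) / (-ε))) * h1
    field_simp at this
    linarith
  have hgl : ∀ y1 y2, blP ε f (deriv f) (mRinf ε f) v y1 y2 =
      blP (-ε) f (deriv f) (mLinf ε f) v y1 y2 := by
    intro y1 y2
    have : mLinf ε f v = 2 * deriv f v - mRinf ε f v := by linarith
    unfold blP
    rw [this]
    field_simp
    ring
  have hge : ∀ u y1 y2, v ≤ u → blLam ε f v u y1 y2 = blP (-ε) f (deriv f) (mLinf ε f) u y1 y2 := by
    intro u y1 y2 hu
    unfold blLam
    split_ifs with h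
    · have : u = v := le_antisymm h hu
      subst this; exact hgl y1 y2
    · rfl
  have hle : ∀ u y1 y2, u ≤ v → blLam ε f v u y1 y2 = blP ε f (deriv f) (mRinf ε f) u y1 y2 := by
    intro u y1 y2 hu
    unfold blLam
    rw [if_pos hu]
  have sR : ∀ u, u ≤ v → (deriv (deriv f) u - (deriv f u - mRinf ε f u) / ε) ≤ 0 := by
    intro u hu
    have := hR u hu
    rw [r2] at this
    exact nonpos_of_mul_nonpos_right this (Real.exp_pos _)
  have sL : ∀ u, v ≤ u → (deriv (deriv f) u - (deriv f u - mLinf ε f u) / (-ε)) ≤ 0 := by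
    intro u hu
    have := hL u hu
    rw [l2] at this
    exact nonpos_of_mul_nonpos_right (by linarith) (Real.exp_pos (-u / ε))
  have dR := fun y1 y2 u => blP_deriv hne (e1 u) (e2 u) (r1 u) y1 y2
  have dL := fun y1 y2 u => blP_deriv (neg_ne_zero.2 hne) (e1 u) (e2 u) (l1 u) y1 y2
  have cf : Continuous f := hf.1.continuous
  have cR : Continuous (mRinf ε f) := continuous_iff_continuousAt.2 fun u => (r1 u).continuousAt
  have cL : Continuous (mLinf ε f) := continuous_iff_continuousAt.2 fun u => (l1 u).continuousAt
  refine ⟨⟨?_, ?_, ?_, ?_, ?_, ?_, ?_⟩, hbal', hge⟩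
  · unfold blLam
    apply Continuous.if_le (blP_cont cf c1 cR) (blP_cont cf c1 cL) continuous_fst continuous_const
    intro p hp
    rw [hp]; exact hgl _ _
  · intro s
    unfold blLam
    split_ifs <;> (unfold blP; field_simp; ring)
  · refine ⟨fun u => blLam ε f v u 0 0, fun u => blLam ε f v u 1 0 - blLam ε f v u 0 0,
      fun u => blLam ε f v u 0 1 - blLam ε f v u 0 0, fun u y1 y2 => ?_⟩
    simp only [blLam]
    split_ifs <;> (unfold blP; ring)
  · intro y1 r u u' hr huu hv hu'
    rw [hle _ _ _ (huu.trans hv), hle _ _ _ hv]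
    have := bl_mono huu (fun w => (dR y1 (y1 ^ 2 + ε ^ 2 - r ^ 2) w).neg) (fun w h1 h2 => ?_)
    · simpa using this
    · have A := sR w (h2.trans hv)
      have B : 0 ≤ (w - y1 - ε) ^ 2 - (ε ^ 2 - (y1 ^ 2 + ε ^ 2 - r ^ 2 - y1 ^ 2)) := by
        nlinarith
      have : 0 ≤ -(deriv (deriv f) w - (deriv f w - mRinf ε f w) / ε) / ε / 2 := by
        apply div_nonneg (div_nonneg (by linarith) hε.le) (by norm_num)
      have := mul_nonneg this B
      exact le_of_le_of_eq this (by ring)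
  · intro y1 r u u' hr hu huu hv hu'
    rw [hle _ _ _ (huu.trans hv), hle _ _ _ hv]
    refine bl_mono huu (fun w => (dR y1 (y1 ^ 2 + ε ^ 2 - r ^ 2) w)) (fun w h1 h2 => ?_)
    have A := sR w (h2.trans hv)
    have B : 0 ≤ -((w - y1 - ε) ^ 2 - (ε ^ 2 - (y1 ^ 2 + ε ^ 2 - r ^ 2 - y1 ^ 2))) := by
      nlinarith
    have : 0 ≤ -(deriv (deriv f) w - (deriv f w - mRinf ε f w) / ε) / ε / 2 := by
      apply div_nonneg (div_nonneg (by linarith) hε.le) (by norm_num)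
    have := mul_nonneg this B
    exact le_of_le_of_eq this (by ring)
  · intro y1 r u u' hr hv huu hu
    rw [hge _ _ _ hv, hge _ _ _ (hv.trans huu)]
    refine bl_mono huu (fun w => (dL y1 (y1 ^ 2 + ε ^ 2 - r ^ 2) w)) (fun w h1 h2 => ?_)
    have A := sL w (hv.trans h1)
    have B : 0 ≤ (w - y1 - -ε) ^ 2 - ((-ε) ^ 2 - (y1 ^ 2 + ε ^ 2 - r ^ 2 - y1 ^ 2)) := by
      nlinarith
    have : 0 ≤ (deriv (deriv f) w - (deriv f w - mLinf ε f w) / (-ε)) / (-ε) / 2 := by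
      apply div_nonneg (div_nonneg_of_nonpos (by linarith) (by linarith)) (by norm_num)
    exact mul_nonneg this B
  · intro y1 r u u' hr hv huu hu hu'
    rw [hge _ _ _ hv, hge _ _ _ (hv.trans huu)]
    have := bl_mono huu (fun w => (dL y1 (y1 ^ 2 + ε ^ 2 - r ^ 2) w).neg) (fun w h1 h2 => ?_)
    · simpa using this
    · have A := sL w (hv.trans h1)
      have B : 0 ≤ -((w - y1 - -ε) ^ 2 - ((-ε) ^ 2 - (y1 ^ 2 + ε ^ 2 - r ^ 2 - y1 ^ 2))) := by
        nlinarith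
      have : 0 ≤ (deriv (deriv f) w - (deriv f w - mLinf ε f w) / (-ε)) / (-ε) / 2 := by
        apply div_nonneg (div_nonneg_of_nonpos (by linarith) (by linarith)) (by norm_num)
      have := mul_nonneg this B
      exact le_of_le_of_eq this (by ring)

/-- radius -/
noncomputable def blr (ε y1 y2 : ℝ) : ℝ := Real.sqrt (ε ^ 2 - (y2 - y1 ^ 2))

/-- the parameter -/
noncomputable def blU (ε v y1 y2 : ℝ) : ℝ :=
  max (y1 - ε + blr ε y1 y2) (min (y1 + ε - blr ε y1 y2) v)

lemma bl_star {ε : ℝ} {f : ℝ → ℝ} {v : ℝ} {Λ : ℝ → ℝ → ℝ → ℝ} (H : blDat ε f v Λ)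
    (x1 rx y1 r : ℝ) (hrx : 0 ≤ rx) (hrx' : rx ≤ ε) (hr : 0 ≤ r) (hr' : r ≤ ε)
    (hc : |x1 - y1| ≤ rx + r) :
    Λ (max (y1 - ε + r) (min (y1 + ε - r) v)) y1 (y1 ^ 2 + ε ^ 2 - r ^ 2) ≤
      Λ (max (x1 - ε + rx) (min (x1 + ε - rx) v)) y1 (y1 ^ 2 + ε ^ 2 - r ^ 2) := by
  obtain ⟨h1, h2⟩ := abs_le.1 hc
  have D1 := H.d1 y1 r
  have D2 := H.d2 y1 r
  have D3 := H.d3 y1 r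
  have D4 := H.d4 y1 r
  set w := max (x1 - ε + rx) (min (x1 + ε - rx) v) with hw
  have w1 : w ≤ x1 + ε - rx := max_le (by linarith) (min_le_left _ _)
  have w2 : x1 - ε + rx ≤ w := le_max_left _ _
  have w3 : w ≤ v ∨ (v < w ∧ w = x1 - ε + rx) := by
    rcases le_or_gt w v with h | h
    · exact Or.inl h
    · right; refine ⟨h, ?_⟩
      rcases max_choice (x1 - ε + rx) (min (x1 + ε - rx) v) with h3 | h3
      · exact h3
      · rw [← hw] at h3
        have := min_le_right (x1 + ε - rx) v
        linarith
  have w4 : v ≤ w ∨ (w < v ∧ w = x1 + ε - rx) := by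
    rcases le_or_gt v w with h | h
    · exact Or.inl h
    · right; refine ⟨h, ?_⟩
      rcases le_total (x1 + ε - rx) v with h3 | h3
      · apply le_antisymm w1
        rw [hw, min_eq_left h3]; exact le_max_right _ _
      · have : min (x1 + ε - rx) v ≤ w := le_max_right _ _
        rw [min_eq_right h3] at this; linarith
  rcases le_total (y1 + ε - r) v with hv | hv
  · have e : max (y1 - ε + r) (min (y1 + ε - r) v) = y1 + ε - r := by
      rw [min_eq_left hv]; exact max_eq_right (by linarith)
    rw [e]
    rcases le_total w (y1 + ε - r) with h3 | h3
    · exact D1 _ _ hr h3 hv le_rfl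
    · rcases w3 with h4 | ⟨h4, h5⟩
      · exact D2 _ _ hr le_rfl h3 h4 (by linarith)
      · exact (D2 _ v hr le_rfl hv le_rfl (by linarith)).trans
          (D3 _ _ hr le_rfl h4.le (by linarith))
  · rcases le_total v (y1 - ε + r) with hv' | hv'
    · have e : max (y1 - ε + r) (min (y1 + ε - r) v) = y1 - ε + r := by
        rw [min_eq_right hv]; exact max_eq_left hv'
      rw [e]
      rcases le_total w (y1 - ε + r) with h3 | h3
      · rcases w4 with h4 | ⟨h4, h5⟩
        · exact D4 _ _ hr h4 h3 (by linarith) le_rfl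
        · exact (D4 v _ hr le_rfl hv' (by linarith) le_rfl).trans
            (D1 _ _ hr h4.le le_rfl hv)
      · exact D3 _ _ hr hv' h3 le_rfl
    · have e : max (y1 - ε + r) (min (y1 + ε - r) v) = v := by
        rw [min_eq_right hv]; exact max_eq_right hv'
      rw [e]
      rcases le_total w v with h3 | h3
      · exact D1 _ _ hr h3 le_rfl hv
      · exact D3 _ _ hr le_rfl h3 hv'

lemma bl_star' {ε : ℝ} (hε : 0 < ε) {f : ℝ → ℝ} {v : ℝ} {Λ : ℝ → ℝ → ℝ → ℝ} (H : blDat ε f v Λ)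
    (x1 x2 y1 y2 : ℝ) (hx : x1 ^ 2 ≤ x2) (hy : y1 ^ 2 ≤ y2) (hy' : y2 ≤ y1 ^ 2 + ε ^ 2)
    (hc : |x1 - y1| ≤ blr ε x1 x2 + blr ε y1 y2) :
    Λ (blU ε v y1 y2) y1 y2 ≤ Λ (blU ε v x1 x2) y1 y2 := by
  have h1 : ∀ a b : ℝ, a ^ 2 ≤ b → blr ε a b ≤ ε := by
    intro a b hab
    unfold blr
    rw [Real.sqrt_le_left hε.le]; linarith
  have h2 : blr ε y1 y2 ^ 2 = ε ^ 2 - (y2 - y1 ^ 2) := Real.sq_sqrt (by linarith)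
  have := bl_star H x1 (blr ε x1 x2) y1 (blr ε y1 y2) (Real.sqrt_nonneg _) (h1 _ _ hx)
    (Real.sqrt_nonneg _) (h1 _ _ hy) hc
  have e : y1 ^ 2 + ε ^ 2 - blr ε y1 y2 ^ 2 = y2 := by rw [h2]; ring
  rw [e] at this
  exact this
lemma bl_avg_sq {φ : ℝ → ℝ} {c d : ℝ} (hcd : c < d) (h1 : IntervalIntegrable φ volume c d)
    (h2 : IntervalIntegrable (fun t => φ t ^ 2) volume c d) (k : ℝ) :
    intAvg (fun t => (φ t - k) ^ 2) c d =
      intAvg (fun t => φ t ^ 2) c d - 2 * k * intAvg φ c d + k ^ 2 := by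
  have hne : d - c ≠ 0 := by linarith
  have : (∫ t in c..d, (φ t - k) ^ 2) =
      (∫ t in c..d, φ t ^ 2) - 2 * k * (∫ t in c..d, φ t) + k ^ 2 * (d - c) := by
    have e : (fun t => (φ t - k) ^ 2) = fun t => (φ t ^ 2 - 2 * k * φ t) + k ^ 2 := by
      funext t; ring
    rw [e, intervalIntegral.integral_add (h2.sub (h1.const_mul _)) (by simp),
      intervalIntegral.integral_sub h2 (h1.const_mul _), intervalIntegral.integral_const_mul]
    simp; ring
  unfold intAvg
  rw [this]; field_simp

lemma bl_var_nonneg {φ : ℝ → ℝ} {c d : ℝ} (hcd : c < d) (h1 : IntervalIntegrable φ volume c d)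
    (h2 : IntervalIntegrable (fun t => φ t ^ 2) volume c d) :
    intAvg φ c d ^ 2 ≤ intAvg (fun t => φ t ^ 2) c d := by
  have := bl_avg_sq hcd h1 h2 (intAvg φ c d)
  have h3 : 0 ≤ intAvg (fun t => (φ t - intAvg φ c d) ^ 2) c d := by
    apply div_nonneg _ (by linarith)
    exact intervalIntegral.integral_nonneg hcd.le (fun t _ => sq_nonneg _)
  nlinarith

lemma bl_avg_add {φ : ℝ → ℝ} {a s b : ℝ} (h1 : a < s) (h2 : s < b)
    (h : ∀ c d, IntervalIntegrable φ volume c d) :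
    (b - a) * intAvg φ a b = (s - a) * intAvg φ a s + (b - s) * intAvg φ s b := by
  unfold intAvg
  rw [← intervalIntegral.integral_add_adjacent_intervals (h a s) (h s b)]
  have : b - a ≠ 0 := by linarith
  have : s - a ≠ 0 := by linarith
  have : b - s ≠ 0 := by linarith
  field_simp

lemma bl_split_abs {κ ε x1 rx : ℝ} (hκ : 0 < κ) (hκε : κ ≤ ε) {y r1 z r2 : ℝ → ℝ}
    (hy : ContinuousOn y (Icc (1/2) 1)) (hr : ContinuousOn r1 (Icc (1/2) 1))
    (hy1 : y 1 = x1) (hr1 : r1 1 = rx) (hrx : κ ≤ rx)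
    (hb1 : ∀ s, 1/2 ≤ s → s ≤ 1 → κ ≤ r1 s)
    (hb2 : ∀ s, 1/2 ≤ s → s < 1 → 0 ≤ r2 s ∧ r2 s ≤ ε)
    (hx : ∀ s, 1/2 ≤ s → s < 1 → x1 = s * y s + (1 - s) * z s)
    (hrr : ∀ s, 1/2 ≤ s → s < 1 →
      rx ^ 2 = s * r1 s ^ 2 + (1 - s) * r2 s ^ 2 - s * (1 - s) * (z s - y s) ^ 2)
    (hfail : rx + r1 (1/2) < |x1 - y (1/2)|) :
    ∃ s, 1/2 ≤ s ∧ s < 1 ∧ κ / ε ≤ 1 - s ∧ |x1 - y s| ≤ rx + r1 s ∧ |x1 - z s| ≤ rx + r2 s := by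
  have hε : 0 < ε := by linarith
  have hc : ContinuousOn (fun s => rx + r1 s - |x1 - y s|) (Icc (1/2) 1) :=
    (continuousOn_const.add hr).sub ((continuousOn_const.sub hy).abs)
  have := intermediate_value_Icc (by norm_num : (1/2:ℝ) ≤ 1) hc
  have h0 : (0:ℝ) ∈ Icc (rx + r1 (1/2) - |x1 - y (1/2)|) (rx + r1 1 - |x1 - y 1|) := by
    constructor
    · linarith
    · rw [hy1, hr1]; simp; linarith
  obtain ⟨s, ⟨hs1, hs2⟩, hs⟩ := this h0
  simp only at hs
  have hs3 : s < 1 := by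
    apply lt_of_le_of_ne hs2
    rintro rfl
    rw [hy1, hr1] at hs; simp at hs; linarith
  obtain ⟨h2a, h2b⟩ := hb2 s hs1 hs3
  have hX := hx s hs1 hs3
  have hRR := hrr s hs1 hs3
  have h1a := hb1 s hs1 hs2
  set D := |z s - y s| with hD
  have hD0 : 0 ≤ D := abs_nonneg _
  have e1 : |x1 - y s| = (1 - s) * D := by
    have : x1 - y s = (1 - s) * (z s - y s) := by linear_combination hX
    rw [this, abs_mul, abs_of_pos (by linarith : 0 < 1 - s)]
  have e2 : |x1 - z s| = s * D := by
    have : x1 - z s = -(s * (z s - y s)) := by linear_combination hX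
    rw [this, abs_neg, abs_mul, abs_of_pos (by linarith : 0 < s)]
  rw [e1] at hs
  have hsq : (z s - y s) ^ 2 = D ^ 2 := (sq_abs _).symm
  rw [hsq] at hRR
  have hr1s : r1 s = (1 - s) * D - rx := by linarith
  have h3 : (1 - s) * (r2 s ^ 2) = (1 - s) * (rx + s * D) ^ 2 := by
    rw [hr1s] at hRR; linear_combination (-1) * hRR
  have h4 : r2 s ^ 2 = (rx + s * D) ^ 2 := mul_left_cancel₀ (by linarith) h3
  have h5 : r2 s = rx + s * D := by
    have : 0 ≤ s * D := mul_nonneg (by linarith) hD0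
    exact (sq_eq_sq₀ h2a (by linarith)).1 h4
  refine ⟨s, hs1, hs3, ?_, by rw [e1]; linarith, by rw [e2]; linarith⟩
  rw [div_le_iff₀ hε]
  have h6 : D ≤ 2 * ε := by nlinarith
  nlinarith

lemma bl_split {κ ε a b : ℝ} (hκ : 0 < κ) (hκε : κ ≤ ε) (hab : a < b) {φ : ℝ → ℝ}
    (hi : ∀ c d, IntervalIntegrable φ volume c d)
    (hi2 : ∀ c d, IntervalIntegrable (fun t => φ t ^ 2) volume c d)
    (hv : ∀ c d, a ≤ c → c < d → d ≤ b →
      intAvg (fun t => φ t ^ 2) c d - (intAvg φ c d) ^ 2 ≤ ε ^ 2 - κ ^ 2) :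
    ∃ s, a < s ∧ s < b ∧ min (1/2) (κ / ε) * (b - a) ≤ s - a ∧
      min (1/2) (κ / ε) * (b - a) ≤ b - s ∧
      |intAvg φ a b - intAvg φ a s| ≤
        blr ε (intAvg φ a b) (intAvg (fun t => φ t ^ 2) a b) +
        blr ε (intAvg φ a s) (intAvg (fun t => φ t ^ 2) a s) ∧
      |intAvg φ a b - intAvg φ s b| ≤
        blr ε (intAvg φ a b) (intAvg (fun t => φ t ^ 2) a b) +
        blr ε (intAvg φ s b) (intAvg (fun t => φ t ^ 2) s b) := by
  set R : ℝ → ℝ → ℝ := fun c d => blr ε (intAvg φ c d) (intAvg (fun t => φ t ^ 2) c d) with hR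
  have hε : 0 < ε := by linarith
  have hba : 0 < b - a := by linarith
  have hRsq : ∀ c d, a ≤ c → c < d → d ≤ b →
      R c d ^ 2 = ε ^ 2 - (intAvg (fun t => φ t ^ 2) c d - (intAvg φ c d) ^ 2) := by
    intro c d h1 h2 h3
    apply Real.sq_sqrt
    nlinarith [hv c d h1 h2 h3]
  have hRκ : ∀ c d, a ≤ c → c < d → d ≤ b → κ ≤ R c d := by
    intro c d h1 h2 h3
    apply Real.le_sqrt_of_sq_le
    linarith [hv c d h1 h2 h3]
  have hRε : ∀ c d, c < d → R c d ≤ ε := by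
    intro c d h2
    simp only [hR, blr]
    rw [Real.sqrt_le_left hε.le]
    linarith [bl_var_nonneg h2 (hi c d) (hi2 c d)]
  have hid : ∀ s, a < s → s < b → ∀ α, α * (b - a) = s - a →
      intAvg φ a b = α * intAvg φ a s + (1 - α) * intAvg φ s b ∧
      R a b ^ 2 = α * R a s ^ 2 + (1 - α) * R s b ^ 2 -
        α * (1 - α) * (intAvg φ s b - intAvg φ a s) ^ 2 := by
    intro s h1 h2 α hα
    have A1 := bl_avg_add h1 h2 hi
    have A2 := bl_avg_add h1 h2 hi2
    have hα' : (1 - α) * (b - a) = b - s := by linarith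
    rw [← hα, ← hα'] at A1 A2
    have B1 : intAvg φ a b = α * intAvg φ a s + (1 - α) * intAvg φ s b :=
      mul_left_cancel₀ hba.ne' (by linear_combination A1)
    have B2 : intAvg (fun t => φ t ^ 2) a b = α * intAvg (fun t => φ t ^ 2) a s +
        (1 - α) * intAvg (fun t => φ t ^ 2) s b :=
      mul_left_cancel₀ hba.ne' (by linear_combination A2)
    refine ⟨B1, ?_⟩
    rw [hRsq a b le_rfl hab le_rfl, hRsq a s le_rfl h1 h2.le, hRsq s b h1.le h2 le_rfl, B1, B2]
    ring
  have cav : ∀ ψ : ℝ → ℝ, (∀ c d, IntervalIntegrable ψ volume c d) →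
      ContinuousOn (fun α => intAvg ψ a (a + α * (b - a))) (Icc (1/2) 1) ∧
      ContinuousOn (fun α => intAvg ψ (b - α * (b - a)) b) (Icc (1/2) 1) := by
    intro ψ hψ
    have c1 : Continuous (fun s => ∫ t in a..s, ψ t) :=
      intervalIntegral.continuous_primitive hψ a
    have c2 : Continuous (fun s => ∫ t in s..b, ψ t) := by
      have := (intervalIntegral.continuous_primitive hψ b).neg
      refine this.congr fun s => ?_
      rw [intervalIntegral.integral_symm b s]; rfl
    unfold intAvg
    constructor
    · apply ContinuousOn.div
      · exact (c1.comp (by fun_prop : Continuous fun α : ℝ => a + α * (b - a))).continuousOn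
      · fun_prop
      · intro α hα; have := hα.1; nlinarith
    · apply ContinuousOn.div
      · exact (c2.comp (by fun_prop : Continuous fun α : ℝ => b - α * (b - a))).continuousOn
      · fun_prop
      · intro α hα; have := hα.1; nlinarith
  have cavR : ContinuousOn (fun α => R a (a + α * (b - a))) (Icc (1/2) 1) ∧
      ContinuousOn (fun α => R (b - α * (b - a)) b) (Icc (1/2) 1) := by
    obtain ⟨p1, p2⟩ := cav φ hi
    obtain ⟨q1, q2⟩ := cav _ hi2
    constructor
    · exact (continuousOn_const.sub (q1.sub (p1.pow 2))).sqrt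
    · exact (continuousOn_const.sub (q2.sub (p2.pow 2))).sqrt
  by_cases hl : R a b + R a (a + 1/2 * (b - a)) < |intAvg φ a b - intAvg φ a (a + 1/2 * (b - a))|
  · obtain ⟨s, s1, s2, s3, s4, s5⟩ := bl_split_abs (x1 := intAvg φ a b) (rx := R a b) hκ hκε
      (y := fun α => intAvg φ a (a + α * (b - a))) (r1 := fun α => R a (a + α * (b - a)))
      (z := fun α => intAvg φ (a + α * (b - a)) b) (r2 := fun α => R (a + α * (b - a)) b)
      (cav φ hi).1 cavR.1 (by simp) (by simp) (hRκ a b le_rfl hab le_rfl)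
      (fun s h1 h2 => hRκ _ _ le_rfl (by nlinarith) (by nlinarith))
      (fun s h1 h2 => ⟨Real.sqrt_nonneg _, hRε _ _ (by nlinarith)⟩)
      (fun s h1 h2 => (hid (a + s * (b - a)) (by nlinarith) (by nlinarith) s (by ring)).1)
      (fun s h1 h2 => (hid (a + s * (b - a)) (by nlinarith) (by nlinarith) s (by ring)).2)
      hl
    refine ⟨a + s * (b - a), by nlinarith, by nlinarith, ?_, ?_, s4, s5⟩
    · have := min_le_left (1/2) (κ / ε); nlinarith
    · have := min_le_right (1/2) (κ / ε); nlinarith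
  · by_cases hr : R a b + R (b - 1/2 * (b - a)) b < |intAvg φ a b - intAvg φ (b - 1/2 * (b - a)) b|
    · obtain ⟨s, s1, s2, s3, s4, s5⟩ := bl_split_abs (x1 := intAvg φ a b) (rx := R a b) hκ hκε
        (y := fun α => intAvg φ (b - α * (b - a)) b) (r1 := fun α => R (b - α * (b - a)) b)
        (z := fun α => intAvg φ a (b - α * (b - a))) (r2 := fun α => R a (b - α * (b - a)))
        (cav φ hi).2 cavR.2 (by simp) (by simp) (hRκ a b le_rfl hab le_rfl)
        (fun s h1 h2 => hRκ _ _ (by nlinarith) (by nlinarith) le_rfl)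
        (fun s h1 h2 => ⟨Real.sqrt_nonneg _, hRε _ _ (by nlinarith)⟩)
        (fun s h1 h2 => by
          have := (hid (b - s * (b - a)) (by nlinarith) (by nlinarith) (1 - s) (by ring)).1
          linear_combination this)
        (fun s h1 h2 => by
          have := (hid (b - s * (b - a)) (by nlinarith) (by nlinarith) (1 - s) (by ring)).2
          linear_combination this)
        hr
      refine ⟨b - s * (b - a), by nlinarith, by nlinarith, ?_, ?_, s5, s4⟩
      · have := min_le_right (1/2) (κ / ε); nlinarith
      · have := min_le_left (1/2) (κ / ε); nlinarith
    · have e : b - 1/2 * (b - a) = a + 1/2 * (b - a) := by ring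
      rw [e] at hr
      have := min_le_left (1/2) (κ / ε)
      exact ⟨a + 1/2 * (b - a), by nlinarith, by nlinarith, by nlinarith, by nlinarith,
        not_lt.1 hl, not_lt.1 hr⟩
noncomputable def blB (ε v : ℝ) (Λ : ℝ → ℝ → ℝ → ℝ) (x1 x2 : ℝ) : ℝ := Λ (blU ε v x1 x2) x1 x2

lemma blU_cont (ε v : ℝ) : Continuous (fun p : ℝ × ℝ => blU ε v p.1 p.2) := by
  unfold blU blr; fun_prop

lemma blB_cont {ε v : ℝ} {f : ℝ → ℝ} {Λ : ℝ → ℝ → ℝ → ℝ} (H : blDat ε f v Λ) :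
    Continuous (fun p : ℝ × ℝ => blB ε v Λ p.1 p.2) := by
  have := H.cont.comp ((blU_cont ε v).prodMk continuous_id)
  exact this

lemma bl_bdd_ii {φ : ℝ → ℝ} (hφ : Measurable φ) {M : ℝ} (hM : ∀ t, |φ t| ≤ M) (c d : ℝ) :
    IntervalIntegrable φ volume c d := by
  rw [intervalIntegrable_iff]
  exact Measure.integrableOn_of_bounded (M := M) (by simp [uIoc]) hφ.aestronglyMeasurable
    (Filter.Eventually.of_forall hM)

lemma bl_cont_bdd {f : ℝ → ℝ} (hf : Continuous f) (M : ℝ) : ∃ C, 0 ≤ C ∧ ∀ s, |s| ≤ M → |f s| ≤ C := by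
  obtain ⟨C, hC⟩ := (isCompact_Icc (a := -M) (b := M)).exists_bound_of_continuousOn hf.continuousOn
  refine ⟨max C 0, le_max_right _ _, fun s hs => ?_⟩
  exact (hC s (abs_le.1 hs)).trans (le_max_left _ _)

lemma bl_base {ε v : ℝ} (hε : 0 < ε) {f : ℝ → ℝ} (hfc : Continuous f) {Λ : ℝ → ℝ → ℝ → ℝ}
    (H : blDat ε f v Λ) (M : ℝ) :
    ∃ C, 0 ≤ C ∧ ∀ x1 x2 s, |s| ≤ M → |x1| ≤ M → x1 ^ 2 ≤ x2 → x2 ≤ M ^ 2 →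
      f s ≤ Λ (blU ε v x1 x2) s (s ^ 2) + C * |s - x1| := by
  have hc : Continuous (fun p : ℝ × ℝ × ℝ => f p.1 - Λ (blU ε v p.2.1 p.2.2) p.1 (p.1 ^ 2)) := by
    have h1 : Continuous (fun p : ℝ × ℝ × ℝ => (blU ε v p.2.1 p.2.2, p.1, p.1 ^ 2)) :=
      ((blU_cont ε v).comp continuous_snd).prodMk (by fun_prop)
    exact (hfc.comp continuous_fst).sub (H.cont.comp h1)
  obtain ⟨C, hC⟩ := ((isCompact_Icc (a := -M) (b := M)).prod
    ((isCompact_Icc (a := -M) (b := M)).prod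
      (isCompact_Icc (a := 0) (b := M ^ 2)))).exists_bound_of_continuousOn hc.continuousOn
  refine ⟨max C 0 / ε, div_nonneg (le_max_right _ _) hε.le, fun x1 x2 s hs hx1 hx2 hx2' => ?_⟩
  rcases le_or_gt |s - x1| ε with h | h
  · have hb : blr ε s (s ^ 2) = ε := by
      unfold blr; simp [Real.sqrt_sq hε.le]
    have := bl_star' hε H x1 x2 s (s ^ 2) hx2 le_rfl (by nlinarith) (by
      rw [hb, abs_sub_comm]
      have : 0 ≤ blr ε x1 x2 := Real.sqrt_nonneg _
      linarith)
    have hU : blU ε v s (s ^ 2) = s := by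
      unfold blU; rw [hb]
      simp
    rw [hU, H.diag] at this
    have : 0 ≤ max C 0 / ε * |s - x1| := by positivity
    linarith
  · have := hC (s, x1, x2) ⟨abs_le.1 hs, abs_le.1 hx1, by nlinarith, hx2'⟩
    simp only at this
    have h2 := (le_abs_self _).trans this
    have h3 : max C 0 ≤ max C 0 / ε * |s - x1| := by
      rw [div_mul_eq_mul_div, le_div_iff₀ hε]
      exact mul_le_mul_of_nonneg_left h.le (le_max_right _ _)
    have := le_max_left C 0
    linarith

lemma bl_avg_bdd {φ : ℝ → ℝ} {M : ℝ} (hM : ∀ t, |φ t| ≤ M) {c d : ℝ} (hcd : c < d) :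
    |intAvg φ c d| ≤ M := by
  unfold intAvg
  rw [abs_div, abs_of_pos (by linarith : 0 < d - c), div_le_iff₀ (by linarith)]
  have := intervalIntegral.norm_integral_le_of_norm_le_const (a := c) (b := d) (f := φ) (C := M)
    (fun x _ => hM x)
  rwa [abs_of_pos (by linarith : 0 < d - c)] at this

lemma bl_mul_avg {φ : ℝ → ℝ} {c d : ℝ} (hcd : c < d) :
    (∫ t in c..d, φ t) = (d - c) * intAvg φ c d := by
  unfold intAvg
  have : d - c ≠ 0 := by linarith
  field_simp

lemma bl_step {ε v κ : ℝ} (hκ : 0 < κ) (hκε : κ ≤ ε) {f : ℝ → ℝ} (hfc : Continuous f)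
    {Λ : ℝ → ℝ → ℝ → ℝ} (H : blDat ε f v Λ) {φ : ℝ → ℝ} (hφ : Measurable φ) {M : ℝ}
    (hM : ∀ t, |φ t| ≤ M) {a b : ℝ} (hab : a < b)
    (hv : ∀ c d, a ≤ c → c < d → d ≤ b →
      intAvg (fun t => φ t ^ 2) c d - (intAvg φ c d) ^ 2 ≤ ε ^ 2 - κ ^ 2) :
    ∃ s, a < s ∧ s < b ∧ min (1/2) (κ / ε) * (b - a) ≤ s - a ∧
      min (1/2) (κ / ε) * (b - a) ≤ b - s ∧
      (s - a) * blB ε v Λ (intAvg φ a s) (intAvg (fun t => φ t ^ 2) a s) +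
      (b - s) * blB ε v Λ (intAvg φ s b) (intAvg (fun t => φ t ^ 2) s b) ≤
      (b - a) * blB ε v Λ (intAvg φ a b) (intAvg (fun t => φ t ^ 2) a b) := by
  have hi := bl_bdd_ii hφ hM
  have hM2 : ∀ t, |φ t ^ 2| ≤ M ^ 2 := fun t => by
    rw [abs_pow]; exact pow_le_pow_left₀ (abs_nonneg _) (hM t) 2
  have hi2 := bl_bdd_ii (hφ.pow_const 2) hM2
  have hε : 0 < ε := by linarith
  obtain ⟨s, s1, s2, s3, s4, s5, s6⟩ := bl_split hκ hκε hab hi hi2 hv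
  refine ⟨s, s1, s2, s3, s4, ?_⟩
  have b0 := bl_var_nonneg hab (hi _ _) (hi2 _ _)
  have b1 := bl_var_nonneg s1 (hi _ _) (hi2 _ _)
  have b2 := bl_var_nonneg s2 (hi _ _) (hi2 _ _)
  have t1 := bl_star' hε H _ _ _ _ b0 b1 (by nlinarith [hv a s le_rfl s1 s2.le]) s5
  have t2 := bl_star' hε H _ _ _ _ b0 b2 (by nlinarith [hv s b s1.le s2 le_rfl]) s6
  obtain ⟨c0, c1, c2, hc⟩ := H.aff
  have A1 := bl_avg_add s1 s2 hi
  have A2 := bl_avg_add s1 s2 hi2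
  unfold blB
  rw [hc (blU ε v (intAvg φ a b) _)] at t1 t2
  rw [hc (blU ε v (intAvg φ a b) _)]
  have u1 := mul_le_mul_of_nonneg_left t1 (by linarith : 0 ≤ s - a)
  have u2 := mul_le_mul_of_nonneg_left t2 (by linarith : 0 ≤ b - s)
  refine (add_le_add u1 u2).trans (le_of_eq ?_)
  generalize blU ε v (intAvg φ a b) (intAvg (fun t => φ t ^ 2) a b) = u
  linear_combination (-c1 u) * A1 - c2 u * A2

lemma bl_fin {ε v : ℝ} (hε : 0 < ε) {f : ℝ → ℝ} (hfc : Continuous f)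
    {Λ : ℝ → ℝ → ℝ → ℝ} (H : blDat ε f v Λ) {φ : ℝ → ℝ} (hφ : Measurable φ) {M : ℝ}
    (hM : ∀ t, |φ t| ≤ M) : ∃ C, 0 ≤ C ∧ ∀ a b, a < b → ∀ k : ℝ,
      (∫ t in a..b, f (φ t)) -
        (b - a) * blB ε v Λ (intAvg φ a b) (intAvg (fun t => φ t ^ 2) a b) ≤
        C * ∫ t in a..b, |φ t - k| := by
  obtain ⟨C, hC0, hC⟩ := bl_base hε hfc H M
  obtain ⟨c0, c1, c2, hc⟩ := H.aff
  have hi := bl_bdd_ii hφ hM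
  have hM2 : ∀ t, |φ t ^ 2| ≤ M ^ 2 := fun t => by
    rw [abs_pow]; exact pow_le_pow_left₀ (abs_nonneg _) (hM t) 2
  have hi2 := bl_bdd_ii (hφ.pow_const 2) hM2
  refine ⟨2 * C, by linarith, fun a b hab k => ?_⟩
  have hfi : IntervalIntegrable (fun t => f (φ t)) volume a b := by
    obtain ⟨C', -, hC'⟩ := bl_cont_bdd hfc M
    exact bl_bdd_ii (hfc.measurable.comp hφ) (fun t => hC' _ (hM t)) a b
  set X1 := intAvg φ a b with hX1
  set X2 := intAvg (fun t => φ t ^ 2) a b with hX2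
  set u := blU ε v X1 X2 with hu
  have ai : ∀ k : ℝ, IntervalIntegrable (fun t => |φ t - k|) volume a b := fun k =>
    ((hi a b).sub (by simp)).abs
  have p1 : (∫ t in a..b, f (φ t)) ≤
      ∫ t in a..b, ((c0 u + c1 u * φ t + c2 u * φ t ^ 2) + C * |φ t - X1|) := by
    apply intervalIntegral.integral_mono_on hab.le hfi
    · exact (((by simp : IntervalIntegrable (fun _ => c0 u) volume a b).add
        ((hi a b).const_mul _)).add ((hi2 a b).const_mul _)).add ((ai X1).const_mul C)
    · intro t _
      have := hC X1 X2 (φ t) (hM t) (bl_avg_bdd hM hab) (bl_var_nonneg hab (hi _ _) (hi2 _ _))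
        ((le_abs_self _).trans (bl_avg_bdd hM2 hab))
      rw [← hu, hc] at this
      exact this
  rw [intervalIntegral.integral_add (((by simp : IntervalIntegrable (fun _ => c0 u) volume a b).add
        ((hi a b).const_mul _)).add ((hi2 a b).const_mul _)) ((ai X1).const_mul C),
    intervalIntegral.integral_add ((by simp : IntervalIntegrable (fun _ => c0 u) volume a b).add
        ((hi a b).const_mul _)) ((hi2 a b).const_mul _),
    intervalIntegral.integral_add (by simp) ((hi a b).const_mul _),
    intervalIntegral.integral_const_mul, intervalIntegral.integral_const_mul,
    intervalIntegral.integral_const_mul, intervalIntegral.integral_const, bl_mul_avg hab (φ := φ),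
    bl_mul_avg hab (φ := fun t => φ t ^ 2), ← hX1, ← hX2, smul_eq_mul] at p1
  have p2 : (∫ t in a..b, |φ t - X1|) ≤ 2 * ∫ t in a..b, |φ t - k| := by
    have q1 : (∫ t in a..b, |φ t - X1|) ≤ ∫ t in a..b, (|φ t - k| + |k - X1|) := by
      apply intervalIntegral.integral_mono_on hab.le (ai _) ((ai k).add (by simp))
      intro t _
      exact abs_sub_le _ _ _
    rw [intervalIntegral.integral_add (ai k) (by simp), intervalIntegral.integral_const,
      smul_eq_mul] at q1
    have q2 : (b - a) * |k - X1| ≤ ∫ t in a..b, |φ t - k| := by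
      have : (b - a) * |k - X1| = |∫ t in a..b, (φ t - k)| := by
        rw [intervalIntegral.integral_sub (hi a b) (by simp), bl_mul_avg hab (φ := φ), ← hX1,
          intervalIntegral.integral_const, smul_eq_mul, ← mul_sub, abs_mul,
          abs_of_pos (by linarith : 0 < b - a), abs_sub_comm]
      rw [this]
      exact intervalIntegral.abs_integral_le_integral_abs hab.le
    linarith
  have p3 := mul_le_mul_of_nonneg_left p2 hC0
  unfold blB
  rw [← hu, hc]
  linarith

lemma bl_up1 {ε v κ : ℝ} (hκ : 0 < κ) (hκε : κ ≤ ε) {f : ℝ → ℝ} (hfc : Continuous f)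
    {Λ : ℝ → ℝ → ℝ → ℝ} (H : blDat ε f v Λ) {φ : ℝ → ℝ} (hφ : Measurable φ) {M : ℝ}
    (hM : ∀ t, |φ t| ≤ M)
    (hv : ∀ c d, 0 ≤ c → c < d → d ≤ 1 →
      intAvg (fun t => φ t ^ 2) c d - (intAvg φ c d) ^ 2 ≤ ε ^ 2 - κ ^ 2) :
    (∫ t in (0:ℝ)..1, f (φ t)) ≤ blB ε v Λ (intAvg φ 0 1) (intAvg (fun t => φ t ^ 2) 0 1) := by
  have hε : 0 < ε := by linarith
  obtain ⟨C, hC0, hC⟩ := bl_fin hε hfc H hφ hM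
  have hi := bl_bdd_ii hφ hM
  have hfi : ∀ a b, IntervalIntegrable (fun t => f (φ t)) volume a b := by
    obtain ⟨C', -, hC'⟩ := bl_cont_bdd hfc M
    exact bl_bdd_ii (hfc.measurable.comp hφ) (fun t => hC' _ (hM t))
  set A : ℝ → ℝ → ℝ := fun a b => (∫ t in a..b, f (φ t)) -
        (b - a) * blB ε v Λ (intAvg φ a b) (intAvg (fun t => φ t ^ 2) a b) with hA
  set τ := min (1/2) (κ / ε) with hτ
  have τ0 : 0 < τ := lt_min (by norm_num) (by positivity)
  have τ1 : τ ≤ 1/2 := min_le_left _ _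
  have key : ∀ η > 0, A 0 1 ≤ C * (2 * η) := by
    intro η hη
    have hint : Integrable ((Ioc (0:ℝ) 1).indicator φ) := by
      rw [integrable_indicator_iff measurableSet_Ioc]
      have := hi 0 1
      rwa [intervalIntegrable_iff_integrableOn_Ioc_of_le zero_le_one] at this
    obtain ⟨g, hgs, hg, hgc, hgi⟩ := hint.exists_hasCompactSupport_integral_sub_le hη
    have hgu : UniformContinuous g := hgs.uniformContinuous_of_continuous hgc
    obtain ⟨δ, hδ, hgδ⟩ := Metric.uniformContinuous_iff.1 hgu η hη
    have gi : ∀ a b, IntervalIntegrable (fun t => |φ t - g t|) volume a b := fun a b =>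
      ((hi a b).sub (hgc.intervalIntegrable a b)).abs
    have ind : ∀ n : ℕ, ∀ a b, 0 ≤ a → a < b → b ≤ 1 → (b - a) * (1 - τ) ^ n < δ →
        A a b ≤ C * ((∫ t in a..b, |φ t - g t|) + η * (b - a)) := by
      intro n
      induction n with
      | zero =>
        intro a b ha hab hb hd
        refine (hC a b hab (g a)).trans (mul_le_mul_of_nonneg_left ?_ hC0)
        have : (∫ t in a..b, |φ t - g a|) ≤ ∫ t in a..b, (|φ t - g t| + η) := by
          apply intervalIntegral.integral_mono_on hab.le ((hi a b).sub (by simp)).abs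
            ((gi a b).add (by simp))
          intro t ht
          refine (abs_sub_le _ (g t) _).trans ?_
          have : dist t a < δ := by
            rw [Real.dist_eq, abs_of_nonneg (by linarith [ht.1])]
            simp at hd; linarith [ht.2]
          have := hgδ this
          rw [Real.dist_eq] at this
          linarith
        rw [intervalIntegral.integral_add (gi a b) (by simp), intervalIntegral.integral_const,
          smul_eq_mul] at this
        linarith
      | succ n ih =>
        intro a b ha hab hb hd
        obtain ⟨s, s1, s2, s3, s4, s5⟩ := bl_step hκ hκε hfc H hφ hM hab
          (fun c d h1 h2 h3 => hv c d (ha.trans h1) h2 (h3.trans hb))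
        have hp : 0 ≤ (1 - τ) ^ n := pow_nonneg (by linarith) n
        have i1 := ih a s ha s1 (by linarith) (lt_of_le_of_lt (by
          rw [pow_succ]
          have : s - a ≤ (b - a) * (1 - τ) := by linarith
          nlinarith) hd)
        have i2 := ih s b (by linarith) s2 hb (lt_of_le_of_lt (by
          rw [pow_succ]
          have : b - s ≤ (b - a) * (1 - τ) := by linarith
          nlinarith) hd)
        have e1 := intervalIntegral.integral_add_adjacent_intervals (hfi a s) (hfi s b)
        have e2 := intervalIntegral.integral_add_adjacent_intervals (gi a s) (gi s b)
        rw [← e2]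
        simp only [hA] at i1 i2 ⊢
        rw [← e1]
        linarith
    obtain ⟨n, hn⟩ := exists_pow_lt_of_lt_one hδ (by linarith : 1 - τ < 1)
    have := ind n 0 1 le_rfl one_pos le_rfl (by simpa using hn)
    refine this.trans (mul_le_mul_of_nonneg_left ?_ hC0)
    have h3 : (∫ t in (0:ℝ)..1, |φ t - g t|) ≤ η := by
      refine le_trans ?_ hg
      rw [intervalIntegral.integral_of_le zero_le_one]
      have : (∫ t in Ioc (0:ℝ) 1, |φ t - g t|) =
          ∫ t in Ioc (0:ℝ) 1, ‖(Ioc (0:ℝ) 1).indicator φ t - g t‖ := by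
        apply setIntegral_congr_fun measurableSet_Ioc
        intro t ht
        simp [ht]
      rw [this]
      exact setIntegral_le_integral (hint.sub hgi).norm (Filter.Eventually.of_forall fun _ => norm_nonneg _)
    linarith
  have : A 0 1 ≤ 0 := by
    apply le_of_forall_pos_le_add
    intro e he
    have := key (e / (2 * (C + 1))) (by positivity)
    refine this.trans ?_
    rw [zero_add, mul_comm, ]
    rw [show 2 * (e / (2 * (C + 1))) * C = e * (C / (C + 1)) by field_simp]
    have : C / (C + 1) ≤ 1 := by rw [div_le_one (by linarith)]; linarith
    nlinarith
  simp only [hA] at this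
  linarith
lemma bl_up2 {ε v : ℝ} (hε : 0 < ε) {f : ℝ → ℝ} (hfc : Continuous f)
    {Λ : ℝ → ℝ → ℝ → ℝ} (H : blDat ε f v Λ) {φ : ℝ → ℝ} (hφ : Measurable φ) {M : ℝ}
    (hM : ∀ t, |φ t| ≤ M)
    (hv : ∀ c d, 0 ≤ c → c < d → d ≤ 1 →
      intAvg (fun t => φ t ^ 2) c d - (intAvg φ c d) ^ 2 ≤ ε ^ 2) :
    (∫ t in (0:ℝ)..1, f (φ t)) ≤ blB ε v Λ (intAvg φ 0 1) (intAvg (fun t => φ t ^ 2) 0 1) := by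
  have e1 : ∀ (l c d : ℝ), intAvg (fun t => l * φ t) c d = l * intAvg φ c d := by
    intro l c d; unfold intAvg; rw [intervalIntegral.integral_const_mul]; ring
  have e2 : ∀ (l c d : ℝ), intAvg (fun t => (l * φ t) ^ 2) c d =
      l ^ 2 * intAvg (fun t => φ t ^ 2) c d := by
    intro l c d; unfold intAvg; simp_rw [mul_pow]
    rw [intervalIntegral.integral_const_mul]; ring
  have T1 : Filter.Tendsto (fun l : ℝ => ∫ t in (0:ℝ)..1, f (l * φ t)) (nhdsWithin 1 (Ioo 0 1))
      (nhds (∫ t in (0:ℝ)..1, f (φ t))) := by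
    obtain ⟨C', -, hC'⟩ := bl_cont_bdd hfc M
    apply intervalIntegral.tendsto_integral_filter_of_dominated_convergence (fun _ => C')
    · exact Filter.Eventually.of_forall fun l =>
        (hfc.measurable.comp (hφ.const_mul l)).aestronglyMeasurable
    · filter_upwards [self_mem_nhdsWithin] with l hl
      refine Filter.Eventually.of_forall fun t _ => hC' _ ?_
      rw [abs_mul, abs_of_pos hl.1]
      have := hM t
      have := abs_nonneg (φ t)
      nlinarith [hl.2]
    · simp
    · refine Filter.Eventually.of_forall fun t _ => ?_
      have : Continuous (fun l : ℝ => f (l * φ t)) := by fun_prop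
      have := this.tendsto 1
      rw [one_mul] at this
      exact this.mono_left nhdsWithin_le_nhds
  have T2 : Filter.Tendsto (fun l : ℝ => blB ε v Λ (l * intAvg φ 0 1)
      (l ^ 2 * intAvg (fun t => φ t ^ 2) 0 1)) (nhdsWithin 1 (Ioo 0 1))
      (nhds (blB ε v Λ (intAvg φ 0 1) (intAvg (fun t => φ t ^ 2) 0 1))) := by
    have : Continuous (fun l : ℝ => blB ε v Λ (l * intAvg φ 0 1)
      (l ^ 2 * intAvg (fun t => φ t ^ 2) 0 1)) :=
      (blB_cont H).comp (f := fun l : ℝ => (l * intAvg φ 0 1,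
        l ^ 2 * intAvg (fun t => φ t ^ 2) 0 1)) (by fun_prop)
    have := this.tendsto 1
    rw [one_mul, one_pow, one_mul] at this
    exact this.mono_left nhdsWithin_le_nhds
  have : (nhdsWithin (1:ℝ) (Ioo 0 1)).NeBot := by
    rw [← mem_closure_iff_nhdsWithin_neBot, closure_Ioo (by norm_num)]; simp
  refine le_of_tendsto_of_tendsto T1 T2 ?_
  filter_upwards [self_mem_nhdsWithin] with l hl
  obtain ⟨l0, l1⟩ := hl
  have hl2 : 0 < 1 - l ^ 2 := by nlinarith
  have hs := Real.sq_sqrt hl2.le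
  have hs1 : Real.sqrt (1 - l ^ 2) ≤ 1 := by
    rw [Real.sqrt_le_one]; nlinarith
  have := bl_up1 (κ := ε * Real.sqrt (1 - l ^ 2)) (by positivity) (by nlinarith) hfc H
    (hφ.const_mul l) (M := l * M) (fun t => by
      rw [abs_mul, abs_of_pos l0]; exact mul_le_mul_of_nonneg_left (hM t) l0.le)
    (fun c d h1 h2 h3 => by
      rw [e1, e2, mul_pow ε, hs]
      have := hv c d h1 h2 h3
      nlinarith [sq_nonneg l])
  rwa [e1, e2] at this

lemma bl_trunc {α : Type*} [MeasurableSpace α] {μ : Measure α} [IsFiniteMeasure μ] {f : ℝ → ℝ}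
    (hf : Continuous f) {φ : α → ℝ} (hφ : Measurable φ) (hi : Integrable (fun t => f (φ t)) μ)
    {η : ℝ} (hη : 0 < η) (N0 : ℝ) : ∃ n, N0 ≤ n ∧ Integrable (fun t => f (min (φ t) n)) μ ∧
      (∫ t, f (φ t) ∂μ) ≤ (∫ t, f (min (φ t) n) ∂μ) + η := by
  have ms : ∀ n : ℝ, MeasurableSet {t | n ≤ φ t} := fun n => measurableSet_le measurable_const hφ
  have hF : Filter.Tendsto (fun n : ℝ => μ {t | n ≤ φ t}) Filter.atTop (nhds 0) := by
    have := tendsto_measure_iInter_atTop (μ := μ) (s := fun n : ℝ => {t | n ≤ φ t})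
      (fun n => (ms n).nullMeasurableSet) (fun a b hab t ht => le_trans hab ht)
      ⟨0, measure_ne_top _ _⟩
    have e : (⋂ n : ℝ, {t | n ≤ φ t}) = ∅ := by
      ext t; simp only [mem_iInter, mem_ofPred_eq, mem_empty_iff_false, iff_false, not_forall]
      exact ⟨φ t + 1, by linarith⟩
    rwa [e, measure_empty] at this
  have hFr : Filter.Tendsto (fun n : ℝ => μ.real {t | n ≤ φ t}) Filter.atTop (nhds 0) := by
    have := (ENNReal.tendsto_toReal ENNReal.zero_ne_top).comp hF
    rw [ENNReal.toReal_zero] at this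
    exact this
  have hG : Filter.Tendsto (fun n : ℝ => ∫ t in {t | n ≤ φ t}, |f (φ t)| ∂μ) Filter.atTop (nhds 0) :=
    hi.abs.tendsto_setIntegral_nhds_zero hF
  obtain ⟨N, hN, hN0⟩ := ((hG.eventually_le_const (by positivity : 0 < η / 3)).and
    (Filter.eventually_ge_atTop N0)).exists
  obtain ⟨M, hNM, hM⟩ : ∃ M, N ≤ M ∧ μ.real {t | M ≤ φ t} ≤ μ.real {t | N ≤ φ t} / 2 := by
    rcases eq_or_lt_of_le (measureReal_nonneg (μ := μ) (s := {t | N ≤ φ t})) with h | h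
    · exact ⟨N, le_rfl, by rw [← h]; simp⟩
    · obtain ⟨M, h1, h2⟩ := ((hFr.eventually_le_const (half_pos h)).and
        (Filter.eventually_ge_atTop N)).exists
      exact ⟨M, h2, h1⟩
  obtain ⟨n, ⟨hn1, hn2⟩, hn⟩ := (isCompact_Icc (a := N) (b := M)).exists_isMinOn
    ⟨N, le_rfl, hNM⟩ (hf.abs.continuousOn)
  have ai : Integrable (fun t => |f (φ t)|) μ := hi.abs
  have hdec : (fun t => f (min (φ t) n)) = fun t =>
      {t | n ≤ φ t}.indicator (fun t => f n - f (φ t)) t + f (φ t) := by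
    funext t
    by_cases h : n ≤ φ t
    · simp [h]
    · simp [h, min_eq_left (not_le.1 h).le]
  have ii : Integrable ({t | n ≤ φ t}.indicator (fun t => f n - f (φ t))) μ :=
    ((integrable_const _).sub hi).indicator (ms n)
  refine ⟨n, hN0.trans hn1, ?_, ?_⟩
  · rw [hdec]; exact ii.add hi
  · rw [hdec, integral_add ii hi, integral_indicator (ms n)]
    have b1 : -(∫ t in {t | n ≤ φ t}, (f n - f (φ t)) ∂μ) ≤
        ∫ t in {t | n ≤ φ t}, (|f n| + |f (φ t)|) ∂μ := by
      rw [← integral_neg]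
      apply integral_mono
      · exact ((integrable_const _).sub hi).neg.integrableOn
      · exact ((integrable_const _).add ai).integrableOn
      · intro t
        have := neg_abs_le (f n)
        have := le_abs_self (f (φ t))
        simp only; linarith
    rw [integral_add (integrable_const _) ai.integrableOn, setIntegral_const, smul_eq_mul] at b1
    have b2 : (∫ t in {t | n ≤ φ t}, |f (φ t)| ∂μ) ≤ η / 3 := by
      refine le_trans (setIntegral_mono_set ai.integrableOn
        (Filter.Eventually.of_forall fun _ => abs_nonneg _) ?_) hN
      exact Filter.Eventually.of_forall fun t (ht : n ≤ φ t) => (hn1.trans ht : N ≤ φ t)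
    have b3 : μ.real {t | n ≤ φ t} ≤ μ.real {t | N ≤ φ t} :=
      measureReal_mono (fun t (ht : n ≤ φ t) => (hn1.trans ht : N ≤ φ t))
    have b4 : μ.real ({t | N ≤ φ t} \ {t | M ≤ φ t}) = μ.real {t | N ≤ φ t} - μ.real {t | M ≤ φ t} :=
      measureReal_sdiff (fun t (ht : M ≤ φ t) => (hNM.trans ht : N ≤ φ t)) (ms M)
    have b5 : μ.real ({t | N ≤ φ t} \ {t | M ≤ φ t}) * |f n| ≤ η / 3 := by
      have c1 : (∫ t in {t | N ≤ φ t} \ {t | M ≤ φ t}, |f n| ∂μ) ≤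
          ∫ t in {t | N ≤ φ t} \ {t | M ≤ φ t}, |f (φ t)| ∂μ := by
        apply setIntegral_mono_on (integrable_const _).integrableOn ai.integrableOn
          ((ms N).diff (ms M))
        intro t ht
        exact hn ⟨ht.1, (not_le.1 ht.2).le⟩
      rw [setIntegral_const, smul_eq_mul] at c1
      refine c1.trans (le_trans (setIntegral_mono_set ai.integrableOn
        (Filter.Eventually.of_forall fun _ => abs_nonneg _) ?_) hN)
      exact Filter.Eventually.of_forall fun t ht => ht.1
    have := abs_nonneg (f n)
    rw [b4] at b5
    have b6 : μ.real {t | n ≤ φ t} * |f n| ≤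
      (2 * (μ.real {t | N ≤ φ t} - μ.real {t | M ≤ φ t})) * |f n| :=
      mul_le_mul_of_nonneg_right (by linarith) this
    linarith

lemma bl_ii {φ : ℝ → ℝ} (h : IntegrableOn φ (Ioo 0 1)) {c d : ℝ} (hc : 0 ≤ c) (hcd : c ≤ d)
    (hd : d ≤ 1) : IntervalIntegrable φ volume c d := by
  rw [intervalIntegrable_iff_integrableOn_Ioo_of_le hcd]
  exact h.mono_set (Ioo_subset_Ioo hc hd)

lemma bl_avg_eq (φ : ℝ → ℝ) : intAvg φ 0 1 = ∫ t in Ioo (0:ℝ) 1, φ t := by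
  unfold intAvg
  rw [intervalIntegral.integral_of_le zero_le_one, integral_Ioc_eq_integral_Ioo]; simp

lemma bl_clip {ε : ℝ} {φ : ℝ → ℝ} (h : memBMOe ε 0 1 φ) {T : ℝ → ℝ}
    (hT : ∀ a b, |T a - T b| ≤ |a - b|) (hTc : Continuous T) :
    memBMOe ε 0 1 (fun t => T (φ t)) := by
  obtain ⟨h1, h2, h3⟩ := h
  have m1 : AEStronglyMeasurable (fun t => T (φ t)) (volume.restrict (Ioo 0 1)) :=
    hTc.comp_aestronglyMeasurable h1.aestronglyMeasurable
  have i1 : IntegrableOn (fun t => T (φ t)) (Ioo 0 1) := by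
    refine Integrable.mono' (h1.abs.add (integrable_const |T 0|)) m1
      (Filter.Eventually.of_forall fun t => ?_)
    have := hT (φ t) 0
    have h4 := abs_sub_abs_le_abs_sub (T (φ t)) (T 0)
    simp only [sub_zero] at this
    simp only [Real.norm_eq_abs, Pi.add_apply]
    linarith
  have i2 : IntegrableOn (fun t => T (φ t) ^ 2) (Ioo 0 1) := by
    refine Integrable.mono' ((h2.const_mul 2).add (integrable_const (2 * T 0 ^ 2))) (m1.pow 2)
      (Filter.Eventually.of_forall fun t => ?_)
    have := sq_le_sq.2 (hT (φ t) 0)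
    simp only [Real.norm_eq_abs, Pi.add_apply, abs_pow, sq_abs]
    nlinarith [sq_nonneg (T (φ t) - 2 * T 0)]
  refine ⟨i1, i2, fun c d hc hcd hd => le_trans ?_ (h3 c d hc hcd hd)⟩
  set k := intAvg φ c d
  have a1 := bl_avg_sq hcd (bl_ii h1 hc hcd.le hd) (bl_ii h2 hc hcd.le hd) k
  have a2 := bl_avg_sq hcd (bl_ii i1 hc hcd.le hd) (bl_ii i2 hc hcd.le hd) (T k)
  have a3 : intAvg (fun t => (T (φ t) - T k) ^ 2) c d ≤ intAvg (fun t => (φ t - k) ^ 2) c d := by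
    unfold intAvg
    apply div_le_div_of_nonneg_right _ (by linarith)
    have q : ∀ {g : ℝ → ℝ} (k : ℝ), IntegrableOn g (Ioo 0 1) → IntegrableOn (fun t => g t ^ 2) (Ioo 0 1) →
        IntegrableOn (fun t => (g t - k) ^ 2) (Ioo 0 1) := by
      intro g k g1 g2
      have e : (fun t => (g t - k) ^ 2) = fun t => (g t ^ 2 - 2 * k * g t) + k ^ 2 := by
        funext t; ring
      rw [e]
      exact (g2.sub (g1.const_mul _)).add (integrable_const _)
    apply intervalIntegral.integral_mono_on hcd.le (bl_ii (q _ i1 i2) hc hcd.le hd)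
      (bl_ii (q _ h1 h2) hc hcd.le hd)
    intro t _
    exact sq_le_sq.2 (hT _ _)
  change intAvg (fun t => T (φ t) ^ 2) c d - intAvg (fun t => T (φ t)) c d ^ 2 ≤ _
  nlinarith [sq_nonneg (intAvg (fun t => T (φ t)) c d - T k)]

lemma bl_truncB {ε : ℝ} {f : ℝ → ℝ} (hf : Continuous f) {G : ℝ × ℝ → ℝ} (hG : Continuous G)
    {φ : ℝ → ℝ} (hφ : Measurable φ) (hb : memBMOe ε 0 1 φ)
    (hi : IntegrableOn (fun t => f (φ t)) (Ioo 0 1))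
    (hyp : ∀ n : ℝ, 0 ≤ n → memBMOe ε 0 1 (fun t => min (φ t) n) →
      IntegrableOn (fun t => f (min (φ t) n)) (Ioo 0 1) →
      intAvg (fun t => f (min (φ t) n)) 0 1 ≤
        G (intAvg (fun t => min (φ t) n) 0 1, intAvg (fun t => min (φ t) n ^ 2) 0 1)) :
    intAvg (fun t => f (φ t)) 0 1 ≤ G (intAvg φ 0 1, intAvg (fun t => φ t ^ 2) 0 1) := by
  have habs : ∀ a n : ℝ, 0 ≤ n → |min a n| ≤ |a| := by
    intro a n hn
    rcases le_total a n with h | h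
    · rw [min_eq_left h]
    · rw [min_eq_right h, abs_of_nonneg hn]; exact h.trans (le_abs_self a)
  have hev : ∀ a : ℝ, ∀ᶠ n : ℝ in Filter.atTop, min a n = a := by
    intro a; filter_upwards [Filter.eventually_ge_atTop a] with n hn using min_eq_left hn
  have T1 : Filter.Tendsto (fun n : ℝ => intAvg (fun t => min (φ t) n) 0 1) Filter.atTop
      (nhds (intAvg φ 0 1)) := by
    simp_rw [bl_avg_eq]
    apply tendsto_integral_filter_of_dominated_convergence (fun t => |φ t|)
    · exact Filter.Eventually.of_forall fun n => (hφ.min measurable_const).aestronglyMeasurable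
    · filter_upwards [Filter.eventually_ge_atTop 0] with n hn
      exact Filter.Eventually.of_forall fun t => habs _ _ hn
    · exact hb.1.abs
    · exact Filter.Eventually.of_forall fun t => tendsto_const_nhds.congr'
        ((hev (φ t)).mono fun n hn => hn.symm)
  have T2 : Filter.Tendsto (fun n : ℝ => intAvg (fun t => min (φ t) n ^ 2) 0 1) Filter.atTop
      (nhds (intAvg (fun t => φ t ^ 2) 0 1)) := by
    simp_rw [bl_avg_eq]
    apply tendsto_integral_filter_of_dominated_convergence (fun t => φ t ^ 2)
    · exact Filter.Eventually.of_forall fun n =>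
        ((hφ.min measurable_const).pow_const 2).aestronglyMeasurable
    · filter_upwards [Filter.eventually_ge_atTop 0] with n hn
      refine Filter.Eventually.of_forall fun t => ?_
      rw [Real.norm_eq_abs, abs_pow, sq_abs]
      exact sq_le_sq.2 (habs _ _ hn)
    · exact hb.2.1
    · exact Filter.Eventually.of_forall fun t => tendsto_const_nhds.congr'
        ((hev (φ t)).mono fun n hn => by simp only; rw [hn])
  have T3 := (hG.tendsto _).comp (T1.prodMk_nhds T2)
  apply le_of_forall_pos_le_add
  intro e he
  have he2 := half_pos he
  obtain ⟨N, hN⟩ := Filter.eventually_atTop.1 (T3.eventually_le_const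
    (lt_add_of_pos_right _ he2))
  obtain ⟨n, hn1, hn2, hn3⟩ := bl_trunc hf hφ hi he2 (max N 0)
  have A := hyp n ((le_max_right _ _).trans hn1)
    (bl_clip hb (T := fun s => min s n) (fun a b => abs_inf_sub_inf_le_abs a b n)
      (continuous_id.min continuous_const)) hn2
  have B := hN n ((le_max_left _ _).trans hn1)
  simp only [Function.comp] at B
  rw [← bl_avg_eq, ← bl_avg_eq (fun t => f (min (φ t) n))] at hn3
  linarith

lemma bl_neg_bmo {ε : ℝ} {φ : ℝ → ℝ} (h : memBMOe ε 0 1 φ) : memBMOe ε 0 1 (fun t => -φ t) :=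
  bl_clip h (T := fun s => -s) (fun a b => by rw [← abs_neg]; simp [add_comm, sub_eq_add_neg]) continuous_neg

lemma bl_up3 {ε v : ℝ} (hε : 0 < ε) {f : ℝ → ℝ} (hfc : Continuous f)
    {Λ : ℝ → ℝ → ℝ → ℝ} (H : blDat ε f v Λ) {φ : ℝ → ℝ} (hφ : Measurable φ)
    (hb : memBMOe ε 0 1 φ) (hi : IntegrableOn (fun t => f (φ t)) (Ioo 0 1)) :
    intAvg (fun t => f (φ t)) 0 1 ≤
      blB ε v Λ (intAvg φ 0 1) (intAvg (fun t => φ t ^ 2) 0 1) := by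
  have hG := blB_cont H
  refine bl_truncB hfc hG hφ hb hi ?_
  intro n hn hb1 hi1
  have hG' : Continuous (fun p : ℝ × ℝ => blB ε v Λ (-p.1) p.2) :=
    hG.comp (f := fun p : ℝ × ℝ => (-p.1, p.2)) (by fun_prop)
  have hneg : ∀ g : ℝ → ℝ, intAvg (fun t => -g t) 0 1 = -intAvg g 0 1 := by
    intro g; unfold intAvg; rw [intervalIntegral.integral_neg]; ring
  have mφ : Measurable (fun t => min (φ t) n) := hφ.min measurable_const
  have := bl_truncB (f := fun s => f (-s)) (hfc.comp continuous_neg) hG'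
    (φ := fun t => - min (φ t) n) mφ.neg (bl_neg_bmo hb1) (by simpa using hi1) ?_
  · simpa [hneg] using this
  · intro m hm hb2 hi2
    have hb3 := bl_neg_bmo hb2
    have := bl_up2 hε hfc H (φ := fun t => - min (-min (φ t) n) m) (mφ.neg.min measurable_const).neg
      (M := max n m) (fun t => by
        rw [abs_neg, abs_le]
        constructor
        · apply le_min
          · have := min_le_right (φ t) n
            have := le_max_left n m
            linarith
          · have := le_max_left n m; linarith
        · exact (min_le_right _ _).trans (le_max_right _ _)) hb3.2.2
    rw [hneg] at this
    simp only [neg_sq] at this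
    simpa [intAvg] using this

lemma bl_up {ε v : ℝ} (hε : 0 < ε) {f : ℝ → ℝ} (hfc : Continuous f)
    {Λ : ℝ → ℝ → ℝ → ℝ} (H : blDat ε f v Λ) {φ : ℝ → ℝ}
    (hb : memBMOe ε 0 1 φ) (hi : IntegrableOn (fun t => f (φ t)) (Ioo 0 1)) :
    intAvg (fun t => f (φ t)) 0 1 ≤
      blB ε v Λ (intAvg φ 0 1) (intAvg (fun t => φ t ^ 2) 0 1) := by
  obtain ⟨ψ, hψ, he⟩ := hb.1.aestronglyMeasurable.aemeasurable
  have cong : ∀ (g : ℝ → ℝ) c d, 0 ≤ c → c < d → d ≤ 1 →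
      intAvg (fun t => g (φ t)) c d = intAvg (fun t => g (ψ t)) c d := by
    intro g c d hc hcd hd
    unfold intAvg
    congr 1
    rw [intervalIntegral.integral_of_le hcd.le, intervalIntegral.integral_of_le hcd.le,
      integral_Ioc_eq_integral_Ioo, integral_Ioc_eq_integral_Ioo]
    apply integral_congr_ae
    have : φ =ᵐ[volume.restrict (Ioo c d)] ψ :=
      ae_restrict_of_ae_restrict_of_subset (Ioo_subset_Ioo hc hd) he
    filter_upwards [this] with t ht
    rw [ht]
  have c0 := fun c d hc hcd hd => cong (fun s => s) c d hc hcd hd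
  have c2 := fun c d hc hcd hd => cong (fun s => s ^ 2) c d hc hcd hd
  have hbψ : memBMOe ε 0 1 ψ := by
    refine ⟨hb.1.congr he, hb.2.1.congr ?_, fun c d h1 h2 h3 => ?_⟩
    · filter_upwards [he] with t ht; rw [ht]
    · have := hb.2.2 c d h1 h2 h3
      rw [c2 c d h1 h2 h3] at this
      change _ - intAvg (fun t => φ t) c d ^ 2 ≤ _ at this
      rwa [c0 c d h1 h2 h3] at this
  have := bl_up3 hε hfc H hψ hbψ (hi.congr (by filter_upwards [he] with t ht; rw [ht]))
  rw [cong f 0 1 le_rfl one_pos le_rfl, c2 0 1 le_rfl one_pos le_rfl]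
  change _ ≤ blB ε v Λ (intAvg (fun t => φ t) 0 1) _
  rw [c0 0 1 le_rfl one_pos le_rfl]
  exact this
noncomputable def blL1 (q t : ℝ) : ℝ := if t ≤ q then t * (Real.log (t / q) - 1) else -q
noncomputable def blL2 (q t : ℝ) : ℝ :=
  if t ≤ q then t * (Real.log (t / q) ^ 2 - 2 * Real.log (t / q) + 2) else 2 * q

lemma blL_le {q t : ℝ} (h : t ≤ q) : blL1 q t = t * (Real.log (t / q) - 1) ∧
    blL2 q t = t * (Real.log (t / q) ^ 2 - 2 * Real.log (t / q) + 2) := by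
  unfold blL1 blL2; simp [h]

lemma blL_ge {q t : ℝ} (hq : 0 ≤ q) (h : q ≤ t) : blL1 q t = -q ∧ blL2 q t = 2 * q := by
  rcases eq_or_lt_of_le h with rfl | h
  · obtain ⟨a, b⟩ := blL_le (le_refl q)
    rw [a, b]
    rcases eq_or_lt_of_le hq with rfl | hq
    · simp
    · rw [div_self hq.ne']; simp; ring
  · unfold blL1 blL2; simp [not_le.2 h]

lemma bl_log_np {q t : ℝ} (hq : 0 ≤ q) (ht : 0 ≤ t) (h : t ≤ q) : Real.log (t / q) ≤ 0 :=
  Real.log_nonpos (div_nonneg ht hq) (div_le_one_of_le₀ h hq)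

noncomputable def blQ (p q c d : ℝ) : ℝ :=
  (d - c) ^ 2 + (blL1 q d - blL1 q c - (blL1 p (1 - c) - blL1 p (1 - d))) ^ 2 -
    (d - c) * (blL2 q d - blL2 q c + (blL2 p (1 - c) - blL2 p (1 - d)))

lemma blQ_mir (p q c d : ℝ) : blQ p q c d = blQ q p (1 - d) (1 - c) := by
  unfold blQ
  have h1 : 1 - (1 - d) = d := by ring
  have h2 : 1 - (1 - c) = c := by ring
  rw [h1, h2]; ring

lemma blQ_left {p q c d : ℝ} (hp : 0 ≤ p) (hq : 0 ≤ q) (hpq : p + q ≤ 1)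
    (hc : 0 ≤ c) (hcd : c ≤ d) (hcq : c ≤ q) (hdp : d ≤ 1 - p) : 0 ≤ blQ p q c d := by
  unfold blQ
  obtain ⟨a1, a2⟩ := blL_ge hp (by linarith : p ≤ 1 - c)
  obtain ⟨b1, b2⟩ := blL_ge hp (by linarith : p ≤ 1 - d)
  obtain ⟨e1, e2⟩ := blL_le hcq
  rw [a1, a2, b1, b2, e1, e2]
  rcases le_total d q with h | h
  · obtain ⟨g1, g2⟩ := blL_le h
    rw [g1, g2]
    have : 0 ≤ c * d * (Real.log (c / q) - Real.log (d / q)) ^ 2 := by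
      have : 0 ≤ d := hc.trans hcd
      positivity
    exact le_of_le_of_eq this (by ring)
  · obtain ⟨g1, g2⟩ := blL_ge hq h
    rw [g1, g2]
    have hs := bl_log_np hq hc hcq
    generalize Real.log (c / q) = s at hs
    have : 0 ≤ (d - q) ^ 2 + c * (q * s ^ 2 + (d - q) * (s ^ 2 - 2 * s)) := by
      have h1 : 0 ≤ s ^ 2 - 2 * s := by nlinarith
      have h2 : 0 ≤ d - q := by linarith
      positivity
    exact le_of_le_of_eq this (by ring)

lemma blQ_nonneg {p q c d : ℝ} (hp : 0 ≤ p) (hq : 0 ≤ q) (hpq : p + q ≤ 1)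
    (hF : 0 ≤ (p - q) ^ 2 - 2 * (p + q) + 1)
    (hc : 0 ≤ c) (hcd : c ≤ d) (hd : d ≤ 1) : 0 ≤ blQ p q c d := by
  rcases le_total d (1 - p) with hdp | hdp
  · rcases le_total c q with hcq | hcq
    · exact blQ_left hp hq hpq hc hcd hcq hdp
    · unfold blQ
      obtain ⟨a1, a2⟩ := blL_ge hp (by linarith : p ≤ 1 - c)
      obtain ⟨b1, b2⟩ := blL_ge hp (by linarith : p ≤ 1 - d)
      obtain ⟨e1, e2⟩ := blL_ge hq hcq
      obtain ⟨g1, g2⟩ := blL_ge hq (hcq.trans hcd)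
      rw [a1, a2, b1, b2, e1, e2, g1, g2]
      nlinarith [sq_nonneg (d - c)]
  · rcases le_total q c with hcq | hcq
    · rw [blQ_mir]
      exact blQ_left hq hp (by linarith) (by linarith) (by linarith) (by linarith) (by linarith)
    · unfold blQ
      obtain ⟨a1, a2⟩ := blL_ge hp (by linarith : p ≤ 1 - c)
      obtain ⟨b1, b2⟩ := blL_le (by linarith : 1 - d ≤ p)
      obtain ⟨e1, e2⟩ := blL_le hcq
      obtain ⟨g1, g2⟩ := blL_ge hq (by linarith : q ≤ d)
      rw [a1, a2, b1, b2, e1, e2, g1, g2]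
      have hs := bl_log_np hq hc hcq
      have hs' := bl_log_np hp (by linarith : 0 ≤ 1 - d) (by linarith : 1 - d ≤ p)
      generalize Real.log (c / q) = s at hs
      set s' := -Real.log ((1 - d) / p) with hs'd
      have hl : Real.log ((1 - d) / p) = - s' := by rw [hs'd]; ring
      have s'0 : 0 ≤ s' := by linarith
      have key : (1 - d) * (2 - s + s') ^ 2 ≤ p * (2 - s) ^ 2 := by
        rcases eq_or_lt_of_le hd with rfl | hd1
        · simp; positivity
        · have hp0 : 0 < p := by linarith
          have h1 : (1 - d) * Real.exp s' = p := by
            rw [hs'd, Real.exp_neg, Real.exp_log (div_pos (by linarith) hp0)]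
            have : 1 - d ≠ 0 := by linarith
            field_simp
          have h2 : 2 - s + s' ≤ (2 - s) * Real.exp (s' / 2) := by
            have := Real.add_one_le_exp (s' / 2)
            nlinarith
          have h3 : (2 - s + s') ^ 2 ≤ ((2 - s) * Real.exp (s' / 2)) ^ 2 :=
            pow_le_pow_left₀ (by linarith) h2 2
          have h4 : Real.exp (s' / 2) ^ 2 = Real.exp s' := by
            rw [← Real.exp_nat_mul]; congr 1; push_cast; ring
          rw [mul_pow, h4] at h3
          have := mul_le_mul_of_nonneg_left h3 (by linarith : 0 ≤ 1 - d)
          rw [← h1]; linarith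
      rw [hl]
      have t1 := mul_le_mul_of_nonneg_left key hc
      have hh : 0 ≤ 1 - p - q := by linarith
      have t2 : 0 ≤ c * (q * s ^ 2 + (1 - p - q) * (s ^ 2 - 2 * s)) := by
        have : 0 ≤ s ^ 2 - 2 * s := by nlinarith
        positivity
      have t3 : 0 ≤ (1 - d) * (p * s' ^ 2 + q * (s' + 2) ^ 2 + (1 - p - q) * (s' ^ 2 + 2 * s')) := by
        have : 0 ≤ 1 - d := by linarith
        positivity
      linarith

noncomputable def bllam (q t : ℝ) : ℝ := if t ≤ q then Real.log (t / q) else 0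

lemma bl_log_int {q c d : ℝ} (hq : 0 < q) (hc : 0 ≤ c) (hcd : c ≤ d) :
    (IntervalIntegrable (fun t => Real.log (t / q)) volume c d ∧
    (∫ t in c..d, Real.log (t / q)) = d * (Real.log (d / q) - 1) - c * (Real.log (c / q) - 1)) ∧
    (IntervalIntegrable (fun t => Real.log (t / q) ^ 2) volume c d ∧
    (∫ t in c..d, Real.log (t / q) ^ 2) =
      d * (Real.log (d / q) ^ 2 - 2 * Real.log (d / q) + 2) -
      c * (Real.log (c / q) ^ 2 - 2 * Real.log (c / q) + 2)) := by
  have C1 : Continuous (fun t => t * (Real.log (t / q) - 1)) := by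
    have : Continuous (fun t => q * ((t / q) * Real.log (t / q)) - t) :=
      ((Real.continuous_mul_log.comp (continuous_id.div_const q)).const_mul q).sub continuous_id
    refine this.congr fun t => ?_
    field_simp
  have C2 : ContinuousOn (fun t => t * (Real.log (t / q) ^ 2 - 2 * Real.log (t / q) + 2)) (Icc c d) := by
    have h1 : Continuous (fun t => 4 * q * (Real.sqrt (t / q) * Real.log (Real.sqrt (t / q))) ^ 2) :=
      ((Real.continuous_mul_log.comp (continuous_id.div_const q).sqrt).pow 2).const_mul _
    have : Continuous (fun t => 4 * q * (Real.sqrt (t / q) * Real.log (Real.sqrt (t / q))) ^ 2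
        - 2 * (t * (Real.log (t / q) - 1))) := h1.sub (C1.const_mul 2)
    refine this.continuousOn.congr fun t ht => ?_
    have ht0 : 0 ≤ t / q := div_nonneg (hc.trans ht.1) hq.le
    simp only
    rw [mul_pow, Real.sq_sqrt ht0, Real.log_sqrt ht0]
    field_simp
    ring
  have D0 : ∀ t ∈ Ioo c d, HasDerivAt (fun t => Real.log (t / q)) (1 / t) t := by
    intro t ht
    have t0 : 0 < t := lt_of_le_of_lt hc ht.1
    have := (((hasDerivAt_id' t).div_const q).log (by positivity))
    refine this.congr_deriv ?_
    field_simp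
  have D1 : ∀ t ∈ Ioo c d, HasDerivAt (fun t => t * (Real.log (t / q) - 1)) (Real.log (t / q)) t := by
    intro t ht
    have t0 : 0 < t := lt_of_le_of_lt hc ht.1
    have := (hasDerivAt_id' t).mul ((D0 t ht).sub_const 1)
    refine this.congr_deriv ?_
    field_simp; ring
  have D2 : ∀ t ∈ Ioo c d, HasDerivAt
      (fun t => t * (Real.log (t / q) ^ 2 - 2 * Real.log (t / q) + 2)) (Real.log (t / q) ^ 2) t := by
    intro t ht
    have t0 : 0 < t := lt_of_le_of_lt hc ht.1
    have := (hasDerivAt_id' t).mul ((((D0 t ht).pow 2).sub ((D0 t ht).const_mul 2)).add_const 2)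
    refine this.congr_deriv ?_
    simp only [Pi.sub_apply, Pi.pow_apply]
    field_simp; ring
  have I2 : IntervalIntegrable (fun t => Real.log (t / q) ^ 2) volume c d := by
    rw [intervalIntegrable_iff_integrableOn_Ioc_of_le hcd]
    exact intervalIntegral.integrableOn_deriv_of_nonneg C2 D2 (fun t _ => sq_nonneg _)
  have I1 : IntervalIntegrable (fun t => Real.log (t / q)) volume c d := by
    rw [intervalIntegrable_iff_integrableOn_Ioc_of_le hcd] at I2 ⊢
    refine Integrable.mono' (I2.add (integrableOn_const (C := (1:ℝ)) (by simp)))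
      (Real.measurable_log.comp (measurable_id.div_const q)).aestronglyMeasurable
      (Filter.Eventually.of_forall fun t => ?_)
    simp only [Pi.add_apply, Real.norm_eq_abs]
    rw [← sq_abs]
    nlinarith [sq_nonneg (|Real.log (t / q)| - 1)]
  exact ⟨⟨I1, intervalIntegral.integral_eq_sub_of_hasDerivAt_of_le hcd C1.continuousOn D1 I1⟩,
    ⟨I2, intervalIntegral.integral_eq_sub_of_hasDerivAt_of_le hcd C2 D2 I2⟩⟩

lemma bllam_int {q c d : ℝ} (hq : 0 ≤ q) (hc : 0 ≤ c) (hcd : c ≤ d) :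
    (IntervalIntegrable (bllam q) volume c d ∧
    (∫ t in c..d, bllam q t) = blL1 q d - blL1 q c) ∧
    (IntervalIntegrable (fun t => bllam q t ^ 2) volume c d ∧
    (∫ t in c..d, bllam q t ^ 2) = blL2 q d - blL2 q c) := by
  have hlow : ∀ c d, 0 ≤ c → c ≤ d → d ≤ q → 
      (IntervalIntegrable (bllam q) volume c d ∧
      (∫ t in c..d, bllam q t) = blL1 q d - blL1 q c) ∧
      (IntervalIntegrable (fun t => bllam q t ^ 2) volume c d ∧
      (∫ t in c..d, bllam q t ^ 2) = blL2 q d - blL2 q c) := by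
    intro c d hc hcd hdq
    rcases eq_or_lt_of_le hq with rfl | hq0
    · have h1 : d = 0 := by linarith
      have h2 : c = 0 := by linarith
      subst h1 h2; simp
    have e : ∀ t ∈ uIoc c d, Real.log (t / q) = bllam q t := by
      intro t ht
      rw [uIoc_of_le hcd] at ht
      unfold bllam; rw [if_pos (ht.2.trans hdq)]
    have e2 : ∀ t ∈ uIoc c d, Real.log (t / q) ^ 2 = bllam q t ^ 2 := fun t ht => by rw [e t ht]
    obtain ⟨⟨i1, j1⟩, i2, j2⟩ := bl_log_int hq0 hc hcd
    obtain ⟨a1, a2⟩ := blL_le hdq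
    obtain ⟨b1, b2⟩ := blL_le (hcd.trans hdq)
    rw [a1, a2, b1, b2, ← j1, ← j2]
    exact ⟨⟨i1.congr e, (intervalIntegral.integral_congr_ae
        (Filter.Eventually.of_forall e)).symm⟩, ⟨i2.congr e2, (intervalIntegral.integral_congr_ae
        (Filter.Eventually.of_forall e2)).symm⟩⟩
  have hhigh : ∀ c d, q ≤ c → c ≤ d →
      (IntervalIntegrable (bllam q) volume c d ∧
      (∫ t in c..d, bllam q t) = blL1 q d - blL1 q c) ∧
      (IntervalIntegrable (fun t => bllam q t ^ 2) volume c d ∧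
      (∫ t in c..d, bllam q t ^ 2) = blL2 q d - blL2 q c) := by
    intro c d hqc hcd
    have e : ∀ t ∈ uIoc c d, 0 = bllam q t := by
      intro t ht
      rw [uIoc_of_le hcd] at ht
      unfold bllam; rw [if_neg (not_le.2 (lt_of_le_of_lt hqc ht.1))]
    have e2 : ∀ t ∈ uIoc c d, 0 = bllam q t ^ 2 := fun t ht => by rw [← e t ht]; simp
    obtain ⟨a1, a2⟩ := blL_ge hq (hqc.trans hcd)
    obtain ⟨b1, b2⟩ := blL_ge hq hqc
    rw [a1, a2, b1, b2]
    have i0 : IntervalIntegrable (fun _ => (0:ℝ)) volume c d := by simp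
    refine ⟨⟨i0.congr e, ?_⟩, ⟨i0.congr e2, ?_⟩⟩
    · rw [← intervalIntegral.integral_congr_ae (Filter.Eventually.of_forall e)]; simp
    · rw [← intervalIntegral.integral_congr_ae (Filter.Eventually.of_forall e2)]; simp
  rcases le_total d q with h | h
  · exact hlow c d hc hcd h
  rcases le_total q c with h' | h'
  · exact hhigh c d h' hcd
  obtain ⟨⟨i1, j1⟩, i2, j2⟩ := hlow c q hc h' le_rfl
  obtain ⟨⟨k1, l1⟩, k2, l2⟩ := hhigh q d le_rfl h
  refine ⟨⟨i1.trans k1, ?_⟩, ⟨i2.trans k2, ?_⟩⟩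
  · rw [← intervalIntegral.integral_add_adjacent_intervals i1 k1, j1, l1]; ring
  · rw [← intervalIntegral.integral_add_adjacent_intervals i2 k2, j2, l2]; ring
lemma bl_fint {ε ε₀ : ℝ} (hε : 0 < ε) (hεε₀ : ε < ε₀) {f f3 : ℝ → ℝ} (hf : memWcl ε₀ f f3)
    (u : ℝ) {q : ℝ} (hq : 0 ≤ q) (hq1 : q ≤ 1) :
    IntervalIntegrable (fun t => f (u + ε * bllam q t)) volume 0 1 ∧
    (∫ t in (0:ℝ)..1, f (u + ε * bllam q t)) = f u - ε * q * mRinf ε f u := by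
  obtain ⟨-, -, R3, R4⟩ := bl_Rpack hε hεε₀ hf
  have hlow : IntervalIntegrable (fun t => f (u + ε * bllam q t)) volume 0 q ∧
      (∫ t in (0:ℝ)..q, f (u + ε * bllam q t)) = q * (f u - ε * mRinf ε f u) := by
    rcases eq_or_lt_of_le hq with rfl | hq0
    · simp
    set T : ℝ → ℝ := fun s => q * Real.exp ((s - u) / ε) with hT
    set T' : ℝ → ℝ := fun s => q * (Real.exp ((s - u) / ε) * (1 / ε)) with hT'
    have hd : ∀ s ∈ Iic u, HasDerivWithinAt T (T' s) (Iic u) s := by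
      intro s _
      exact ((((hasDerivAt_id' s).sub_const u).div_const ε).exp.const_mul q).hasDerivWithinAt
    have hinj : InjOn T (Iic u) := by
      intro a _ b _ hab
      simp only [hT] at hab
      have := Real.exp_injective (mul_left_cancel₀ hq0.ne' hab)
      have := (div_left_inj' hε.ne').1 this
      linarith
    have him : T '' Iic u = Ioc 0 q := by
      ext t
      constructor
      · rintro ⟨s, hs, rfl⟩
        refine ⟨by positivity, ?_⟩
        have : Real.exp ((s - u) / ε) ≤ 1 := by
          rw [Real.exp_le_one_iff]
          exact div_nonpos_of_nonpos_of_nonneg (by linarith [mem_Iic.1 hs]) hε.le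
        simp only [hT]; nlinarith
      · rintro ⟨h1, h2⟩
        refine ⟨u + ε * Real.log (t / q), ?_, ?_⟩
        · have := bl_log_np hq h1.le h2
          simp only [mem_Iic]; nlinarith
        · simp only [hT]
          rw [add_sub_cancel_left, mul_div_cancel_left₀ _ hε.ne', Real.exp_log (by positivity)]
          field_simp
    have hpt : ∀ s ∈ Iic u, |T' s| • f (u + ε * bllam q (T s)) =
        (q / ε * Real.exp (-u / ε)) * (f s * Real.exp (s / ε)) := by
      intro s hs
      have h1 : T s ∈ Ioc 0 q := by rw [← him]; exact ⟨s, hs, rfl⟩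
      have h2 : bllam q (T s) = (s - u) / ε := by
        unfold bllam
        rw [if_pos h1.2]
        simp only [hT]
        rw [mul_div_cancel_left₀ _ hq0.ne', Real.log_exp]
      have h3 : 0 ≤ T' s := by positivity
      rw [h2, abs_of_nonneg h3, smul_eq_mul]
      have h4 : u + ε * ((s - u) / ε) = s := by field_simp; ring
      have h5 : Real.exp ((s - u) / ε) = Real.exp (-u / ε) * Real.exp (s / ε) := by
        rw [← Real.exp_add]; congr 1; ring
      rw [h4]; simp only [hT']; rw [h5]; ring
    constructor
    · rw [intervalIntegrable_iff_integrableOn_Ioc_of_le hq, ← him,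
        integrableOn_image_iff_integrableOn_abs_deriv_smul measurableSet_Iic hd hinj]
      exact (integrableOn_congr_fun hpt measurableSet_Iic).2 ((R3 u).const_mul _)
    · rw [intervalIntegral.integral_of_le hq, ← him,
        integral_image_eq_integral_abs_deriv_smul measurableSet_Iic hd hinj,
        setIntegral_congr_fun measurableSet_Iic hpt, integral_const_mul, R4]
      have : Real.exp (-u / ε) * Real.exp (u / ε) = 1 := by
        rw [← Real.exp_add]; simp [neg_div]
      rw [neg_div] at this
      field_simp
      linear_combination (f u - ε * mRinf ε f u) * this
  have hhigh : IntervalIntegrable (fun t => f (u + ε * bllam q t)) volume q 1 ∧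
      (∫ t in q..1, f (u + ε * bllam q t)) = (1 - q) * f u := by
    have e : ∀ t ∈ uIoc q 1, f u = f (u + ε * bllam q t) := by
      intro t ht
      rw [uIoc_of_le hq1] at ht
      unfold bllam; rw [if_neg (not_le.2 ht.1)]; simp
    have i0 : IntervalIntegrable (fun _ => f u) volume q 1 := by simp
    refine ⟨i0.congr e, ?_⟩
    rw [← intervalIntegral.integral_congr_ae (Filter.Eventually.of_forall e)]; simp
  refine ⟨hlow.1.trans hhigh.1, ?_⟩
  rw [← intervalIntegral.integral_add_adjacent_intervals hlow.1 hhigh.1, hlow.2, hhigh.2]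
  ring

lemma bl_opt {ε ε₀ : ℝ} (hε : 0 < ε) (hεε₀ : ε < ε₀) {f f3 : ℝ → ℝ} (hf : memWcl ε₀ f f3)
    (u : ℝ) {p q : ℝ} (hp : 0 ≤ p) (hq : 0 ≤ q) (hpq : p + q ≤ 1)
    (hF : 0 ≤ (p - q) ^ 2 - 2 * (p + q) + 1) :
    ∃ φ : ℝ → ℝ, memBMOe ε 0 1 φ ∧ IntegrableOn (fun t => f (φ t)) (Ioo 0 1) ∧
      intAvg φ 0 1 = u + ε * (p - q) ∧
      intAvg (fun t => φ t ^ 2) 0 1 = u ^ 2 + 2 * u * ε * (p - q) + 2 * ε ^ 2 * (p + q) ∧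
      intAvg (fun t => f (φ t)) 0 1 = f u - ε * q * mRinf ε f u + ε * p * mLinf ε f u := by
  have h01 : ∀ t, bllam q t * bllam p (1 - t) = 0 ∧ (bllam q t = 0 ∨ bllam p (1 - t) = 0) := by
    intro t
    have : bllam q t = 0 ∨ bllam p (1 - t) = 0 := by
      unfold bllam
      by_cases h1 : t ≤ q
      · by_cases h2 : 1 - t ≤ p
        · have : t = q := by linarith
          left
          rw [if_pos h1, this]
          rcases eq_or_ne q 0 with h | h
          · simp [h]
          · simp [div_self h]
        · right; rw [if_neg h2]
      · left; rw [if_neg h1]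
    exact ⟨mul_eq_zero.2 this, this⟩
  set ψ : ℝ → ℝ := fun t => bllam q t - bllam p (1 - t) with hψ
  have hψ2 : ∀ t, ψ t ^ 2 = bllam q t ^ 2 + bllam p (1 - t) ^ 2 := by
    intro t; simp only [hψ]; linear_combination (-2) * (h01 t).1
  have P : ∀ c d, 0 ≤ c → c ≤ d → d ≤ 1 →
      (IntervalIntegrable ψ volume c d ∧ (∫ t in c..d, ψ t) =
        blL1 q d - blL1 q c - (blL1 p (1 - c) - blL1 p (1 - d))) ∧
      (IntervalIntegrable (fun t => ψ t ^ 2) volume c d ∧ (∫ t in c..d, ψ t ^ 2) =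
        blL2 q d - blL2 q c + (blL2 p (1 - c) - blL2 p (1 - d))) := by
    intro c d hc hcd hd
    obtain ⟨⟨a1, a2⟩, a3, a4⟩ := bllam_int hq hc hcd
    obtain ⟨⟨b1, b2⟩, b3, b4⟩ := bllam_int hp (by linarith : 0 ≤ 1 - d) (by linarith : 1 - d ≤ 1 - c)
    have c1 := (b1.comp_sub_left 1).symm
    have c3 := (b3.comp_sub_left 1).symm
    simp only [sub_sub_cancel] at c1 c3
    have c2 : (∫ t in c..d, bllam p (1 - t)) = ∫ t in (1 - d)..(1 - c), bllam p t :=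
      intervalIntegral.integral_comp_sub_left _ 1
    have c4 : (∫ t in c..d, bllam p (1 - t) ^ 2) = ∫ t in (1 - d)..(1 - c), bllam p t ^ 2 :=
      intervalIntegral.integral_comp_sub_left (fun t => bllam p t ^ 2) 1
    refine ⟨⟨a1.sub c1, ?_⟩, ?_⟩
    · simp only [hψ]
      rw [intervalIntegral.integral_sub a1 c1, a2, c2, b2]
    · simp_rw [hψ2]
      refine ⟨a3.add c3, ?_⟩
      rw [intervalIntegral.integral_add a3 c3, a4, c4, b4]
  have E1 : ∀ c d, 0 ≤ c → c < d → d ≤ 1 → intAvg (fun t => u + ε * ψ t) c d =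
      u + ε * intAvg ψ c d := by
    intro c d hc hcd hd
    obtain ⟨⟨i1, -⟩, -⟩ := P c d hc hcd.le hd
    unfold intAvg
    rw [intervalIntegral.integral_add (by simp) (i1.const_mul ε), intervalIntegral.integral_const_mul]
    have : d - c ≠ 0 := by linarith
    simp; field_simp
  have E2 : ∀ c d, 0 ≤ c → c < d → d ≤ 1 → intAvg (fun t => (u + ε * ψ t) ^ 2) c d =
      u ^ 2 + 2 * u * ε * intAvg ψ c d + ε ^ 2 * intAvg (fun t => ψ t ^ 2) c d := by
    intro c d hc hcd hd
    obtain ⟨⟨i1, -⟩, i2, -⟩ := P c d hc hcd.le hd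
    have e : (fun t => (u + ε * ψ t) ^ 2) = fun t => (u ^ 2 + 2 * u * ε * ψ t) + ε ^ 2 * ψ t ^ 2 := by
      funext t; ring
    rw [e]
    unfold intAvg
    have i0 : IntervalIntegrable (fun _ => u ^ 2) volume c d := by simp
    rw [intervalIntegral.integral_add (i0.add (i1.const_mul _)) (i2.const_mul _),
      intervalIntegral.integral_add i0 (i1.const_mul _),
      intervalIntegral.integral_const_mul, intervalIntegral.integral_const_mul]
    have : d - c ≠ 0 := by linarith
    simp; field_simp
  obtain ⟨⟨I1, J1⟩, I2, J2⟩ := P 0 1 le_rfl zero_le_one le_rfl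
  have z1 : blL1 q 0 = 0 ∧ blL2 q 0 = 0 := by
    obtain ⟨a, b⟩ := blL_le hq; rw [a, b]; simp
  have z2 : blL1 p 0 = 0 ∧ blL2 p 0 = 0 := by
    obtain ⟨a, b⟩ := blL_le hp; rw [a, b]; simp
  have z3 := blL_ge hq (by linarith : q ≤ 1)
  have z4 := blL_ge hp (by linarith : p ≤ 1)
  simp only [sub_zero, sub_self, z1.1, z1.2, z2.1, z2.2, z3.1, z3.2, z4.1, z4.2] at J1 J2
  have conv : ∀ {g : ℝ → ℝ}, IntervalIntegrable g volume 0 1 → IntegrableOn g (Ioo 0 1) := by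
    intro g hg
    rwa [intervalIntegrable_iff_integrableOn_Ioo_of_le zero_le_one] at hg
  have K1 := conv I1
  have K2 := conv I2
  obtain ⟨f1, f2⟩ := bl_fint hε hεε₀ hf u hq (by linarith)
  obtain ⟨g1, g2⟩ := bl_fint hε hεε₀ (bl_refl hf) (-u) hp (by linarith)
  have g1' := (g1.comp_sub_left 1).symm
  simp only [sub_self, sub_zero] at g1'
  have g2' : (∫ t in (0:ℝ)..1, f (-(-u + ε * bllam p (1 - t)))) = f u + ε * p * mLinf ε f u := by
    have := intervalIntegral.integral_comp_sub_left (a := 0) (b := 1)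
      (fun t => f (-(-u + ε * bllam p t))) 1
    rw [this, sub_self, sub_zero, g2, bl_mLeq]; rw [neg_neg]; ring
  have hdec : (fun t => f (u + ε * ψ t)) = fun t => (f (u + ε * bllam q t) +
      f (-(-u + ε * bllam p (1 - t)))) - f u := by
    funext t
    simp only [hψ]
    rcases (h01 t).2 with h | h
    · rw [h]; simp [sub_eq_add_neg, add_comm]
    · rw [h]; simp
  have i0 : IntervalIntegrable (fun _ => f u) volume 0 1 := by simp
  refine ⟨fun t => u + ε * ψ t, ⟨?_, ?_, ?_⟩, ?_, ?_, ?_, ?_⟩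
  · exact (integrable_const u).add (K1.const_mul ε)
  · have e : (fun t => (u + ε * ψ t) ^ 2) = fun t => (u ^ 2 + 2 * u * ε * ψ t) + ε ^ 2 * ψ t ^ 2 := by
      funext t; ring
    rw [e]
    exact ((integrable_const _).add (K1.const_mul _)).add (K2.const_mul _)
  · intro c d hc hcd hd
    change intAvg (fun t => (u + ε * ψ t) ^ 2) c d - _ ≤ _
    rw [E1 c d hc hcd hd, E2 c d hc hcd hd]
    obtain ⟨⟨-, j1⟩, -, j2⟩ := P c d hc hcd.le hd
    have hQ := blQ_nonneg hp hq hpq hF hc hcd.le hd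
    unfold blQ at hQ
    rw [← j1, ← j2] at hQ
    have hdc : 0 < d - c := by linarith
    have : intAvg (fun t => ψ t ^ 2) c d - intAvg ψ c d ^ 2 ≤ 1 := by
      unfold intAvg
      rw [div_pow, div_sub_div _ _ hdc.ne' (by positivity), div_le_one (by positivity)]
      nlinarith
    have := mul_le_mul_of_nonneg_left this (sq_nonneg ε)
    linarith
  · apply conv
    rw [hdec]
    exact (f1.add g1').sub i0
  · rw [E1 0 1 le_rfl one_pos le_rfl]
    unfold intAvg
    rw [J1]; ring
  · rw [E2 0 1 le_rfl one_pos le_rfl]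
    unfold intAvg
    rw [J1, J2]; ring
  · simp only
    rw [hdec]
    unfold intAvg
    rw [intervalIntegral.integral_sub (f1.add g1') i0, intervalIntegral.integral_add f1 g1', f2, g2']
    simp
    ring

lemma bl_conclude {ε v : ℝ} (hε : 0 < ε) {f : ℝ → ℝ} (hfc : Continuous f)
    {Λ : ℝ → ℝ → ℝ → ℝ} (H : blDat ε f v Λ) {x1 x2 W : ℝ} (hW : W = blB ε v Λ x1 x2)
    (hφ : ∃ φ : ℝ → ℝ, memBMOe ε 0 1 φ ∧ IntegrableOn (fun t => f (φ t)) (Ioo 0 1) ∧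
      intAvg φ 0 1 = x1 ∧ intAvg (fun t => φ t ^ 2) 0 1 = x2 ∧
      intAvg (fun t => f (φ t)) 0 1 = W) : bellmanFn ε f x1 x2 = W := by
  unfold bellmanFn
  apply IsGreatest.csSup_eq
  constructor
  · obtain ⟨φ, h1, h2, h3, h4, h5⟩ := hφ
    exact ⟨φ, h1, h2, h3, h4, h5.symm⟩
  · rintro y ⟨φ, h1, h2, h3, h4, rfl⟩
    rw [hW, ← h3, ← h4]
    exact bl_up hε hfc H h1 h2

theorem stmt13 (ε ε₀ : ℝ) (hε : 0 < ε) (hεε₀ : ε < ε₀) (f f3 : ℝ → ℝ)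
    (hf : memWcl ε₀ f f3) (v : ℝ)
    (hR : ∀ u : ℝ, u ≤ v → (∫ t in Iic u, f3 t * Real.exp (t / ε)) ≤ 0)
    (hL : ∀ u : ℝ, v ≤ u → 0 ≤ ∫ t in Ici u, f3 t * Real.exp (-t / ε))
    (hbal : Real.exp (-v / ε) * (∫ t in Iic v, f3 t * Real.exp (t / ε)) +
        Real.exp (v / ε) * (∫ t in Ici v, f3 t * Real.exp (-t / ε)) = 0) :
    ∀ x ∈ parabStrip ε,
      (uRpt ε x ≤ v →
        bellmanFn ε f x.1 x.2 =
          mRinf ε f (uRpt ε x) * (x.1 - uRpt ε x) + f (uRpt ε x)) ∧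
      (uLpt ε x ≤ v → v ≤ uRpt ε x →
        bellmanFn ε f x.1 x.2 =
          ((mRinf ε f v + mLinf ε f v) / 2 -
              v * (mLinf ε f v - mRinf ε f v) / (2 * ε)) * x.1 +
            ((mLinf ε f v - mRinf ε f v) / (4 * ε)) * x.2 +
            (v ^ 2 * (mLinf ε f v - mRinf ε f v) / (4 * ε) -
              v * (mRinf ε f v + mLinf ε f v) / 2 + f v)) ∧
      (v ≤ uLpt ε x →
        bellmanFn ε f x.1 x.2 =
          mLinf ε f (uLpt ε x) * (x.1 - uLpt ε x) + f (uLpt ε x)) := by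
  obtain ⟨H, hb, hge⟩ := bl_dat ε ε₀ hε hεε₀ f f3 hf v hR hL hbal
  have hfc : Continuous f := hf.1.continuous
  rintro ⟨x1, x2⟩ ⟨hx1, hx2⟩
  simp only at hx1 hx2
  have hrdef : Real.sqrt (ε ^ 2 - (x2 - x1 ^ 2)) = blr ε x1 x2 := rfl
  have hr0 : 0 ≤ blr ε x1 x2 := Real.sqrt_nonneg _
  have hr2 : blr ε x1 x2 ^ 2 = ε ^ 2 - (x2 - x1 ^ 2) := Real.sq_sqrt (by linarith)
  have hrε : blr ε x1 x2 ≤ ε := by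
    unfold blr
    rw [Real.sqrt_le_left hε.le]; linarith
  have hUdef : blU ε v x1 x2 = max (x1 - ε + blr ε x1 x2) (min (x1 + ε - blr ε x1 x2) v) := rfl
  simp only [uRpt, uLpt, hrdef]
  generalize hr : blr ε x1 x2 = r at *
  have hne : ε ≠ 0 := hε.ne'
  refine ⟨fun h => ?_, fun h1 h2 => ?_, fun h => ?_⟩
  · have hU : blU ε v x1 x2 = x1 + ε - r := by
      rw [hUdef, min_eq_left h]; exact max_eq_right (by linarith)
    generalize hu : x1 + ε - r = u at *
    have hru : r = x1 + ε - u := by linarith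
    subst hru
    refine bl_conclude hε hfc H ?_ ?_
    · unfold blB
      rw [hU]
      unfold blLam
      rw [if_pos h]
      unfold blP
      linear_combination (-((deriv f u - mRinf ε f u) / ε) / 2) * hr2
    · obtain ⟨φ, a1, a2, a3, a4, a5⟩ := bl_opt hε hεε₀ hf u (p := 0) (q := (u - x1) / ε) le_rfl
        (div_nonneg (by linarith) hε.le) (by rw [zero_add, div_le_one hε]; linarith)
        (by nlinarith [sq_nonneg ((u - x1) / ε - 1)])
      refine ⟨φ, a1, a2, ?_, ?_, ?_⟩
      · rw [a3]; field_simp; ring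
      · rw [a4]; field_simp; linear_combination (-1) * hr2
      · rw [a5]; field_simp; ring
  · have hU : blU ε v x1 x2 = v := by
      rw [hUdef, min_eq_right h2]; exact max_eq_right h1
    have hmL : mLinf ε f v = 2 * deriv f v - mRinf ε f v := by linarith
    refine bl_conclude hε hfc H ?_ ?_
    · unfold blB
      rw [hU]
      unfold blLam
      rw [if_pos le_rfl]
      unfold blP
      rw [hmL]
      field_simp
      ring
    · have e1 : (x2 - 2 * v * x1 + v ^ 2) = (x1 - v) ^ 2 + ε ^ 2 - r ^ 2 := by
        rw [hr2]; ring
      obtain ⟨φ, a1, a2, a3, a4, a5⟩ := bl_opt hε hεε₀ hf v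
        (p := ((x2 - 2 * v * x1 + v ^ 2) / (2 * ε ^ 2) + (x1 - v) / ε) / 2)
        (q := ((x2 - 2 * v * x1 + v ^ 2) / (2 * ε ^ 2) - (x1 - v) / ε) / 2)
        (by
          rw [e1]
          have : (((x1 - v) ^ 2 + ε ^ 2 - r ^ 2) / (2 * ε ^ 2) + (x1 - v) / ε) / 2 =
            ((x1 - v + ε) ^ 2 - r ^ 2) / (4 * ε ^ 2) := by field_simp; ring
          rw [this]
          apply div_nonneg _ (by positivity)
          nlinarith)
        (by
          rw [e1]
          have : (((x1 - v) ^ 2 + ε ^ 2 - r ^ 2) / (2 * ε ^ 2) - (x1 - v) / ε) / 2 =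
            ((ε - (x1 - v)) ^ 2 - r ^ 2) / (4 * ε ^ 2) := by field_simp; ring
          rw [this]
          apply div_nonneg _ (by positivity)
          nlinarith)
        (by
          have : ((x2 - 2 * v * x1 + v ^ 2) / (2 * ε ^ 2) + (x1 - v) / ε) / 2 +
            ((x2 - 2 * v * x1 + v ^ 2) / (2 * ε ^ 2) - (x1 - v) / ε) / 2 =
            (x2 - 2 * v * x1 + v ^ 2) / (2 * ε ^ 2) := by ring
          rw [this, e1, div_le_one (by positivity)]
          have : (x1 - v) ^ 2 ≤ (ε - r) ^ 2 := sq_le_sq' (by linarith) (by linarith)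
          nlinarith)
        (by
          have : (((x2 - 2 * v * x1 + v ^ 2) / (2 * ε ^ 2) + (x1 - v) / ε) / 2 -
            ((x2 - 2 * v * x1 + v ^ 2) / (2 * ε ^ 2) - (x1 - v) / ε) / 2) ^ 2 -
            2 * (((x2 - 2 * v * x1 + v ^ 2) / (2 * ε ^ 2) + (x1 - v) / ε) / 2 +
            ((x2 - 2 * v * x1 + v ^ 2) / (2 * ε ^ 2) - (x1 - v) / ε) / 2) + 1 = r ^ 2 / ε ^ 2 := by
            rw [e1]; field_simp; ring
          rw [this]; positivity)
      refine ⟨φ, a1, a2, ?_, ?_, ?_⟩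
      · rw [a3]; field_simp; ring
      · rw [a4]; field_simp; ring
      · rw [a5]; field_simp; ring
  · have hU : blU ε v x1 x2 = x1 - ε + r := by
      rw [hUdef, min_eq_right (by linarith)]; exact max_eq_left h
    generalize hu : x1 - ε + r = u at *
    have hru : r = u - x1 + ε := by linarith
    subst hru
    refine bl_conclude hε hfc H ?_ ?_
    · unfold blB
      rw [hU, hge _ _ _ h]
      unfold blP
      linear_combination (-((deriv f u - mLinf ε f u) / (-ε)) / 2) * hr2
    · obtain ⟨φ, a1, a2, a3, a4, a5⟩ := bl_opt hε hεε₀ hf u (q := 0) (p := (x1 - u) / ε)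
        (div_nonneg (by linarith) hε.le) le_rfl (by rw [add_zero, div_le_one hε]; linarith)
        (by nlinarith [sq_nonneg ((x1 - u) / ε - 1)])
      refine ⟨φ, a1, a2, ?_, ?_, ?_⟩
      · rw [a3]; field_simp; ring
      · rw [a4]; field_simp; linear_combination (-1) * hr2
      · rw [a5]; field_simp; ring
end

section
/- Let 0 < ε < ε₀ and let f ∈ 𝔚_{ε₀} be such that for some v₁ ∈ ℝ, f''' < 0 almost everywhere on (−∞, v₁) and f''' > 0 almost everywhere on (v₁, +∞). Define g_ε(u) = ∫_ℝ f'''(t)e^{−|u−t|/ε}dt. Then g_ε is continuous on ℝ, and: (1) if g_ε(u) < 0 for all u ∈ ℝ, then ∫_{−∞}^u f'''(t)e^{t/ε}dt ≤ 0 for all u ∈ ℝ; (2) if g_ε(u) > 0 for all u ∈ ℝ, then ∫_u^{+∞} f'''(t)e^{−t/ε}dt ≥ 0 for all u ∈ ℝ; (3) if g_ε(v) = 0 for some v ∈ ℝ, then ∫_{−∞}^u f'''(t)e^{t/ε}dt ≤ 0 for all u ≤ v, ∫_u^{+∞} f'''(t)e^{−t/ε}dt ≥ 0 for all u ≥ v,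 and e^{−v/ε}∫_{−∞}^v f'''(t)e^{t/ε}dt + e^{v/ε}∫_v^{+∞} f'''(t)e^{−t/ε}dt = 0. -/
open MeasureTheory Set Real

theorem stmt14 (ε ε₀ : ℝ) (hε : 0 < ε) (hεε₀ : ε < ε₀) (f f3 : ℝ → ℝ)
    (hf : memWcl ε₀ f f3) (v₁ : ℝ)
    (hneg : ∀ᵐ t ∂volume.restrict (Iio v₁), f3 t < 0)
    (hpos : ∀ᵐ t ∂volume.restrict (Ioi v₁), 0 < f3 t) :
    Continuous (fun u => ∫ t : ℝ, f3 t * Real.exp (-|u - t| / ε)) ∧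
    ((∀ u : ℝ, (∫ t : ℝ, f3 t * Real.exp (-|u - t| / ε)) < 0) →
      ∀ u : ℝ, (∫ t in Iic u, f3 t * Real.exp (t / ε)) ≤ 0) ∧
    ((∀ u : ℝ, 0 < ∫ t : ℝ, f3 t * Real.exp (-|u - t| / ε)) →
      ∀ u : ℝ, 0 ≤ ∫ t in Ici u, f3 t * Real.exp (-t / ε)) ∧
    (∀ v : ℝ, (∫ t : ℝ, f3 t * Real.exp (-|v - t| / ε)) = 0 →
      (∀ u : ℝ, u ≤ v → (∫ t in Iic u, f3 t * Real.exp (t / ε)) ≤ 0) ∧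
      (∀ u : ℝ, v ≤ u → 0 ≤ ∫ t in Ici u, f3 t * Real.exp (-t / ε)) ∧
      Real.exp (-v / ε) * (∫ t in Iic v, f3 t * Real.exp (t / ε)) +
        Real.exp (v / ε) * (∫ t in Ici v, f3 t * Real.exp (-t / ε)) = 0) := by
  obtain ⟨-, -, -, -, -, hi⟩ := hf
  have hε₀ : 0 < ε₀ := hε.trans hεε₀
  have hm : AEStronglyMeasurable f3 volume := by
    have h1 : AEStronglyMeasurable (fun t : ℝ => Real.exp (|t| / ε₀)) volume :=
      (by fun_prop : Continuous (fun t : ℝ => Real.exp (|t| / ε₀))).aestronglyMeasurable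
    refine (hi.1.mul h1).congr (Filter.Eventually.of_forall fun t => ?_)
    simp only [Pi.mul_apply]
    rw [mul_assoc, ← Real.exp_add, neg_div, neg_add_cancel, Real.exp_zero, mul_one]
  have hGm : ∀ u : ℝ, AEStronglyMeasurable (fun t => f3 t * Real.exp (-|u - t| / ε)) volume :=
    fun u => hm.mul
      (by fun_prop : Continuous (fun t : ℝ => Real.exp (-|u - t| / ε))).aestronglyMeasurable
  have hb : ∀ K u : ℝ, |u| ≤ K → ∀ t, ‖f3 t * Real.exp (-|u - t| / ε)‖ ≤
      Real.exp (K / ε) * ‖f3 t * Real.exp (-|t| / ε₀)‖ := by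
    intro K u hu t
    rw [norm_mul, norm_mul, Real.norm_of_nonneg (Real.exp_pos _).le,
      Real.norm_of_nonneg (Real.exp_pos _).le, mul_left_comm, ← Real.exp_add]
    apply mul_le_mul_of_nonneg_left _ (norm_nonneg _)
    apply Real.exp_le_exp.2
    have h1 : |t| / ε₀ ≤ |t| / ε := div_le_div_of_nonneg_left (abs_nonneg t) hε hεε₀.le
    have h2 : |t| ≤ |u| + |u - t| := by
      have := abs_sub_abs_le_abs_sub t u
      rw [abs_sub_comm t u] at this
      linarith
    have h3 : -|u - t| / ε ≤ (K - |t|) / ε := by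
      apply div_le_div_of_nonneg_right _ hε.le
      linarith
    rw [sub_div] at h3
    have h4 : -|t| / ε₀ = -(|t| / ε₀) := neg_div _ _
    linarith
  have hG : ∀ u : ℝ, Integrable (fun t => f3 t * Real.exp (-|u - t| / ε)) := fun u =>
    (hi.norm.const_mul (Real.exp (|u| / ε))).mono' (hGm u)
      (Filter.Eventually.of_forall (hb |u| u le_rfl))
  have eA : ∀ u t : ℝ, t ≤ u →
      f3 t * Real.exp (t / ε) = Real.exp (u / ε) * (f3 t * Real.exp (-|u - t| / ε)) := by
    intro u t h
    rw [abs_of_nonneg (sub_nonneg.2 h), mul_left_comm, ← Real.exp_add]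
    congr 2
    ring
  have eB : ∀ u t : ℝ, u ≤ t →
      f3 t * Real.exp (-t / ε) = Real.exp (-u / ε) * (f3 t * Real.exp (-|u - t| / ε)) := by
    intro u t h
    rw [abs_of_nonpos (sub_nonpos.2 h), mul_left_comm, ← Real.exp_add]
    congr 2
    ring
  have iA : ∀ u : ℝ, IntegrableOn (fun t => f3 t * Real.exp (t / ε)) (Iic u) := fun u =>
    ((hG u).const_mul (Real.exp (u / ε))).integrableOn.congr_fun
      (fun t ht => (eA u t ht).symm) measurableSet_Iic
  have iB : ∀ u : ℝ, IntegrableOn (fun t => f3 t * Real.exp (-t / ε)) (Ici u) := fun u =>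
    ((hG u).const_mul (Real.exp (-u / ε))).integrableOn.congr_fun
      (fun t ht => (eB u t ht).symm) measurableSet_Ici
  have key : ∀ u : ℝ, (∫ t : ℝ, f3 t * Real.exp (-|u - t| / ε)) =
      Real.exp (-u / ε) * (∫ t in Iic u, f3 t * Real.exp (t / ε)) +
        Real.exp (u / ε) * (∫ t in Ici u, f3 t * Real.exp (-t / ε)) := by
    intro u
    rw [setIntegral_congr_fun measurableSet_Iic (fun t ht => eA u t ht),
      setIntegral_congr_fun measurableSet_Ici (fun t ht => eB u t ht),
      integral_const_mul, integral_const_mul, ← mul_assoc, ← mul_assoc, ← Real.exp_add,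
      ← Real.exp_add, neg_div, neg_add_cancel, add_neg_cancel, Real.exp_zero, one_mul, one_mul,
      integral_Ici_eq_integral_Ioi, intervalIntegral.integral_Iic_add_Ioi (hG u).integrableOn
        (hG u).integrableOn]
  have hneg' : ∀ᵐ t : ℝ, t < v₁ → f3 t < 0 := (ae_restrict_iff' measurableSet_Iio).1 hneg
  have hpos' : ∀ᵐ t : ℝ, v₁ < t → 0 < f3 t := (ae_restrict_iff' measurableSet_Ioi).1 hpos
  have hne : ∀ᵐ t : ℝ, t ≠ v₁ := by
    simp [ae_iff]
  have A1 : ∀ u ≤ v₁, (∫ t in Iic u, f3 t * Real.exp (t / ε)) ≤ 0 := by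
    intro u hu
    apply setIntegral_nonpos_ae measurableSet_Iic
    filter_upwards [hneg', hne] with t h1 h2 ht
    exact mul_nonpos_of_nonpos_of_nonneg
      (h1 (lt_of_le_of_ne (le_trans ht hu) h2)).le (Real.exp_pos _).le
  have B1 : ∀ u, v₁ ≤ u → 0 ≤ (∫ t in Ici u, f3 t * Real.exp (-t / ε)) := by
    intro u hu
    apply setIntegral_nonneg_ae measurableSet_Ici
    filter_upwards [hpos', hne] with t h1 h2 ht
    exact mul_nonneg (h1 (lt_of_le_of_ne (le_trans hu ht) h2.symm)).le (Real.exp_pos _).le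
  have A2 : ∀ u v, v₁ ≤ u → u ≤ v → (∫ t in Iic u, f3 t * Real.exp (t / ε)) ≤
      ∫ t in Iic v, f3 t * Real.exp (t / ε) := by
    intro u v hu huv
    rw [← Iic_union_Ioc_eq_Iic huv, setIntegral_union (Iic_disjoint_Ioc le_rfl) measurableSet_Ioc
      (iA u) ((iA v).mono_set Ioc_subset_Iic_self)]
    apply le_add_of_nonneg_right
    apply setIntegral_nonneg_ae measurableSet_Ioc
    filter_upwards [hpos'] with t h1 ht
    exact mul_nonneg (h1 (lt_of_le_of_lt hu ht.1)).le (Real.exp_pos _).le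
  have B2 : ∀ v u, v ≤ u → u ≤ v₁ → (∫ t in Ici v, f3 t * Real.exp (-t / ε)) ≤
      ∫ t in Ici u, f3 t * Real.exp (-t / ε) := by
    intro v u hvu hu
    rw [← Ico_union_Ici_eq_Ici hvu, setIntegral_union
      (show Disjoint (Ico v u) (Ici u) from Set.disjoint_left.2 fun t h1 h2 => absurd h1.2 (not_lt.2 h2)) measurableSet_Ici
      ((iB v).mono_set Ico_subset_Ici_self) (iB u)]
    apply add_le_of_nonpos_left
    apply setIntegral_nonpos_ae measurableSet_Ico
    filter_upwards [hneg'] with t h1 ht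
    exact mul_nonpos_of_nonpos_of_nonneg (h1 (lt_of_lt_of_le ht.2 hu)).le (Real.exp_pos _).le
  have A3 : ∀ u : ℝ, (∫ t : ℝ, f3 t * Real.exp (-|u - t| / ε)) ≤ 0 →
      (∫ t in Iic u, f3 t * Real.exp (t / ε)) ≤ 0 := by
    intro u hu
    by_contra! h
    have h1 : v₁ ≤ u := by
      by_contra! h2
      exact absurd (A1 u h2.le) (not_le.2 h)
    rw [key u] at hu
    have := mul_pos (Real.exp_pos (-u / ε)) h
    have := mul_nonneg (Real.exp_pos (u / ε)).le (B1 u h1)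
    linarith
  have B3 : ∀ u : ℝ, 0 ≤ (∫ t : ℝ, f3 t * Real.exp (-|u - t| / ε)) →
      0 ≤ (∫ t in Ici u, f3 t * Real.exp (-t / ε)) := by
    intro u hu
    by_contra! h
    have h1 : u ≤ v₁ := by
      by_contra! h2
      exact absurd (B1 u h2.le) (not_le.2 h)
    rw [key u] at hu
    have := mul_neg_of_pos_of_neg (Real.exp_pos (u / ε)) h
    have := mul_nonpos_of_nonneg_of_nonpos (Real.exp_pos (-u / ε)).le (A1 u h1)
    linarith
  refine ⟨?_, fun h u => A3 u (h u).le, fun h u => B3 u (h u).le, fun v hv => ⟨?_, ?_, ?_⟩⟩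
  · rw [continuous_iff_continuousAt]
    intro u₀
    refine continuousAt_of_dominated
      (bound := fun t => Real.exp ((|u₀| + 1) / ε) * ‖f3 t * Real.exp (-|t| / ε₀)‖)
      (Filter.Eventually.of_forall hGm) ?_ (hi.norm.const_mul _) ?_
    · have : ∀ᶠ u in nhds u₀, |u| < |u₀| + 1 :=
        (continuous_abs.tendsto u₀).eventually (gt_mem_nhds (by linarith))
      filter_upwards [this] with u hu
      exact Filter.Eventually.of_forall (hb _ u hu.le)
    · exact Filter.Eventually.of_forall fun t => by fun_prop
  · intro u hu
    rcases le_total u v₁ with h | h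
    · exact A1 u h
    · exact (A2 u v h hu).trans (A3 v hv.le)
  · intro u hu
    rcases le_total v₁ u with h | h
    · exact B1 u h
    · exact (B3 v hv.ge).trans (B2 v u hu h)
  · rw [← key v, hv]
end

section
/- Let ε > 0 and let f : ℝ → ℝ be twice continuously differentiable. Let L ⊆ (0, 2ε] be a nondegenerate interval and let a, b : L → ℝ be differentiable with b(ℓ) − a(ℓ) = ℓ, a'(ℓ) < 0 and b'(ℓ) > 0 for all ℓ ∈ L (so the chords [A(ℓ),B(ℓ)] joining A(ℓ) = (a(ℓ), a(ℓ)²) and B(ℓ) = (b(ℓ), b(ℓ)²) are pairwise disjoint). Let Ω_ch be the union of these chords and define B : Ω_ch → ℝ on the chord of parameter ℓ by B(x) = ((f(b(ℓ)) − f(a(ℓ)))·x₁ + b(ℓ)f(a(ℓ)) − a(ℓ)f(b(ℓ)))/(b(ℓ) − a(ℓ)). Then: (i) the partial derivative ∂B/∂x₂ exists at interior points of Ω_ch and is constant along each chord if and only if every pair (a(ℓ), b(ℓ)) satisfies the chord equation; (ii) if every pair (a(ℓ), b(ℓ)) satisfies the chord equation, then ∂B/∂x₂ = (f'(b(ℓ))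 − f'(a(ℓ)))/(2(b(ℓ) − a(ℓ))) at every point of the chord of parameter ℓ, for each ℓ the quantities D_L(a(ℓ),b(ℓ)) and D_R(a(ℓ),b(ℓ)) have the same sign, and B is locally concave on Ω_ch if and only if D_L(a(ℓ),b(ℓ)) ≤ 0 for all ℓ ∈ L, which holds if and only if D_R(a(ℓ),b(ℓ)) ≤ 0 for all ℓ ∈ L. -/
open Set Real

/-- Local concavity on a subset of the plane. -/
def LocallyConcaveOn (Ω : Set (ℝ × ℝ)) (G : ℝ × ℝ → ℝ) : Prop :=
  ∀ x y : ℝ × ℝ, x ∈ Ω → y ∈ Ω → segment ℝ x y ⊆ Ω →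
    ∀ α β : ℝ, 0 ≤ α → 0 ≤ β → α + β = 1 →
      α * G x + β * G y ≤ G (α • x + β • y)

/-- `D_L(a,b) = f''(a) − ⟨f''⟩_{[a,b]}`. -/
noncomputable def DLdiff (f : ℝ → ℝ) (a b : ℝ) : ℝ :=
  deriv (deriv f) a - (deriv f b - deriv f a) / (b - a)

/-- `D_R(a,b) = f''(b) − ⟨f''⟩_{[a,b]}`. -/
noncomputable def DRdiff (f : ℝ → ℝ) (a b : ℝ) : ℝ :=
  deriv (deriv f) b - (deriv f b - deriv f a) / (b - a)

/-- The chord equation for the pair `(a, b)`. -/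
def chordEq (f : ℝ → ℝ) (a b : ℝ) : Prop :=
  (f b - f a) / (b - a) = (deriv f a + deriv f b) / 2

/-- The chord with parameter `ℓ`. -/
noncomputable def chordSeg (a b : ℝ → ℝ) (ℓ : ℝ) : Set (ℝ × ℝ) :=
  segment ℝ (a ℓ, (a ℓ) ^ 2) (b ℓ, (b ℓ) ^ 2)

/-- The domain `Ω_ch` foliated by the chords with parameters in `L`. -/
noncomputable def chordDomain (a b : ℝ → ℝ) (L : Set ℝ) : Set (ℝ × ℝ) :=
  {x | ∃ ℓ ∈ L, x ∈ chordSeg a b ℓ}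

structure CData (f : ℝ → ℝ) (L : Set ℝ) (a b a' b' : ℝ → ℝ) : Prop where
  hf : ContDiff ℝ 2 f
  pos : ∀ ℓ ∈ L, 0 < ℓ
  conv : Convex ℝ L
  nt : (interior L).Nonempty
  hab : ∀ ℓ ∈ L, b ℓ - a ℓ = ℓ
  ha : ∀ ℓ ∈ L, HasDerivWithinAt a (a' ℓ) L ℓ
  hb : ∀ ℓ ∈ L, HasDerivWithinAt b (b' ℓ) L ℓ
  na : ∀ ℓ ∈ L, a' ℓ < 0
  pb : ∀ ℓ ∈ L, 0 < b' ℓ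

/-- height of the line through the chord -/
def cc (a b : ℝ → ℝ) (x ℓ : ℝ) : ℝ := (a ℓ + b ℓ) * x - a ℓ * b ℓ

/-- value of the interpolant -/
noncomputable def FF (f a b : ℝ → ℝ) (x ℓ : ℝ) : ℝ :=
  ((f (b ℓ) - f (a ℓ)) * x + b ℓ * f (a ℓ) - a ℓ * f (b ℓ)) / (b ℓ - a ℓ)

noncomputable def t2 (f a b : ℝ → ℝ) (ℓ : ℝ) : ℝ :=
  (deriv f (b ℓ) - deriv f (a ℓ)) / (2 * (b ℓ - a ℓ))

theorem mem_chordSeg_iff {a b : ℝ → ℝ} {ℓ : ℝ} (h : a ℓ < b ℓ) (p : ℝ × ℝ) :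
    p ∈ chordSeg a b ℓ ↔ a ℓ ≤ p.1 ∧ p.1 ≤ b ℓ ∧ p.2 = cc a b p.1 ℓ := by
  unfold chordSeg cc
  constructor
  · rintro ⟨u, v, hu, hv, huv, rfl⟩
    have : u = 1 - v := by linarith
    subst this
    simp only [Prod.smul_mk, Prod.mk_add_mk, smul_eq_mul]
    refine ⟨by nlinarith, by nlinarith, by ring⟩
  · rintro ⟨h1, h2, h3⟩
    have hp : 0 < b ℓ - a ℓ := by linarith
    refine ⟨(b ℓ - p.1) / (b ℓ - a ℓ), (p.1 - a ℓ) / (b ℓ - a ℓ), div_nonneg (by linarith) hp.le,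
      div_nonneg (by linarith) hp.le, by field_simp; ring, ?_⟩
    ext
    · simp only [Prod.smul_mk, Prod.mk_add_mk, smul_eq_mul]
      field_simp; ring
    · simp only [Prod.smul_mk, Prod.mk_add_mk, smul_eq_mul]
      rw [h3]
      field_simp; ring

namespace CData

variable {f : ℝ → ℝ} {L : Set ℝ} {a b a' b' : ℝ → ℝ}

theorem lt (D : CData f L a b a' b') {ℓ : ℝ} (h : ℓ ∈ L) : a ℓ < b ℓ := by
  have := D.hab ℓ h; have := D.pos ℓ h; linarith

theorem mem_dom (D : CData f L a b a' b') (x s : ℝ) :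
    (x, s) ∈ chordDomain a b L ↔ ∃ ℓ ∈ L, a ℓ ≤ x ∧ x ≤ b ℓ ∧ s = cc a b x ℓ := by
  constructor
  · rintro ⟨ℓ, h, h'⟩
    exact ⟨ℓ, h, (mem_chordSeg_iff (D.lt h) _).1 h'⟩
  · rintro ⟨ℓ, h, h'⟩
    exact ⟨ℓ, h, (mem_chordSeg_iff (D.lt h) _).2 h'⟩

theorem anti (D : CData f L a b a' b') : AntitoneOn a L :=
  (strictAntiOn_of_hasDerivWithinAt_neg D.conv
    (fun x hx => (D.ha x hx).continuousWithinAt)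
    (fun x hx => (D.ha x (interior_subset hx)).mono interior_subset)
    (fun x hx => D.na x (interior_subset hx))).antitoneOn

theorem mono (D : CData f L a b a' b') : MonotoneOn b L :=
  (strictMonoOn_of_hasDerivWithinAt_pos D.conv
    (fun x hx => (D.hb x hx).continuousWithinAt)
    (fun x hx => (D.hb x (interior_subset hx)).mono interior_subset)
    (fun x hx => D.pb x (interior_subset hx))).monotoneOn

theorem quant (D : CData f L a b a' b') {ℓ m x k : ℝ} (hℓ : ℓ ∈ L) (hm : m ∈ L)
    (h1 : a ℓ + k ≤ x) (h2 : x + k ≤ b ℓ) (h3 : a m ≤ x) (h4 : x ≤ b m) :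
    k * |m - ℓ| ≤ 2 * |cc a b x m - cc a b x ℓ| := by
  have e1 := D.hab ℓ hℓ
  have e2 := D.hab m hm
  unfold cc
  rcases le_total ℓ m with h | h
  · have p := D.anti hℓ hm h
    have q := D.mono hℓ hm h
    rw [abs_of_nonneg (by linarith)]
    refine le_trans ?_ (mul_le_mul_of_nonneg_left (le_abs_self _) (by norm_num))
    nlinarith [mul_nonneg (sub_nonneg.2 h1) (sub_nonneg.2 q), mul_nonneg (sub_nonneg.2 h2) (sub_nonneg.2 p), mul_nonneg (sub_nonneg.2 h3) (sub_nonneg.2 q), mul_nonneg (sub_nonneg.2 h4) (sub_nonneg.2 p)]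
  · have p := D.anti hm hℓ h
    have q := D.mono hm hℓ h
    rw [abs_of_nonpos (by linarith)]
    refine le_trans ?_ (mul_le_mul_of_nonneg_left (neg_le_abs _) (by norm_num))
    nlinarith [mul_nonneg (sub_nonneg.2 h1) (sub_nonneg.2 q), mul_nonneg (sub_nonneg.2 h2) (sub_nonneg.2 p), mul_nonneg (sub_nonneg.2 h3) (sub_nonneg.2 q), mul_nonneg (sub_nonneg.2 h4) (sub_nonneg.2 p)]

theorem f1 (D : CData f L a b a' b') (x : ℝ) : HasDerivAt f (deriv f x) x :=
  (D.hf.differentiable (by norm_num)).differentiableAt.hasDerivAt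

theorem f2 (D : CData f L a b a' b') (x : ℝ) : HasDerivAt (deriv f) (deriv (deriv f) x) x := by
  have : ContDiff ℝ 1 (deriv f) := by
    have h := D.hf
    rw [show (2 : WithTop ℕ∞) = 1 + 1 by norm_num, contDiff_succ_iff_deriv] at h
    exact h.2.2
  exact (this.differentiable (by norm_num)).differentiableAt.hasDerivAt

theorem fa (D : CData f L a b a' b') {ℓ : ℝ} (h : ℓ ∈ L) :
    HasDerivWithinAt (fun y => f (a y)) (deriv f (a ℓ) * a' ℓ) L ℓ :=
  (D.f1 _).comp_hasDerivWithinAt ℓ (D.ha ℓ h)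
theorem fb (D : CData f L a b a' b') {ℓ : ℝ} (h : ℓ ∈ L) :
    HasDerivWithinAt (fun y => f (b y)) (deriv f (b ℓ) * b' ℓ) L ℓ :=
  (D.f1 _).comp_hasDerivWithinAt ℓ (D.hb ℓ h)
theorem ffa (D : CData f L a b a' b') {ℓ : ℝ} (h : ℓ ∈ L) :
    HasDerivWithinAt (fun y => deriv f (a y)) (deriv (deriv f) (a ℓ) * a' ℓ) L ℓ :=
  (D.f2 _).comp_hasDerivWithinAt ℓ (D.ha ℓ h)
theorem ffb (D : CData f L a b a' b') {ℓ : ℝ} (h : ℓ ∈ L) :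
    HasDerivWithinAt (fun y => deriv f (b y)) (deriv (deriv f) (b ℓ) * b' ℓ) L ℓ :=
  (D.f2 _).comp_hasDerivWithinAt ℓ (D.hb ℓ h)

theorem dcc (D : CData f L a b a' b') {ℓ : ℝ} (h : ℓ ∈ L) (x : ℝ) :
    HasDerivWithinAt (cc a b x) (-a' ℓ * (b ℓ - x) + b' ℓ * (x - a ℓ)) L ℓ := by
  have := (((D.ha ℓ h).add (D.hb ℓ h)).mul_const x).sub ((D.ha ℓ h).mul (D.hb ℓ h))
  refine this.congr_deriv ?_
  ring

theorem dFF (D : CData f L a b a' b') {ℓ : ℝ} (h : ℓ ∈ L) (x : ℝ) :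
    HasDerivWithinAt (FF f a b x)
      ((a' ℓ * (deriv f (a ℓ) - (f (b ℓ) - f (a ℓ)) / (b ℓ - a ℓ)) * (b ℓ - x) +
        b' ℓ * (deriv f (b ℓ) - (f (b ℓ) - f (a ℓ)) / (b ℓ - a ℓ)) * (x - a ℓ)) / (b ℓ - a ℓ))
      L ℓ := by
  have hne : b ℓ - a ℓ ≠ 0 := by have := D.lt h; linarith
  have := (((((D.fb h).sub (D.fa h)).mul_const x).add ((D.hb ℓ h).mul (D.fa h))).sub
    ((D.ha ℓ h).mul (D.fb h))).div ((D.hb ℓ h).sub (D.ha ℓ h)) hne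
  refine this.congr_deriv ?_
  simp only [Pi.sub_apply, Pi.add_apply, Pi.mul_apply]
  field_simp
  ring

theorem dt2 (D : CData f L a b a' b') {ℓ : ℝ} (h : ℓ ∈ L) :
    HasDerivWithinAt (t2 f a b)
      ((b' ℓ * DRdiff f (a ℓ) (b ℓ) - a' ℓ * DLdiff f (a ℓ) (b ℓ)) / (2 * (b ℓ - a ℓ))) L ℓ := by
  have hne : b ℓ - a ℓ ≠ 0 := by have := D.lt h; linarith
  have := ((D.ffb h).sub (D.ffa h)).div (((D.hb ℓ h).sub (D.ha ℓ h)).const_mul 2)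
    (by simpa using hne)
  refine this.congr_deriv ?_
  simp only [Pi.sub_apply, Pi.add_apply, Pi.mul_apply]
  unfold DRdiff DLdiff
  field_simp
  ring

theorem chordEq_iff (D : CData f L a b a' b') {ℓ : ℝ} (h : ℓ ∈ L) :
    chordEq f (a ℓ) (b ℓ) ↔
      2 * (f (b ℓ) - f (a ℓ)) - (b ℓ - a ℓ) * (deriv f (a ℓ) + deriv f (b ℓ)) = 0 := by
  have hne : b ℓ - a ℓ ≠ 0 := by have := D.lt h; linarith
  unfold chordEq
  rw [div_eq_div_iff hne (by norm_num)]
  constructor <;> intro h <;> linarith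

theorem drel (D : CData f L a b a' b') (hc : ∀ ℓ ∈ L, chordEq f (a ℓ) (b ℓ)) {ℓ : ℝ} (h : ℓ ∈ L) :
    a' ℓ * DLdiff f (a ℓ) (b ℓ) + b' ℓ * DRdiff f (a ℓ) (b ℓ) = 0 := by
  have hlt := D.lt h
  have hne : b ℓ - a ℓ ≠ 0 := by linarith
  have h1 := (((D.fb h).sub (D.fa h)).const_mul 2).sub
    (((D.hb ℓ h).sub (D.ha ℓ h)).mul ((D.ffa h).add (D.ffb h)))
  have h2 := h1.congr (f₁ := fun _ => (0 : ℝ)) (fun y hy => ((D.chordEq_iff hy).1 (hc y hy)).symm)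
    ((D.chordEq_iff h).1 (hc ℓ h)).symm
  have h3 := (uniqueDiffOn_convex D.conv D.nt ℓ h).eq_deriv _ h2 (hasDerivWithinAt_const ℓ L (0:ℝ))
  simp only [Pi.sub_apply, Pi.add_apply, Pi.mul_apply] at h3
  unfold DRdiff DLdiff
  field_simp
  linarith

theorem slice (D : CData f L a b a' b') {B : ℝ × ℝ → ℝ}
    (hB : ∀ ℓ ∈ L, ∀ x ∈ chordSeg a b ℓ, B x = FF f a b x.1 ℓ) {ℓ x d : ℝ} (h : ℓ ∈ L)
    (hx1 : a ℓ < x) (hx2 : x < b ℓ) 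
    (hd : HasDerivWithinAt (FF f a b x) (d * (-a' ℓ * (b ℓ - x) + b' ℓ * (x - a ℓ))) L ℓ) :
    HasDerivWithinAt (fun s => B (x, s)) d {s | (x, s) ∈ chordDomain a b L} (cc a b x ℓ) := by
  set S := {s | (x, s) ∈ chordDomain a b L} with hS
  have hS' : ∀ s ∈ S, ∃ m, m ∈ L ∧ a m ≤ x ∧ x ≤ b m ∧ s = cc a b x m := fun s hs =>
    (D.mem_dom x s).1 hs
  choose! g hgL hg1 hg2 hg3 using hS'
  have hs0 : cc a b x ℓ ∈ S := (D.mem_dom _ _).2 ⟨ℓ, h, hx1.le, hx2.le, rfl⟩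
  set k := min (x - a ℓ) (b ℓ - x) with hk
  have hk0 : 0 < k := lt_min (by linarith) (by linarith)
  have hk1 : a ℓ + k ≤ x := by have := min_le_left (x - a ℓ) (b ℓ - x); linarith
  have hk2 : x + k ≤ b ℓ := by have := min_le_right (x - a ℓ) (b ℓ - x); linarith
  have hlip : ∀ s ∈ S, |g s - ℓ| ≤ 2 / k * |s - cc a b x ℓ| := by
    intro s hs
    have := D.quant h (hgL s hs) hk1 hk2 (hg1 s hs) (hg2 s hs)
    rw [← hg3 s hs] at this
    rw [div_mul_eq_mul_div, le_div_iff₀ hk0]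
    linarith
  have hg0 : g (cc a b x ℓ) = ℓ := by
    have := hlip _ hs0
    simp only [sub_self, abs_zero, mul_zero] at this
    have := abs_nonpos_iff.1 this
    linarith
  have hcont : Filter.Tendsto g (nhdsWithin (cc a b x ℓ) S) (nhdsWithin ℓ L) := by
    refine tendsto_nhdsWithin_iff.2 ⟨?_, ?_⟩
    · rw [tendsto_iff_norm_sub_tendsto_zero]
      have hz : Filter.Tendsto (fun s => 2 / k * |s - cc a b x ℓ|) (nhdsWithin (cc a b x ℓ) S)
          (nhds 0) := by
        have : Continuous (fun s => 2 / k * |s - cc a b x ℓ|) := by fun_prop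
        have := (this.tendsto (cc a b x ℓ)).mono_left (nhdsWithin_le_nhds (s := S))
        simpa using this
      refine squeeze_zero' (Filter.Eventually.of_forall fun _ => norm_nonneg _) ?_ hz
      filter_upwards [self_mem_nhdsWithin] with s hs
      exact hlip s hs
    · filter_upwards [self_mem_nhdsWithin] with s hs
      exact hgL s hs
  have hpos : 0 < -a' ℓ * (b ℓ - x) + b' ℓ * (x - a ℓ) := by
    have := D.na ℓ h
    have := D.pb ℓ h
    have := mul_pos (show 0 < -a' ℓ by linarith) (sub_pos.2 hx2)
    have := mul_pos (D.pb ℓ h) (sub_pos.2 hx1)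
    linarith
  set c' := -a' ℓ * (b ℓ - x) + b' ℓ * (x - a ℓ) with hc'
  have hg' : HasDerivWithinAt g c'⁻¹ S (cc a b x ℓ) := by
    have hd := (D.dcc h x)
    rw [← hc'] at hd
    have := HasFDerivWithinAt.of_local_left_inverse (f := cc a b x) (g := g) (s := S) (t := L)
      (a := cc a b x ℓ)
      (f' := ContinuousLinearEquiv.unitsEquivAut ℝ (Units.mk0 c' hpos.ne')) (by rwa [hg0])
      (by
        rw [hg0]
        refine hd.hasFDerivWithinAt.congr_fderiv ?_
        ext; simp) hs0
      (by filter_upwards [self_mem_nhdsWithin] with s hs; exact (hg3 s hs).symm)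
    have := this.hasDerivWithinAt
    refine this.congr_deriv ?_
    simp
  have hd2 : HasDerivWithinAt (FF f a b x) (d * c') L (g (cc a b x ℓ)) := by rwa [hg0]
  have hcomp := hd2.comp (cc a b x ℓ) hg' (fun s hs => hgL s hs)
  have hval : ∀ s ∈ S, B (x, s) = (FF f a b x ∘ g) s := fun s hs =>
    hB (g s) (hgL s hs) (x, s)
      ((mem_chordSeg_iff (D.lt (hgL s hs)) _).2 ⟨hg1 s hs, hg2 s hs, hg3 s hs⟩)
  refine (hcomp.congr hval (hval _ hs0)).congr_deriv ?_
  field_simp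

theorem int_strict (D : CData f L a b a' b') {x : ℝ × ℝ} (hx : x ∈ interior (chordDomain a b L)) :
    {s | (x.1, s) ∈ chordDomain a b L} ∈ nhds x.2 ∧
    ∀ ℓ ∈ L, x ∈ chordSeg a b ℓ → a ℓ < x.1 ∧ x.1 < b ℓ ∧ x.2 = cc a b x.1 ℓ := by
  have h1 : {s | (x.1, s) ∈ chordDomain a b L} ∈ nhds x.2 := by
    have : Continuous (fun s : ℝ => (x.1, s)) := by fun_prop
    exact this.continuousAt.preimage_mem_nhds (t := chordDomain a b L) (mem_interior_iff_mem_nhds.1 hx)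
  refine ⟨h1, fun ℓ h hs => ?_⟩
  have h2 : Ici (x.1 ^ 2) ∈ nhds x.2 := by
    filter_upwards [h1] with s hs
    obtain ⟨m, hm, q1, q2, rfl⟩ := (D.mem_dom _ _).1 hs
    simp only [mem_Ici]
    unfold cc
    nlinarith [mul_nonneg (sub_nonneg.2 q1) (sub_nonneg.2 q2)]
  have h3 : x.2 ∈ interior (Ici (x.1 ^ 2)) := mem_interior_iff_mem_nhds.2 h2
  rw [interior_Ici, mem_Ioi] at h3
  obtain ⟨q1, q2, q3⟩ := (mem_chordSeg_iff (D.lt h) _).1 hs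
  refine ⟨lt_of_le_of_ne q1 ?_, lt_of_le_of_ne q2 ?_, q3⟩
  · intro he
    rw [q3, ← he] at h3; unfold cc at h3; nlinarith
  · intro he
    rw [q3, he] at h3; unfold cc at h3; nlinarith

theorem cont_a (D : CData f L a b a' b') : ContinuousOn a L :=
  fun x hx => (D.ha x hx).continuousWithinAt
theorem cont_b (D : CData f L a b a' b') : ContinuousOn b L :=
  fun x hx => (D.hb x hx).continuousWithinAt

theorem ivt (D : CData f L a b a' b') {l m x s : ℝ} (hl : l ∈ L) (hm : m ∈ L) (hlm : l ≤ m)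
    (h1 : a l ≤ x) (h2 : x ≤ b l) (h3 : cc a b x l ≤ s) (h4 : s ≤ cc a b x m) :
    (x, s) ∈ chordDomain a b L := by
  have hsub : Icc l m ⊆ L := D.conv.ordConnected.out hl hm
  have hc : ContinuousOn (cc a b x) (Icc l m) :=
    fun y hy => ((D.dcc (hsub hy) x).continuousWithinAt).mono hsub
  obtain ⟨y, hy, rfl⟩ := intermediate_value_Icc hlm hc ⟨h3, h4⟩
  exact (D.mem_dom _ _).2 ⟨y, hsub hy, (D.anti hl (hsub hy) hy.1).trans h1,
    h2.trans (D.mono hl (hsub hy) hy.1), rfl⟩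

theorem cc_lt (D : CData f L a b a' b') {l m x : ℝ} (hl : l ∈ L) (hm : m ∈ L) (hlm : l < m)
    (h1 : a l < x) (h2 : x < b l) : cc a b x l < cc a b x m := by
  have p := D.anti hl hm hlm.le
  have q := D.mono hl hm hlm.le
  have e1 := D.hab l hl
  have e2 := D.hab m hm
  unfold cc
  rcases p.lt_or_eq with p' | p'
  · nlinarith [mul_pos (sub_pos.2 p') (sub_pos.2 h2), mul_nonneg (sub_nonneg.2 h1.le) (sub_nonneg.2 q), mul_nonneg (sub_nonneg.2 p) (sub_nonneg.2 q)]
  · have : b l < b m := by linarith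
    rw [p']
    nlinarith [mul_pos (sub_pos.2 this) (sub_pos.2 h1)]

theorem int_mem (D : CData f L a b a' b') {ℓ x : ℝ} (h : ℓ ∈ interior L)
    (h1 : a ℓ < x) (h2 : x < b ℓ) : (x, cc a b x ℓ) ∈ interior (chordDomain a b L) := by
  have hn : L ∈ nhds ℓ := mem_interior_iff_mem_nhds.1 h
  have hℓ := interior_subset h
  have ca : ContinuousAt a ℓ := (D.cont_a ℓ hℓ).continuousAt hn
  have cb : ContinuousAt b ℓ := (D.cont_b ℓ hℓ).continuousAt hn
  have ev : ∀ᶠ y in nhds ℓ, y ∈ L ∧ a y < x ∧ x < b y :=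
    (Filter.eventually_mem_set.2 hn).and ((ca.eventually_lt_const h1).and (cb.eventually_const_lt h2))
  obtain ⟨l, hlℓ, hl, hl1, hl2⟩ : ∃ l, l < ℓ ∧ l ∈ L ∧ a l < x ∧ x < b l := by
    obtain ⟨l, q, r⟩ := ((ev.filter_mono (nhdsWithin_le_nhds (s := Iio ℓ))).and
      (self_mem_nhdsWithin)).exists
    exact ⟨l, r, q⟩
  obtain ⟨m, hmℓ, hm, hm1, hm2⟩ : ∃ l, ℓ < l ∧ l ∈ L ∧ a l < x ∧ x < b l := by
    obtain ⟨l, q, r⟩ := ((ev.filter_mono (nhdsWithin_le_nhds (s := Ioi ℓ))).and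
      (self_mem_nhdsWithin)).exists
    exact ⟨l, r, q⟩
  have i1 := D.cc_lt hl hℓ hlℓ hl1 hl2
  have i2 := D.cc_lt hℓ hm hmℓ h1 h2
  have cont : ∀ y, Continuous (fun p : ℝ × ℝ => cc a b p.1 y) := by
    intro y; unfold cc; fun_prop
  rw [mem_interior_iff_mem_nhds]
  have e1 : ∀ᶠ p : ℝ × ℝ in nhds (x, cc a b x ℓ), a l < p.1 :=
    continuousAt_fst.eventually_const_lt hl1
  have e2 : ∀ᶠ p : ℝ × ℝ in nhds (x, cc a b x ℓ), p.1 < b l :=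
    continuousAt_fst.eventually_lt_const hl2
  have e3 : ∀ᶠ p : ℝ × ℝ in nhds (x, cc a b x ℓ), cc a b p.1 l < p.2 :=
    (cont l).continuousAt.eventually_lt continuousAt_snd i1
  have e4 : ∀ᶠ p : ℝ × ℝ in nhds (x, cc a b x ℓ), p.2 < cc a b p.1 m :=
    continuousAt_snd.eventually_lt (cont m).continuousAt i2
  filter_upwards [e1, e2, e3, e4] with p p1 p2 p3 p4
  exact D.ivt hl hm (hlℓ.trans hmℓ).le p1.le p2.le p3.le p4.le

theorem dFF' (D : CData f L a b a' b') {ℓ : ℝ} (h : ℓ ∈ L) (hc : chordEq f (a ℓ) (b ℓ)) (x : ℝ) :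
    HasDerivWithinAt (FF f a b x)
      (t2 f a b ℓ * (-a' ℓ * (b ℓ - x) + b' ℓ * (x - a ℓ))) L ℓ := by
  have hne : b ℓ - a ℓ ≠ 0 := by have := D.lt h; linarith
  refine (D.dFF h x).congr_deriv ?_
  rw [hc]
  unfold t2
  field_simp
  ring

/-- The tangent plane inequality. -/
theorem plane (D : CData f L a b a' b') (hc : ∀ ℓ ∈ L, chordEq f (a ℓ) (b ℓ))
    (hD : ∀ ℓ ∈ L, DLdiff f (a ℓ) (b ℓ) ≤ 0) {ℓ m x : ℝ} (hℓ : ℓ ∈ L) (hm : m ∈ L)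
    (h1 : a ℓ ≤ x) (h2 : x ≤ b ℓ) :
    FF f a b x ℓ ≤ FF f a b x m + t2 f a b m * (cc a b x ℓ - cc a b x m) := by
  set s := cc a b x ℓ with hs
  set T : ℝ → ℝ := fun m =>
    (b' m * DRdiff f (a m) (b m) - a' m * DLdiff f (a m) (b m)) / (2 * (b m - a m)) with hT
  have hT0 : ∀ y ∈ L, T y ≤ 0 := by
    intro y hy
    have := D.drel hc hy
    have h3 := mul_nonneg_of_nonpos_of_nonpos (D.na y hy).le (hD y hy)
    refine div_nonpos_of_nonpos_of_nonneg (by linarith) ?_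
    have := D.lt hy
    linarith
  let P : ℝ → ℝ := fun y => FF f a b x y + t2 f a b y * (s - cc a b x y)
  have hP : ∀ y ∈ L, HasDerivWithinAt P (T y * (s - cc a b x y)) L y := by
    intro y hy
    have := (D.dFF' hy (hc y hy) x).add ((D.dt2 hy).mul ((D.dcc hy x).const_sub s))
    refine this.congr_deriv ?_
    simp only [hT]
    ring
  have hPℓ : P ℓ = FF f a b x ℓ := by simp [P, hs]
  have hPc : ContinuousOn P L := fun y hy => (hP y hy).continuousWithinAt
  change _ ≤ P m
  rw [← hPℓ]
  rcases le_total ℓ m with h | h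
  · have hsub : Icc ℓ m ⊆ L := D.conv.ordConnected.out hℓ hm
    refine monotoneOn_of_hasDerivWithinAt_nonneg (convex_Icc ℓ m) (hPc.mono hsub)
      (fun y hy => (hP y (hsub (interior_subset hy))).mono (interior_subset.trans hsub)) ?_
      (left_mem_Icc.2 h) (right_mem_Icc.2 h) h
    intro y hy
    have hy' := interior_subset hy
    refine mul_nonneg_of_nonpos_of_nonpos (hT0 y (hsub hy')) ?_
    have p := D.anti hℓ (hsub hy') hy'.1
    have q := D.mono hℓ (hsub hy') hy'.1
    rw [hs]; unfold cc
    nlinarith [mul_nonneg (sub_nonneg.2 p) (sub_nonneg.2 h2), mul_nonneg (sub_nonneg.2 h1) (sub_nonneg.2 q), mul_nonneg (sub_nonneg.2 p) (sub_nonneg.2 q)]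
  · have hsub : Icc m ℓ ⊆ L := D.conv.ordConnected.out hm hℓ
    refine antitoneOn_of_hasDerivWithinAt_nonpos (convex_Icc m ℓ) (hPc.mono hsub)
      (fun y hy => (hP y (hsub (interior_subset hy))).mono (interior_subset.trans hsub)) ?_
      (left_mem_Icc.2 h) (right_mem_Icc.2 h) h
    intro y hy
    have hy' := interior_subset hy
    refine mul_nonpos_of_nonpos_of_nonneg (hT0 y (hsub hy')) ?_
    have p := D.anti (hsub hy') hℓ hy'.2
    have q := D.mono (hsub hy') hℓ hy'.2
    have r := D.lt (hsub hy')
    rw [hs]; unfold cc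
    rcases le_total (a y) x with u | u
    · rcases le_total x (b y) with v | v
      · nlinarith [mul_nonneg (sub_nonneg.2 p) (sub_nonneg.2 v), mul_nonneg (sub_nonneg.2 u) (sub_nonneg.2 q), mul_nonneg (sub_nonneg.2 p) (sub_nonneg.2 q)]
      · nlinarith [mul_nonneg (sub_nonneg.2 h1) (sub_nonneg.2 h2), mul_nonneg (sub_nonneg.2 u) (sub_nonneg.2 v)]
    · have v : x ≤ b y := by linarith
      nlinarith [mul_nonneg (sub_nonneg.2 h1) (sub_nonneg.2 h2), mul_nonneg (sub_nonneg.2 u) (sub_nonneg.2 v)]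

theorem suff (D : CData f L a b a' b') {B : ℝ × ℝ → ℝ}
    (hB : ∀ ℓ ∈ L, ∀ x ∈ chordSeg a b ℓ, B x = FF f a b x.1 ℓ)
    (hc : ∀ ℓ ∈ L, chordEq f (a ℓ) (b ℓ))
    (hD : ∀ ℓ ∈ L, DLdiff f (a ℓ) (b ℓ) ≤ 0) : LocallyConcaveOn (chordDomain a b L) B := by
  intro x y hx hy hseg α β hα hβ hαβ
  have hz : α • x + β • y ∈ chordDomain a b L := hseg ⟨α, β, hα, hβ, hαβ, rfl⟩
  obtain ⟨m, hm, hzm⟩ := hz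
  obtain ⟨l1, hl1, hx⟩ := hx
  obtain ⟨l2, hl2, hy⟩ := hy
  rw [hB _ hl1 _ hx, hB _ hl2 _ hy, hB _ hm _ hzm]
  obtain ⟨p1, p2, p3⟩ := (mem_chordSeg_iff (D.lt hl1) _).1 hx
  obtain ⟨q1, q2, q3⟩ := (mem_chordSeg_iff (D.lt hl2) _).1 hy
  obtain ⟨-, -, r3⟩ := (mem_chordSeg_iff (D.lt hm) _).1 hzm
  have i1 := mul_le_mul_of_nonneg_left (D.plane hc hD hl1 hm p1 p2) hα
  have i2 := mul_le_mul_of_nonneg_left (D.plane hc hD hl2 hm q1 q2) hβ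
  rw [← p3] at i1
  rw [← q3] at i2
  simp only [Prod.fst_add, Prod.snd_add, Prod.smul_fst, Prod.smul_snd, smul_eq_mul] at r3 ⊢
  refine (add_le_add i1 i2).trans (le_of_eq ?_)
  have e1 : FF f a b (α * x.1 + β * y.1) m = α * FF f a b x.1 m + β * FF f a b y.1 m := by
    have hne : b m - a m ≠ 0 := by have := D.lt hm; linarith
    have : β = 1 - α := by linarith
    subst this
    unfold FF
    field_simp
    ring
  have e2 : cc a b (α * x.1 + β * y.1) m = α * cc a b x.1 m + β * cc a b y.1 m := by
    have : β = 1 - α := by linarith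
    subst this
    unfold cc
    ring
  rw [e1]
  rw [e2] at r3
  linear_combination t2 f a b m * r3

theorem nec (D : CData f L a b a' b') {B : ℝ × ℝ → ℝ}
    (hB : ∀ ℓ ∈ L, ∀ x ∈ chordSeg a b ℓ, B x = FF f a b x.1 ℓ)
    (hc : ∀ ℓ ∈ L, chordEq f (a ℓ) (b ℓ))
    (hLC : LocallyConcaveOn (chordDomain a b L) B) : ∀ ℓ ∈ L, DLdiff f (a ℓ) (b ℓ) ≤ 0 := by
  have hanti : AntitoneOn (t2 f a b) L := by
    intro l hl m hm hlm
    rcases hlm.eq_or_lt with rfl | hlt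
    · exact le_rfl
    have hab := D.lt hl
    obtain ⟨x, hx1, hx2⟩ := exists_between hab
    have p := D.anti hl hm hlm
    have q := D.mono hl hm hlm
    have hcc := D.cc_lt hl hm hlt hx1 hx2
    have hsub : Icc (cc a b x l) (cc a b x m) ⊆ {s | (x, s) ∈ chordDomain a b L} :=
      fun s hs => D.ivt hl hm hlm hx1.le hx2.le hs.1 hs.2
    have hconc : ConcaveOn ℝ (Icc (cc a b x l) (cc a b x m)) (fun s => B (x, s)) := by
      refine ⟨convex_Icc _ _, ?_⟩
      intro s hs t ht α β hα hβ hαβ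
      have hcomb : ∀ u v : ℝ, u + v = 1 → u • (x, s) + v • (x, t) = (x, u • s + v • t) := by
        intro u v huv
        ext
        · simp only [Prod.fst_add, Prod.smul_fst, smul_eq_mul]
          rw [← add_mul, huv, one_mul]
        · simp
      have := hLC (x, s) (x, t) (hsub hs) (hsub ht) (by
        rintro _ ⟨u, v, hu, hv, huv, rfl⟩
        rw [hcomb u v huv]
        exact hsub (convex_Icc _ _ hs ht hu hv huv)) α β hα hβ hαβ
      rw [hcomb α β hαβ] at this
      exact this
    have d1 := (D.slice hB hl hx1 hx2 (D.dFF' hl (hc l hl) x)).mono hsub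
    have d2 := (D.slice hB hm (p.trans_lt hx1) (hx2.trans_le q) (D.dFF' hm (hc m hm) x)).mono hsub
    exact (hconc.le_slope_of_hasDerivWithinAt (left_mem_Icc.2 hcc.le) (right_mem_Icc.2 hcc.le) hcc d2).trans
      (hconc.slope_le_of_hasDerivWithinAt (left_mem_Icc.2 hcc.le) (right_mem_Icc.2 hcc.le) hcc d1)
  intro ℓ h
  have h1 := hanti.derivWithin_nonpos (x := ℓ)
  rw [(D.dt2 h).derivWithin (uniqueDiffOn_convex D.conv D.nt ℓ h)] at h1
  have hlt := D.lt h
  have h2 := D.drel hc h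
  have h3 : b' ℓ * DRdiff f (a ℓ) (b ℓ) - a' ℓ * DLdiff f (a ℓ) (b ℓ) ≤ 0 := by
    by_contra hcon
    push Not at hcon
    exact absurd (div_pos hcon (show 0 < 2 * (b ℓ - a ℓ) by linarith)) (not_lt.2 h1)
  by_contra hcon
  push Not at hcon
  have := mul_neg_of_neg_of_pos (D.na ℓ h) hcon
  linarith

theorem partI (D : CData f L a b a' b') {B : ℝ × ℝ → ℝ}
    (hB : ∀ ℓ ∈ L, ∀ x ∈ chordSeg a b ℓ, B x = FF f a b x.1 ℓ) {x : ℝ × ℝ}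
    (hx : x ∈ interior (chordDomain a b L)) {ℓ d : ℝ} (h : ℓ ∈ L) (hs : x ∈ chordSeg a b ℓ)
    (hd : HasDerivWithinAt (FF f a b x.1) (d * (-a' ℓ * (b ℓ - x.1) + b' ℓ * (x.1 - a ℓ))) L ℓ) :
    HasDerivAt (fun s => B (x.1, s)) d x.2 := by
  obtain ⟨h1, h2⟩ := D.int_strict hx
  obtain ⟨h3, h4, h5⟩ := h2 ℓ h hs
  have := D.slice hB h h3 h4 hd
  rw [← h5] at this
  exact this.hasDerivAt h1

theorem const_imp (D : CData f L a b a' b') {B : ℝ × ℝ → ℝ}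
    (hB : ∀ ℓ ∈ L, ∀ x ∈ chordSeg a b ℓ, B x = FF f a b x.1 ℓ)
    (H : ∀ ℓ ∈ L, ∀ x ∈ interior (chordDomain a b L),
          ∀ y ∈ interior (chordDomain a b L),
          x ∈ chordSeg a b ℓ → y ∈ chordSeg a b ℓ →
          deriv (fun s => B (x.1, s)) x.2 = deriv (fun s => B (y.1, s)) y.2) :
    ∀ ℓ ∈ L, chordEq f (a ℓ) (b ℓ) := by
  have key : ∀ ℓ ∈ interior L, chordEq f (a ℓ) (b ℓ) := by
    intro ℓ hi
    have h := interior_subset hi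
    have hlt := D.lt h
    have na := D.na ℓ h
    have pb := D.pb ℓ h
    set μ := (f (b ℓ) - f (a ℓ)) / (b ℓ - a ℓ) with hμ
    have val : ∀ x, a ℓ < x → x < b ℓ → deriv (fun s => B (x, s)) (cc a b x ℓ) * 
        (-a' ℓ * (b ℓ - x) + b' ℓ * (x - a ℓ)) =
        (a' ℓ * (deriv f (a ℓ) - μ) * (b ℓ - x) +
        b' ℓ * (deriv f (b ℓ) - μ) * (x - a ℓ)) / (b ℓ - a ℓ) := by
      intro x h1 h2
      have hpos : 0 < -a' ℓ * (b ℓ - x) + b' ℓ * (x - a ℓ) := by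
        have := mul_pos (show 0 < -a' ℓ by linarith) (sub_pos.2 h2)
        have := mul_pos (D.pb ℓ h) (sub_pos.2 h1)
        linarith
      have := D.partI hB (D.int_mem hi h1 h2) h
        ((mem_chordSeg_iff hlt _).2 ⟨h1.le, h2.le, rfl⟩)
        ((D.dFF h x).congr_deriv (div_mul_cancel₀ _ hpos.ne').symm)
      rw [this.deriv, div_mul_cancel₀ _ hpos.ne']
    obtain ⟨x, hx1, hx2⟩ := exists_between hlt
    obtain ⟨y, hy1, hy2⟩ := exists_between hx2
    have v1 := val x hx1 hx2
    have v2 := val y (hx1.trans hy1) hy2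
    have e := H ℓ h _ (D.int_mem hi hx1 hx2) _ (D.int_mem hi (hx1.trans hy1) hy2)
      ((mem_chordSeg_iff hlt _).2 ⟨hx1.le, hx2.le, rfl⟩)
      ((mem_chordSeg_iff hlt _).2 ⟨(hx1.trans hy1).le, hy2.le, rfl⟩)
    simp only at e
    rw [← e] at v2
    generalize deriv (fun s => B (x, s)) (cc a b x ℓ) = d at v1 v2
    have hne : b ℓ - a ℓ ≠ 0 := by linarith
    rw [eq_div_iff hne] at v1 v2
    -- the two coefficients vanish
    set p := -a' ℓ * (d * (b ℓ - a ℓ) + (deriv f (a ℓ) - μ)) with hp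
    set q := b' ℓ * (d * (b ℓ - a ℓ) - (deriv f (b ℓ) - μ)) with hq
    have w1 : p * (b ℓ - x) + q * (x - a ℓ) = 0 := by rw [hp, hq]; linarith
    have w2 : p * (b ℓ - y) + q * (y - a ℓ) = 0 := by rw [hp, hq]; linarith
    have hpq : (q - p) * (y - x) = 0 := by linarith
    have hpq' : q = p := by
      rcases mul_eq_zero.1 hpq with h | h <;> linarith
    have hp0 : p * (b ℓ - a ℓ) = 0 := by rw [hpq'] at w1; linarith
    have hp0' : p = 0 := (mul_eq_zero.1 hp0).resolve_right hne
    have hq0 : q = 0 := hpq'.trans hp0'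
    have z1 := (mul_eq_zero.1 (hp ▸ hp0')).resolve_left (by linarith)
    have z2 := (mul_eq_zero.1 (hq ▸ hq0)).resolve_left (by linarith)
    unfold chordEq
    rw [← hμ]
    linarith
  have cfa : ContinuousOn (fun y => f (a y)) L := fun y hy => (D.fa hy).continuousWithinAt
  have cfb : ContinuousOn (fun y => f (b y)) L := fun y hy => (D.fb hy).continuousWithinAt
  have cffa : ContinuousOn (fun y => deriv f (a y)) L := fun y hy => (D.ffa hy).continuousWithinAt
  have cffb : ContinuousOn (fun y => deriv f (b y)) L := fun y hy => (D.ffb hy).continuousWithinAt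
  have ca := D.cont_a
  have cb := D.cont_b
  have E : EqOn (fun ℓ => 2 * (f (b ℓ) - f (a ℓ)) - (b ℓ - a ℓ) * (deriv f (a ℓ) + deriv f (b ℓ)))
      (fun _ => (0:ℝ)) L := by
    refine Set.EqOn.of_subset_closure (s := interior L) ?_ ?_ continuousOn_const interior_subset ?_
    · intro y hy
      exact (D.chordEq_iff (interior_subset hy)).1 (key y hy)
    · exact (continuousOn_const.mul (cfb.sub cfa)).sub ((cb.sub ca).mul (cffa.add cffb))
    · rw [D.conv.closure_interior_eq_closure_of_nonempty_interior D.nt]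
      exact subset_closure
  intro ℓ h
  exact (D.chordEq_iff h).2 (E h)

end CData

theorem stmt15 (ε : ℝ) (hε : 0 < ε) (f : ℝ → ℝ) (hf : ContDiff ℝ 2 f)
    (L : Set ℝ) (hL : L ⊆ Ioc 0 (2 * ε)) (hLord : OrdConnected L)
    (hLnontriv : ∃ ℓ₁ ∈ L, ∃ ℓ₂ ∈ L, ℓ₁ < ℓ₂)
    (a b a' b' : ℝ → ℝ)
    (hab : ∀ ℓ ∈ L, b ℓ - a ℓ = ℓ)
    (ha' : ∀ ℓ ∈ L, HasDerivWithinAt a (a' ℓ) L ℓ ∧ a' ℓ < 0)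
    (hb' : ∀ ℓ ∈ L, HasDerivWithinAt b (b' ℓ) L ℓ ∧ 0 < b' ℓ)
    (B : ℝ × ℝ → ℝ)
    (hB : ∀ ℓ ∈ L, ∀ x ∈ chordSeg a b ℓ,
      B x = ((f (b ℓ) - f (a ℓ)) * x.1 + b ℓ * f (a ℓ) - a ℓ * f (b ℓ)) /
        (b ℓ - a ℓ)) :
    (((∀ x ∈ interior (chordDomain a b L),
          DifferentiableAt ℝ (fun y => B (x.1, y)) x.2) ∧
        (∀ ℓ ∈ L, ∀ x ∈ interior (chordDomain a b L),
          ∀ y ∈ interior (chordDomain a b L),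
          x ∈ chordSeg a b ℓ → y ∈ chordSeg a b ℓ →
          deriv (fun s => B (x.1, s)) x.2 = deriv (fun s => B (y.1, s)) y.2)) ↔
      ∀ ℓ ∈ L, chordEq f (a ℓ) (b ℓ)) ∧
    ((∀ ℓ ∈ L, chordEq f (a ℓ) (b ℓ)) →
      (∀ ℓ ∈ L, ∀ x ∈ interior (chordDomain a b L), x ∈ chordSeg a b ℓ →
        deriv (fun s => B (x.1, s)) x.2 =
          (deriv f (b ℓ) - deriv f (a ℓ)) / (2 * (b ℓ - a ℓ))) ∧
      (∀ ℓ ∈ L,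
        (DLdiff f (a ℓ) (b ℓ) ≤ 0 ∧ DRdiff f (a ℓ) (b ℓ) ≤ 0) ∨
        (0 ≤ DLdiff f (a ℓ) (b ℓ) ∧ 0 ≤ DRdiff f (a ℓ) (b ℓ))) ∧
      (LocallyConcaveOn (chordDomain a b L) B ↔
        ∀ ℓ ∈ L, DLdiff f (a ℓ) (b ℓ) ≤ 0) ∧
      ((∀ ℓ ∈ L, DLdiff f (a ℓ) (b ℓ) ≤ 0) ↔
        ∀ ℓ ∈ L, DRdiff f (a ℓ) (b ℓ) ≤ 0)) := by
  have D : CData f L a b a' b' :=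
    { hf := hf
      pos := fun ℓ h => (hL h).1
      conv := hLord.convex
      nt := by
        obtain ⟨l, hl, m, hm, hlm⟩ := hLnontriv
        have : Icc l m ⊆ L := hLord.out hl hm
        refine Set.Nonempty.mono (interior_mono this) ?_
        rw [interior_Icc]
        exact nonempty_Ioo.2 hlm
      hab := hab
      ha := fun ℓ h => (ha' ℓ h).1
      hb := fun ℓ h => (hb' ℓ h).1
      na := fun ℓ h => (ha' ℓ h).2
      pb := fun ℓ h => (hb' ℓ h).2 }
  have hB' : ∀ ℓ ∈ L, ∀ x ∈ chordSeg a b ℓ, B x = FF f a b x.1 ℓ := hB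
  have hder : (∀ ℓ ∈ L, chordEq f (a ℓ) (b ℓ)) → ∀ ℓ ∈ L,
      ∀ x ∈ interior (chordDomain a b L), x ∈ chordSeg a b ℓ →
        HasDerivAt (fun s => B (x.1, s)) (t2 f a b ℓ) x.2 := fun hc ℓ h x hx hs =>
    D.partI hB' hx h hs (D.dFF' h (hc ℓ h) x.1)
  have hiff : (∀ ℓ ∈ L, chordEq f (a ℓ) (b ℓ)) → ∀ ℓ ∈ L,
      (DLdiff f (a ℓ) (b ℓ) ≤ 0 ↔ DRdiff f (a ℓ) (b ℓ) ≤ 0) ∧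
      (0 ≤ DLdiff f (a ℓ) (b ℓ) → 0 ≤ DRdiff f (a ℓ) (b ℓ)) := by
    intro hc ℓ h
    have e := D.drel hc h
    have na := D.na ℓ h
    have pb := D.pb ℓ h
    refine ⟨⟨fun hd => ?_, fun hd => ?_⟩, fun hd => ?_⟩
    · by_contra hcon
      nlinarith [mul_pos pb (not_le.1 hcon), mul_nonneg_of_nonpos_of_nonpos na.le hd]
    · by_contra hcon
      nlinarith [mul_neg_of_neg_of_pos na (not_le.1 hcon), mul_nonpos_of_nonneg_of_nonpos pb.le hd]
    · by_contra hcon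
      nlinarith [mul_neg_of_pos_of_neg pb (not_le.1 hcon), mul_nonpos_of_nonpos_of_nonneg na.le hd]
  refine ⟨⟨fun H => D.const_imp hB' H.2, fun hc => ⟨?_, ?_⟩⟩, fun hc => ⟨?_, ?_, ⟨?_, ?_⟩, ?_⟩⟩
  · intro x hx
    obtain ⟨ℓ, h, hs⟩ := interior_subset hx
    exact (hder hc ℓ h x hx hs).differentiableAt
  · intro ℓ h x hx y hy hsx hsy
    rw [(hder hc ℓ h x hx hsx).deriv, (hder hc ℓ h y hy hsy).deriv]
  · intro ℓ h x hx hs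
    exact (hder hc ℓ h x hx hs).deriv
  · intro ℓ h
    rcases le_total (DLdiff f (a ℓ) (b ℓ)) 0 with hd | hd
    · exact Or.inl ⟨hd, (hiff hc ℓ h).1.1 hd⟩
    · exact Or.inr ⟨hd, (hiff hc ℓ h).2 hd⟩
  · exact D.nec hB' hc
  · exact D.suff hB' hc
  · exact forall₂_congr fun ℓ h => (hiff hc ℓ h).1
end

section
/- Let f be three times continuously differentiable on an open interval U ⊆ ℝ. Let L be a nondegenerate interval and let a, b : L → ℝ be differentiable with values in U, a(ℓ) < b(ℓ) and b(ℓ) − a(ℓ) = ℓ for all ℓ ∈ L, and suppose each pair (a(ℓ), b(ℓ)) satisfies the chord equation. Then for every ℓ ∈ L: (i) D_R(a(ℓ),b(ℓ))·b'(ℓ) + D_L(a(ℓ),b(ℓ))·a'(ℓ) = 0; (ii) ℓ ↦ D_L(a(ℓ),b(ℓ)) is differentiable with derivative (f'''(a(ℓ)) + 2·D_L(a(ℓ),b(ℓ))/(b(ℓ) − a(ℓ)))·a'(ℓ); (iii) ℓ ↦ D_R(a(ℓ),b(ℓ)) is differentiable with derivative (f'''(b(ℓ)) − 2·D_R(a(ℓ),b(ℓ))/(b(ℓ)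 − a(ℓ)))·b'(ℓ). -/
open Set

theorem stmt18 (U : Set ℝ) (hUopen : IsOpen U) (hUord : OrdConnected U)
    (f : ℝ → ℝ) (hf : ContDiffOn ℝ 3 f U)
    (L : Set ℝ) (hLord : OrdConnected L)
    (hLnontriv : ∃ ℓ₁ ∈ L, ∃ ℓ₂ ∈ L, ℓ₁ < ℓ₂)
    (a b a' b' : ℝ → ℝ)
    (haU : ∀ ℓ ∈ L, a ℓ ∈ U) (hbU : ∀ ℓ ∈ L, b ℓ ∈ U)
    (hab : ∀ ℓ ∈ L, a ℓ < b ℓ ∧ b ℓ - a ℓ = ℓ)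
    (ha' : ∀ ℓ ∈ L, HasDerivWithinAt a (a' ℓ) L ℓ)
    (hb' : ∀ ℓ ∈ L, HasDerivWithinAt b (b' ℓ) L ℓ)
    (hchord : ∀ ℓ ∈ L, chordEq f (a ℓ) (b ℓ)) :
    ∀ ℓ ∈ L,
      DRdiff f (a ℓ) (b ℓ) * b' ℓ + DLdiff f (a ℓ) (b ℓ) * a' ℓ = 0 ∧
      HasDerivWithinAt (fun s => DLdiff f (a s) (b s))
        ((deriv (deriv (deriv f)) (a ℓ) +
            2 * DLdiff f (a ℓ) (b ℓ) / (b ℓ - a ℓ)) * a' ℓ) L ℓ ∧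
      HasDerivWithinAt (fun s => DRdiff f (a s) (b s))
        ((deriv (deriv (deriv f)) (b ℓ) -
            2 * DRdiff f (a ℓ) (b ℓ) / (b ℓ - a ℓ)) * b' ℓ) L ℓ := by
  have hD1 : ∀ x ∈ U, HasDerivAt f (deriv f x) x := fun x hx =>
    ((hf.differentiableOn (by norm_num)).differentiableAt (hUopen.mem_nhds hx)).hasDerivAt
  have hf1 : ContDiffOn ℝ 2 (deriv f) U := hf.deriv_of_isOpen hUopen (by norm_num)
  have hf2 : ContDiffOn ℝ 1 (deriv (deriv f)) U := hf1.deriv_of_isOpen hUopen (by norm_num)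
  have hD2 : ∀ x ∈ U, HasDerivAt (deriv f) (deriv (deriv f) x) x := fun x hx =>
    ((hf1.differentiableOn (by norm_num)).differentiableAt (hUopen.mem_nhds hx)).hasDerivAt
  have hD3 : ∀ x ∈ U, HasDerivAt (deriv (deriv f)) (deriv (deriv (deriv f)) x) x := fun x hx =>
    ((hf2.differentiableOn (by norm_num)).differentiableAt (hUopen.mem_nhds hx)).hasDerivAt
  have hUD : UniqueDiffOn ℝ L := by
    obtain ⟨p, hp, q, hq, hpq⟩ := hLnontriv
    apply uniqueDiffOn_convex hLord.convex
    have h1 : Ioo p q ⊆ interior L :=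
      interior_maximal (Ioo_subset_Icc_self.trans (hLord.out hp hq)) isOpen_Ioo
    exact (nonempty_Ioo.2 hpq).mono h1
  intro ℓ hℓ
  have hA := ha' ℓ hℓ
  have hB := hb' ℓ hℓ
  have hne : b ℓ - a ℓ ≠ 0 := (sub_pos.2 (hab ℓ hℓ).1).ne'
  have fa := (hD1 _ (haU ℓ hℓ)).comp_hasDerivWithinAt ℓ hA
  have fb := (hD1 _ (hbU ℓ hℓ)).comp_hasDerivWithinAt ℓ hB
  have ga := (hD2 _ (haU ℓ hℓ)).comp_hasDerivWithinAt ℓ hA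
  have gb := (hD2 _ (hbU ℓ hℓ)).comp_hasDerivWithinAt ℓ hB
  have ka := (hD3 _ (haU ℓ hℓ)).comp_hasDerivWithinAt ℓ hA
  have kb := (hD3 _ (hbU ℓ hℓ)).comp_hasDerivWithinAt ℓ hB
  have h1 := (fb.sub fa).const_mul 2
  have h2 := (hB.sub hA).mul (ga.add gb)
  have h3 := h2.congr (f₁ := fun s => 2 * ((f ∘ b - f ∘ a) s)) (fun s hs => by
      have hc := hchord s hs
      have hn : b s - a s ≠ 0 := (sub_pos.2 (hab s hs).1).ne'
      unfold chordEq at hc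
      simp only [Pi.sub_apply, Pi.add_apply, Pi.mul_apply, Function.comp]
      field_simp at hc
      linarith) (by
      have hc := hchord ℓ hℓ
      unfold chordEq at hc
      simp only [Pi.sub_apply, Pi.add_apply, Pi.mul_apply, Function.comp]
      field_simp at hc
      linarith)
  have h4 := (hUD ℓ hℓ).eq_deriv _ h1 h3
  simp only [Pi.sub_apply, Pi.add_apply, Function.comp] at h4
  have hi : DRdiff f (a ℓ) (b ℓ) * b' ℓ + DLdiff f (a ℓ) (b ℓ) * a' ℓ = 0 := by
    unfold DRdiff DLdiff
    field_simp
    linarith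
  have hq := (gb.sub ga).div (hB.sub hA) hne
  have hL : DLdiff f (a ℓ) (b ℓ) =
    deriv (deriv f) (a ℓ) - (deriv f (b ℓ) - deriv f (a ℓ)) / (b ℓ - a ℓ) := rfl
  have hR : DRdiff f (a ℓ) (b ℓ) =
    deriv (deriv f) (b ℓ) - (deriv f (b ℓ) - deriv f (a ℓ)) / (b ℓ - a ℓ) := rfl
  have key : ((deriv (deriv f) (b ℓ) * b' ℓ - deriv (deriv f) (a ℓ) * a' ℓ) * (b ℓ - a ℓ)
      - (deriv f (b ℓ) - deriv f (a ℓ)) * (b' ℓ - a' ℓ)) / (b ℓ - a ℓ) ^ 2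
      = (DRdiff f (a ℓ) (b ℓ) * b' ℓ - DLdiff f (a ℓ) (b ℓ) * a' ℓ) / (b ℓ - a ℓ) := by
    rw [hL, hR]
    field_simp
    ring
  refine ⟨hi, ?_, ?_⟩
  · refine (ka.sub hq).congr_deriv ?_
    simp only [Pi.sub_apply, Function.comp]
    rw [key, show DRdiff f (a ℓ) (b ℓ) * b' ℓ = - (DLdiff f (a ℓ) (b ℓ) * a' ℓ) by linarith]
    ring
  · refine (kb.sub hq).congr_deriv ?_
    simp only [Pi.sub_apply, Function.comp]
    rw [key, show DLdiff f (a ℓ) (b ℓ) * a' ℓ = - (DRdiff f (a ℓ) (b ℓ) * b' ℓ) by linarith]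
    ring
end

section
/- Let ε > 0 and w ∈ ℝ, and define φ : (0,1] → ℝ by φ(s) = ε·log s + w + ε. Then: (i) ∫₀¹ φ(s)ds = w and ∫₀¹ φ(s)²ds = w² + ε²; (ii) for every subinterval [α,β] ⊆ [0,1] with α < β one has ⟨φ²⟩_{[α,β]} − (⟨φ⟩_{[α,β]})² ≤ ε², i.e. φ ∈ BMO_ε([0,1]); (iii) if moreover 0 < ε < ε₀ and f ∈ 𝔚_{ε₀}, then f∘φ is integrable on (0,1) and ∫₀¹ f(φ(s))ds = f(w + ε) − e^{−(w+ε)/ε}∫_{−∞}^{w+ε} f'(t)e^{t/ε}dt. In particular, the Bellman point of φ is W = (w, w² + ε²) on the upper parabola, and ⟨f∘φ⟩_{[0,1]} equals the candidate value m_R(w+ε)·(w − (w+ε)) + f(w+ε), where m_R(u) = ε⁻¹e^{−u/ε}∫_{−∞}^u f'(t)e^{t/ε}dt. -/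
open MeasureTheory Set Real

theorem aux_cont : ContinuousOn (fun s : ℝ => s * Real.log s ^ 2 - 2 * (s * Real.log s) + 2 * s) (Ici 0) := by
  have h1 : Continuous (fun s : ℝ => 4 * (√s * Real.log (√s)) ^ 2 - 2 * (s * Real.log s) + 2 * s) := by
    have h := Real.continuous_mul_log.comp Real.continuous_sqrt
    have h' := Real.continuous_mul_log
    exact ((continuous_const.mul (h.pow 2)).sub (continuous_const.mul h')).add (by fun_prop)
  refine h1.continuousOn.congr ?_
  intro s hs
  have hs : 0 ≤ s := hs
  have h2 : √s ^ 2 = s := Real.sq_sqrt hs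
  simp only [Real.log_sqrt hs, mul_pow, h2]
  ring

theorem aux_deriv (s : ℝ) (hs : 0 < s) :
    HasDerivAt (fun s : ℝ => s * Real.log s ^ 2 - 2 * (s * Real.log s) + 2 * s) (Real.log s ^ 2) s := by
  have hl := Real.hasDerivAt_log hs.ne'
  have hi := hasDerivAt_id' s
  have := ((hi.mul (hl.pow 2)).sub ((hi.mul hl).const_mul 2)).add (hi.const_mul 2)
  refine this.congr_deriv ?_
  simp
  field_simp
  ring

theorem aux_int (a b : ℝ) (ha : 0 ≤ a) (hab : a ≤ b) :
    IntervalIntegrable (fun s : ℝ => Real.log s ^ 2) volume a b := by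
  apply intervalIntegral.intervalIntegrable_deriv_of_nonneg
    (g := fun s : ℝ => s * Real.log s ^ 2 - 2 * (s * Real.log s) + 2 * s)
  · rw [uIcc_of_le hab]
    exact aux_cont.mono fun x hx => ha.trans hx.1
  · intro x hx
    rw [min_eq_left hab] at hx
    exact aux_deriv x (ha.trans_lt hx.1)
  · intro x _
    positivity

theorem aux_sq (a b : ℝ) (ha : 0 ≤ a) (hab : a ≤ b) :
    ∫ s in a..b, Real.log s ^ 2 = (b * Real.log b ^ 2 - 2 * (b * Real.log b) + 2 * b)
      - (a * Real.log a ^ 2 - 2 * (a * Real.log a) + 2 * a) :=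
  intervalIntegral.integral_eq_sub_of_hasDerivAt_of_le hab
    (aux_cont.mono fun x hx => ha.trans hx.1) (fun x hx => aux_deriv x (ha.trans_lt hx.1))
    (aux_int a b ha hab)

theorem aux_phi_int (ε c a b : ℝ) :
    IntervalIntegrable (fun s : ℝ => ε * Real.log s + c) volume a b :=
  (intervalIntegral.intervalIntegrable_log'.const_mul ε).add intervalIntegrable_const

theorem aux_phi_sq_int (ε c a b : ℝ) (ha : 0 ≤ a) (hab : a ≤ b) :
    IntervalIntegrable (fun s : ℝ => (ε * Real.log s + c) ^ 2) volume a b := by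
  have := (((aux_int a b ha hab).const_mul (ε ^ 2)).add
    ((intervalIntegral.intervalIntegrable_log' (a := a) (b := b)).const_mul (2 * ε * c))).add
    (intervalIntegrable_const (c := c ^ 2))
  refine this.congr ?_
  intro s _
  simp
  ring

theorem aux_phi (ε c a b : ℝ) : ∫ s in a..b, (ε * Real.log s + c) =
    ε * (b * Real.log b - a * Real.log a - b + a) + c * (b - a) := by
  rw [intervalIntegral.integral_add (intervalIntegral.intervalIntegrable_log'.const_mul ε)
    intervalIntegrable_const, intervalIntegral.integral_const_mul, integral_log,
    intervalIntegral.integral_const]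
  simp
  ring

theorem aux_phi_sq (ε c a b : ℝ) (ha : 0 ≤ a) (hab : a ≤ b) :
    ∫ s in a..b, (ε * Real.log s + c) ^ 2 =
    ε ^ 2 * ((b * Real.log b ^ 2 - 2 * (b * Real.log b) + 2 * b)
      - (a * Real.log a ^ 2 - 2 * (a * Real.log a) + 2 * a))
    + 2 * ε * c * (b * Real.log b - a * Real.log a - b + a) + c ^ 2 * (b - a) := by
  have h : ∀ s : ℝ, (ε * Real.log s + c) ^ 2 =
    ε ^ 2 * Real.log s ^ 2 + 2 * ε * c * Real.log s + c ^ 2 := fun s => by ring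
  simp only [h]
  have h1 := (aux_int a b ha hab).const_mul (ε ^ 2)
  have h2 := (intervalIntegral.intervalIntegrable_log' (a := a) (b := b)).const_mul (2 * ε * c)
  rw [intervalIntegral.integral_add (h1.add h2) intervalIntegrable_const,
    intervalIntegral.integral_add h1 h2,
    intervalIntegral.integral_const_mul, intervalIntegral.integral_const_mul, integral_log,
    intervalIntegral.integral_const, aux_sq a b ha hab]
  simp
  ring

theorem aux_bmo (ε c a b : ℝ) (ha : 0 ≤ a) (hab : a < b) :
    intAvg (fun s => (ε * Real.log s + c) ^ 2) a b -
        (intAvg (fun s => ε * Real.log s + c) a b) ^ 2 ≤ ε ^ 2 := by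
  unfold intAvg
  rw [aux_phi, aux_phi_sq ε c a b ha hab.le]
  have hd : 0 < b - a := sub_pos.2 hab
  generalize Real.log a = A
  generalize Real.log b = B
  have : (ε ^ 2 * ((b * B ^ 2 - 2 * (b * B) + 2 * b) - (a * A ^ 2 - 2 * (a * A) + 2 * a))
    + 2 * ε * c * (b * B - a * A - b + a) + c ^ 2 * (b - a)) / (b - a) -
    ((ε * (b * B - a * A - b + a) + c * (b - a)) / (b - a)) ^ 2
    = ε ^ 2 - ε ^ 2 * (a * b * (B - A) ^ 2) / (b - a) ^ 2 := by
    field_simp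
    ring
  rw [this]
  have : 0 ≤ ε ^ 2 * (a * b * (B - A) ^ 2) / (b - a) ^ 2 := by
    have : 0 ≤ b := ha.trans hab.le
    positivity
  linarith

theorem aux_exp_int (ε ε₀ u : ℝ) (hε : 0 < ε) (h : ε < ε₀) (g : ℝ → ℝ) (hg : Continuous g)
    (hi : Integrable (fun t => g t * Real.exp (-|t| / ε₀))) :
    IntegrableOn (fun t => g t * Real.exp (t / ε)) (Iic u) := by
  have h0 : 0 < ε₀ := hε.trans h
  refine Integrable.mono' ((hi.norm.const_mul (Real.exp (2 * |u| / ε))).integrableOn (s := Iic u))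
    (by exact (Continuous.aestronglyMeasurable (by fun_prop))) ?_
  refine (ae_restrict_iff' measurableSet_Iic).2 (Filter.Eventually.of_forall fun t ht => ?_)
  have ht : t ≤ u := ht
  simp only [norm_mul, Real.norm_eq_abs, Real.abs_exp]
  have key : t / ε ≤ 2 * |u| / ε + -|t| / ε₀ := by
    rcases le_total t 0 with h1 | h1
    · rw [abs_of_nonpos h1, neg_neg]
      have : t / ε ≤ t / ε₀ := by
        rw [div_le_div_iff₀ hε h0]; nlinarith
      have : 0 ≤ 2 * |u| / ε := by positivity
      linarith
    · rw [abs_of_nonneg h1, abs_of_nonneg (h1.trans ht)]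
      have h2 : t / ε ≤ u / ε := by gcongr
      have h3 : t / ε₀ ≤ t / ε := by gcongr
      have : 2 * u / ε = u / ε + u / ε := by ring
      have : -t / ε₀ = -(t / ε₀) := by ring
      linarith
  have := Real.exp_le_exp.2 key
  rw [Real.exp_add] at this
  calc |g t| * Real.exp (t / ε) ≤ |g t| * (Real.exp (2 * |u| / ε) * Real.exp (-|t| / ε₀)) := by gcongr
    _ = _ := by ring

theorem aux_main (ε ε₀ u : ℝ) (hε : 0 < ε) (h : ε < ε₀) (f : ℝ → ℝ) (hf : ContDiff ℝ 2 f)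
    (hi : Integrable (fun t => f t * Real.exp (-|t| / ε₀)))
    (hi' : Integrable (fun t => deriv f t * Real.exp (-|t| / ε₀))) :
    IntegrableOn (fun s => f (ε * Real.log s + u)) (Ioc 0 1) ∧
      (∫ s in Ioc (0:ℝ) 1, f (ε * Real.log s + u)) =
        f u - Real.exp (-u / ε) * ∫ t in Iic u, deriv f t * Real.exp (t / ε) := by
  have I1 := aux_exp_int ε ε₀ u hε h f hf.continuous hi
  have I2 := aux_exp_int ε ε₀ u hε h (deriv f) (hf.continuous_deriv (by norm_num)) hi'
  have hd : ∀ t, HasDerivAt (fun t => f t * Real.exp (t / ε))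
      (deriv f t * Real.exp (t / ε) + ε⁻¹ * (f t * Real.exp (t / ε))) t := by
    intro t
    have h1 := (hf.differentiable (by norm_num) t).hasDerivAt
    have h2 := ((hasDerivAt_id' t).div_const ε).exp
    refine (h1.mul h2).congr_deriv ?_
    ring
  have I3 : IntegrableOn (fun t => deriv f t * Real.exp (t / ε) + ε⁻¹ * (f t * Real.exp (t / ε)))
    (Iic u) := I2.add (I1.const_mul _)
  have hz := tendsto_zero_of_hasDerivAt_of_integrableOn_Iic (fun t _ => hd t) I3 I1
  have hp := integral_Iic_of_hasDerivAt_of_tendsto' (fun t _ => hd t) I3 hz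
  rw [integral_add I2 (I1.const_mul _), integral_const_mul, sub_zero] at hp
  -- change of variables
  have hh : ∀ t ∈ Iic u, HasDerivWithinAt (fun t => Real.exp ((t - u) / ε))
      (Real.exp ((t - u) / ε) * ε⁻¹) (Iic u) t := by
    intro t _
    have := (((hasDerivAt_id' t).sub_const u).div_const ε).exp
    refine (this.congr_deriv ?_).hasDerivWithinAt
    ring
  have hinj : InjOn (fun t => Real.exp ((t - u) / ε)) (Iic u) := by
    intro x _ y _ hxy
    have := Real.exp_injective hxy
    field_simp at this
    linarith
  have himg : (fun t => Real.exp ((t - u) / ε)) '' Iic u = Ioc 0 1 := by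
    ext s
    constructor
    · rintro ⟨t, ht, rfl⟩
      have ht : t ≤ u := ht
      refine ⟨Real.exp_pos _, Real.exp_le_one_iff.2 ?_⟩
      exact div_nonpos_of_nonpos_of_nonneg (by linarith) hε.le
    · rintro ⟨h0, h1⟩
      refine ⟨ε * Real.log s + u, ?_, ?_⟩
      · have := Real.log_nonpos h0.le h1
        simp only [mem_Iic]
        nlinarith
      · simp only [add_sub_cancel_right]
        rw [mul_div_cancel_left₀ _ hε.ne', Real.exp_log h0]
  have heq : ∀ t, |Real.exp ((t - u) / ε) * ε⁻¹| • f (ε * Real.log (Real.exp ((t - u) / ε)) + u)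
      = (Real.exp (-u / ε) * ε⁻¹) * (f t * Real.exp (t / ε)) := by
    intro t
    rw [abs_of_pos (by positivity), Real.log_exp, mul_div_cancel₀ _ hε.ne', sub_add_cancel,
      show (t - u) / ε = -u / ε + t / ε by ring, Real.exp_add, smul_eq_mul]
    ring
  have c1 := integrableOn_image_iff_integrableOn_abs_deriv_smul measurableSet_Iic hh hinj
    (fun s => f (ε * Real.log s + u))
  have c2 := integral_image_eq_integral_abs_deriv_smul measurableSet_Iic hh hinj
    (fun s => f (ε * Real.log s + u))
  rw [himg] at c1 c2
  simp only [heq] at c1 c2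
  refine ⟨c1.2 (I1.const_mul _), ?_⟩
  rw [c2, integral_const_mul]
  have he : Real.exp (-u / ε) * Real.exp (u / ε) = 1 := by
    rw [← Real.exp_add]; ring_nf; simp
  linear_combination Real.exp (-u / ε) * hp + f u * he

theorem stmt19 (ε w : ℝ) (hε : 0 < ε) :
    (∫ s in (0:ℝ)..1, (ε * Real.log s + w + ε)) = w ∧
    (∫ s in (0:ℝ)..1, (ε * Real.log s + w + ε) ^ 2) = w ^ 2 + ε ^ 2 ∧
    (∀ α β : ℝ, 0 ≤ α → α < β → β ≤ 1 →
      intAvg (fun s => (ε * Real.log s + w + ε) ^ 2) α β -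
        (intAvg (fun s => ε * Real.log s + w + ε) α β) ^ 2 ≤ ε ^ 2) ∧
    memBMOe ε 0 1 (fun s => ε * Real.log s + w + ε) ∧
    (∀ ε₀ : ℝ, ε < ε₀ → ∀ f f3 : ℝ → ℝ, memWcl ε₀ f f3 →
      IntegrableOn (fun s => f (ε * Real.log s + w + ε)) (Ioo 0 1) ∧
      (∫ s in (0:ℝ)..1, f (ε * Real.log s + w + ε)) =
        f (w + ε) - Real.exp (-(w + ε) / ε) *
          ∫ t in Iic (w + ε), deriv f t * Real.exp (t / ε) ∧
      (∫ s in (0:ℝ)..1, f (ε * Real.log s + w + ε)) =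
        (ε⁻¹ * Real.exp (-(w + ε) / ε) *
            ∫ t in Iic (w + ε), deriv f t * Real.exp (t / ε)) *
          (w - (w + ε)) + f (w + ε)) := by
  have e : ∀ s : ℝ, ε * Real.log s + w + ε = ε * Real.log s + (w + ε) := fun s => by ring
  simp only [e]
  refine ⟨?_, ?_, fun a b ha hab _ => aux_bmo ε _ a b ha hab,
    ⟨?_, ?_, fun a b ha hab _ => aux_bmo ε _ a b ha hab⟩, ?_⟩
  · rw [aux_phi]
    simp
  · rw [aux_phi_sq _ _ _ _ le_rfl zero_le_one]
    simp
    ring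
  · exact ((intervalIntegrable_iff_integrableOn_Ioc_of_le zero_le_one).1
      (aux_phi_int ε (w + ε) 0 1)).mono_set Ioo_subset_Ioc_self
  · exact ((intervalIntegrable_iff_integrableOn_Ioc_of_le zero_le_one).1
      (aux_phi_sq_int ε (w + ε) 0 1 le_rfl zero_le_one)).mono_set Ioo_subset_Ioc_self
  · rintro ε₀ h f f3 ⟨hf, -, hi, hi', -, -⟩
    obtain ⟨h1, h2⟩ := aux_main ε ε₀ (w + ε) hε h f hf hi hi'
    rw [intervalIntegral.integral_of_le zero_le_one, h2]
    refine ⟨h1.mono_set Ioo_subset_Ioc_self, rfl, ?_⟩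
    have : w - (w + ε) = -ε := by ring
    rw [this]
    field_simp
    ring
end
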